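/- arXiv:2210.00235 — 6 statements merged into one kernel-verified Lean document; each statement's English description precedes it below -/
import Mathlib

section
/- Let n ≥ 1 and let A be a two-way deterministic finite automaton with n states that accepts at least one string. Then the length of the shortest string accepted by A is at most C(2n, n) − 1, where C denotes the binomial coefficient. -/
/-- Tape symbols of a 2DFA: the left end-marker `⊢`, the right end-marker `⊣`,
and the letters of the input alphabet `α`. -/
inductive TapeSymbol (α : Type) where
  | lend
  | rend
  | letter (a : α)

/-- A two-way deterministic finite automaton with input alphabet `α` and state set `σ`:
an initial state, a partial transition function (`none` = undefined; the Boolean direction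
`true` means "move right" (+1), `false` means "move left" (−1)), and a set of accepting
states. -/
structure TwoDFA (α : Type) (σ : Type) where
  init : σ
  δ : σ → TapeSymbol α → Option (σ × Bool)
  F : Set σ

/-- The symbol written on the tape `⊢ a₁ … a_m ⊣` at position `i ∈ {0, …, m+1}`
(for an input string `w = a₁ … a_m`); `none` if the position is off the tape. -/
def tapeSym {α : Type} (w : List α) (i : ℤ) : Option (TapeSymbol α) :=
  if i = 0 then some TapeSymbol.lend
  else if i = (w.length : ℤ) + 1 then some TapeSymbol.rend
  else if 0 < i then (w[(i - 1).toNat]?).map TapeSymbol.letter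
  else none

/-- One step of the 2DFA `A` on input `w`: from configuration `c = (state, position)`
to configuration `c'`. -/
def TwoDFA.Step {α σ : Type} (A : TwoDFA α σ) (w : List α) (c c' : σ × ℤ) : Prop :=
  ∃ s, tapeSym w c.2 = some s ∧
    ∃ r d, A.δ c.1 s = some (r, d) ∧ c' = (r, c.2 + if d then 1 else -1)

/-- The automaton `A` accepts `w` if, starting on the left end-marker (position 0)
in the initial state, its computation eventually reaches the right end-marker
(position `|w| + 1`) in an accepting state. -/
def TwoDFA.Accepts {α σ : Type} (A : TwoDFA α σ) (w : List α) : Prop :=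
  ∃ q ∈ A.F, Relation.ReflTransGen (A.Step w) (A.init, 0) (q, (w.length : ℤ) + 1)

/-- A reachable point is reached by a path without repetitions. -/
theorem exists_simple_path {C : Type} (r : C → C → Prop) (a b : C)
    (h : Relation.ReflTransGen r a b) :
    ∃ (N : ℕ) (c : ℕ → C), c 0 = a ∧ c N = b ∧ (∀ k < N, r (c k) (c (k + 1))) ∧
      ∀ k ≤ N, ∀ l ≤ N, c k = c l → k = l := by
  classical
  have hex : ∃ N : ℕ, ∃ c : ℕ → C, c 0 = a ∧ c N = b ∧ (∀ k < N, r (c k) (c (k + 1))) := by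
    induction h with
    | refl => exact ⟨0, fun _ => a, rfl, rfl, by simp⟩
    | @tail x y _ hxy ih =>
      obtain ⟨N, c, h0, hN, hs⟩ := ih
      refine ⟨N + 1, fun k => if k ≤ N then c k else y, by simp [h0], by simp, ?_⟩
      intro k hk
      rcases Nat.lt_or_ge k N with h1 | h1
      · have h2 : k ≤ N := by omega
        have h3 : k + 1 ≤ N := by omega
        simp only [h2, h3, if_true]
        exact hs k h1
      · have h2 : k = N := by omega
        subst h2
        simp [hN, hxy]
  obtain ⟨c, h0, hN, hs⟩ := Nat.find_spec hex
  have hmin := fun m => @Nat.find_min _ _ hex m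
  generalize Nat.find hex = N at *
  refine ⟨N, c, h0, hN, hs, ?_⟩
  have key : ∀ k l, k < l → l ≤ N → c k ≠ c l := by
    intro k l hkl hl he
    apply hmin (N - (l - k)) (by omega)
    refine ⟨fun t => if t ≤ k then c t else c (t + (l - k)), by simp [h0], ?_, ?_⟩
    · by_cases h : N - (l - k) ≤ k
      · have h1 : N - (l - k) = k := by omega
        have h2 : l = N := by omega
        simp only [h, if_true]
        rw [h1, he, h2, hN]
      · simp only [h, if_false]
        rw [← hN]; congr 1; omega
    · intro t ht
      rcases Nat.lt_trichotomy t k with h | h | h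
      · have h2 : t ≤ k := by omega
        have h3 : t + 1 ≤ k := by omega
        simp only [h2, h3, if_true]
        exact hs t (by omega)
      · subst h
        have h3 : ¬ t + 1 ≤ t := by omega
        simp only [le_refl, h3, if_true, if_false]
        rw [he]
        have := hs l (by omega)
        rwa [show t + 1 + (l - t) = l + 1 by omega]
      · have h2 : ¬ t ≤ k := by omega
        have h3 : ¬ t + 1 ≤ k := by omega
        simp only [h2, h3, if_false]
        have := hs (t + (l - k)) (by omega)
        rwa [show t + 1 + (l - k) = t + (l - k) + 1 by omega]
  intro k hk l hl he
  rcases Nat.lt_trichotomy k l with h | h | h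
  · exact absurd he (key k l h hl)
  · exact h
  · exact absurd he.symm (key l k h hk)

/-- Following an injective partial successor on a finite set from a source without predecessor
leads to the unique point without successor. -/
theorem reach_of_injective {C : Type} (r E : C → C → Prop) (P : Set C) (hP : P.Finite)
    (s a : C) (hs : s ∈ P)
    (hE : ∀ x ∈ P, x ≠ a → ∃ y ∈ P, E x y ∧ r x y ∧ y ≠ s)
    (hinj : ∀ x x' y, E x y → E x' y → x = x') :
    Relation.ReflTransGen r s a := by
  classical
  by_contra hcon
  have hE' : ∀ x : C, ∃ y, (x ∈ P → x ≠ a → y ∈ P ∧ E x y ∧ r x y ∧ y ≠ s) := by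
    intro x
    by_cases hx : x ∈ P ∧ x ≠ a
    · obtain ⟨y, hy⟩ := hE x hx.1 hx.2
      exact ⟨y, fun _ _ => hy⟩
    · exact ⟨x, fun h1 h2 => absurd ⟨h1, h2⟩ hx⟩
  choose f hf using hE'
  have hit : ∀ k, f^[k] s ∈ P ∧ Relation.ReflTransGen r s (f^[k] s) := by
    intro k
    induction k with
    | zero => exact ⟨hs, .refl⟩
    | succ k ih =>
      have hne : f^[k] s ≠ a := fun h => hcon (h ▸ ih.2)
      have := hf _ ih.1 hne
      rw [Function.iterate_succ_apply']
      exact ⟨this.1, ih.2.tail this.2.2.1⟩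
  have hne : ∀ k, f^[k] s ≠ a := fun k h => hcon (h ▸ (hit k).2)
  have hnot : ∀ m k, f^[m] s ≠ f^[m + (k + 1)] s := by
    intro m k
    induction m with
    | zero =>
      rw [Nat.zero_add, Function.iterate_succ_apply']
      exact (hf _ (hit k).1 (hne k)).2.2.2.symm
    | succ m ih =>
      intro h
      apply ih
      rw [show m + 1 + (k + 1) = m + (k + 1) + 1 by omega, Function.iterate_succ_apply',
        Function.iterate_succ_apply'] at h
      have h1 := (hf _ (hit m).1 (hne m)).2.1
      have h2 := (hf _ (hit (m + (k + 1))).1 (hne _)).2.1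
      rw [h] at h1
      exact hinj _ _ _ h1 h2
  have hinf : Set.Infinite P := by
    apply Set.infinite_of_injective_forall_mem (f := fun k => f^[k] s) _ (fun k => (hit k).1)
    intro k l h
    rcases Nat.lt_trichotomy k l with h1 | h1 | h1
    · obtain ⟨t, rfl⟩ := Nat.exists_eq_add_of_lt h1
      exact absurd h (hnot k t)
    · exact h1
    · obtain ⟨t, rfl⟩ := Nat.exists_eq_add_of_lt h1
      exact absurd h.symm (hnot l t)
  exact hinf hP

theorem tapeSym_cut_left {α : Type} (w : List α) (i j : ℕ) (hij : i < j) (hj : j ≤ w.length)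
    (p : ℤ) (hp : p ≤ i) : tapeSym (w.take i ++ w.drop j) p = tapeSym w p := by
  unfold tapeSym
  have hl : (w.take i ++ w.drop j).length = w.length - (j - i) := by simp; omega
  rw [hl]
  have h1 : p ≠ ((w.length - (j - i) : ℕ) : ℤ) + 1 := by omega
  have h2 : p ≠ (w.length : ℤ) + 1 := by omega
  simp only [h1, h2, if_false]
  split_ifs with h3 h4
  · rfl
  · rw [List.getElem?_append_left (by simp; omega), List.getElem?_take_of_lt (by omega)]
  · rfl

theorem tapeSym_cut_right {α : Type} (w : List α) (i j : ℕ) (hij : i < j) (hj : j ≤ w.length)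
    (p : ℤ) (hp : (i : ℤ) < p) :
    tapeSym (w.take i ++ w.drop j) p = tapeSym w (p + (j - i)) := by
  unfold tapeSym
  have hl : (w.take i ++ w.drop j).length = w.length - (j - i) := by simp; omega
  rw [hl]
  have h1 : p ≠ 0 := by omega
  have h2 : p + (j - i) ≠ 0 := by omega
  have h3 : 0 < p := by omega
  have h4 : 0 < p + ((j : ℤ) - i) := by omega
  have h5 : (p = ((w.length - (j - i) : ℕ) : ℤ) + 1) ↔ (p + (j - i) = (w.length : ℤ) + 1) := by
    omega
  simp only [h1, h2, h3, h4, h5, if_false, if_true]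
  split_ifs with h6
  · rfl
  · rw [List.getElem?_append_right (by simp; omega), List.getElem?_drop]
    congr 2
    simp
    omega

/-- Step-by-step crossing balance. -/
theorem crossing_balance {σ : Type} (c : ℕ → σ × ℤ) (N : ℕ) (i : ℤ) (h0 : (c 0).2 ≤ i)
    (hs : ∀ k < N, (c (k + 1)).2 = (c k).2 + 1 ∨ (c (k + 1)).2 = (c k).2 - 1) :
    ((Finset.range N).filter (fun k => (c k).2 = i ∧ (c (k + 1)).2 = i + 1)).card =
    ((Finset.range N).filter (fun k => (c k).2 = i + 1 ∧ (c (k + 1)).2 = i)).card +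
      if i < (c N).2 then 1 else 0 := by
  induction N with
  | zero => simp; omega
  | succ N ih =>
    have ih' := ih (fun k hk => hs k (by omega))
    have hN := hs N (by omega)
    rw [Finset.range_add_one, Finset.filter_insert, Finset.filter_insert]
    split_ifs at * <;>
      first
      | omega
      | (simp only [Finset.card_insert_of_notMem, Finset.mem_filter, Finset.mem_range, lt_irrefl,
          false_and, not_false_eq_true]; omega)

theorem exists_shorter {α σ : Type} [Fintype σ] (A : TwoDFA α σ) (w : List α)
    (hw : A.Accepts w)
    (hlen : Nat.choose (2 * Fintype.card σ) (Fintype.card σ) < w.length + 1) :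
    ∃ w', A.Accepts w' ∧ w'.length < w.length := by
  classical
  obtain ⟨q, hq, hreach⟩ := hw
  obtain ⟨N, c, h0, hN, hs, hinj⟩ := exists_simple_path _ _ _ hreach
  have hmove : ∀ k < N, (c (k + 1)).2 = (c k).2 + 1 ∨ (c (k + 1)).2 = (c k).2 - 1 := by
    intro k hk
    obtain ⟨s, _, r, d, _, h⟩ := hs k hk
    rw [h]
    cases d
    · right; simp; rfl
    · left; simp
  let R : ℕ → Finset σ := fun i => ((Finset.range N).filter
    (fun k => (c k).2 = (i : ℤ) ∧ (c (k + 1)).2 = i + 1)).image (fun k => (c (k + 1)).1)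
  let L : ℕ → Finset σ := fun i => ((Finset.range N).filter
    (fun k => (c k).2 = (i : ℤ) + 1 ∧ (c (k + 1)).2 = i)).image (fun k => (c (k + 1)).1)
  have hcardRL : ∀ i ≤ w.length, (R i).card = (L i).card + 1 := by
    intro i hi
    have hb := crossing_balance c N i (by rw [h0]; simp) hmove
    have hlt : (i : ℤ) < (c N).2 := by rw [hN]; simp; omega
    rw [if_pos hlt] at hb
    rw [Finset.card_image_of_injOn, Finset.card_image_of_injOn]
    · exact hb
    · intro k hk l hl h
      simp only [Finset.coe_filter, Finset.mem_range, Set.mem_ofPred_eq] at hk hl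
      have := hinj (k + 1) (by omega) (l + 1) (by omega)
        (Prod.ext h (by rw [hk.2.2, hl.2.2]))
      omega
    · intro k hk l hl h
      simp only [Finset.coe_filter, Finset.mem_range, Set.mem_ofPred_eq] at hk hl
      have := hinj (k + 1) (by omega) (l + 1) (by omega)
        (Prod.ext h (by rw [hk.2.2, hl.2.2]))
      omega
  -- the pigeonhole principle
  have hcoll : ∃ i j : ℕ, i < j ∧ j ≤ w.length ∧ R i = R j ∧ L i = L j := by
    have hp : ∃ i ∈ Finset.range (w.length + 1), ∃ j ∈ Finset.range (w.length + 1), i ≠ j ∧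
        (R i).disjSum (L i)ᶜ = (R j).disjSum (L j)ᶜ := by
      apply Finset.exists_ne_map_eq_of_card_lt_of_maps_to
        (t := Finset.powersetCard (Fintype.card σ + 1) (Finset.univ : Finset (σ ⊕ σ)))
      · rw [Finset.card_powersetCard, Finset.card_univ, Fintype.card_sum, Finset.card_range,
          ← two_mul]
        exact lt_of_le_of_lt (Nat.choose_le_centralBinom _ _) hlen
      · intro i hi
        have hi' : i ≤ w.length := by
          have := Finset.mem_range.1 (Finset.mem_coe.1 hi)
          omega
        have h1 := hcardRL i hi'
        have h2 := Finset.card_le_univ (L i)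
        simp only [Finset.mem_coe, Finset.mem_powersetCard,
          Finset.subset_univ, true_and, Finset.card_disjSum, Finset.card_compl]
        omega
    obtain ⟨i, hi, j, hj, hne, he⟩ := hp
    have hR : R i = R j := by
      ext x
      have := Finset.ext_iff.1 he (Sum.inl x)
      simpa using this
    have hL : L i = L j := by
      ext x
      have := Finset.ext_iff.1 he (Sum.inr x)
      simp only [Finset.inr_mem_disjSum, Finset.mem_compl] at this
      exact not_iff_not.1 this
    rw [Finset.mem_range] at hi hj
    rcases Nat.lt_or_ge i j with h | h
    · exact ⟨i, j, h, by omega, hR, hL⟩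
    · exact ⟨j, i, by omega, by omega, hR.symm, hL.symm⟩
  obtain ⟨i, j, hij, hj, hR, hL⟩ := hcoll
  -- the edge relation of the path
  obtain ⟨E, hEdef⟩ : ∃ E : σ × ℤ → σ × ℤ → Prop,
      ∀ x y, E x y ↔ ∃ k < N, c k = x ∧ c (k + 1) = y := ⟨_, fun _ _ => Iff.rfl⟩
  have hRm : ∀ i r, r ∈ R i ↔ ∃ q, E (q, (i : ℤ)) (r, (i : ℤ) + 1) := by
    intro i r
    simp only [R, Finset.mem_image, Finset.mem_filter, Finset.mem_range, hEdef]
    constructor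
    · rintro ⟨k, ⟨hk, h1, h2⟩, h3⟩
      exact ⟨(c k).1, k, hk, Prod.ext rfl h1, Prod.ext h3 h2⟩
    · rintro ⟨q, k, hk, h1, h2⟩
      exact ⟨k, ⟨hk, by rw [h1], by rw [h2]⟩, by rw [h2]⟩
  have hLm : ∀ i r, r ∈ L i ↔ ∃ q, E (q, (i : ℤ) + 1) (r, (i : ℤ)) := by
    intro i r
    simp only [L, Finset.mem_image, Finset.mem_filter, Finset.mem_range, hEdef]
    constructor
    · rintro ⟨k, ⟨hk, h1, h2⟩, h3⟩
      exact ⟨(c k).1, k, hk, Prod.ext rfl h1, Prod.ext h3 h2⟩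
    · rintro ⟨q, k, hk, h1, h2⟩
      exact ⟨k, ⟨hk, by rw [h1], by rw [h2]⟩, by rw [h2]⟩
  have hEstep : ∀ x y, E x y → A.Step w x y := by
    intro x y h
    obtain ⟨k, hk, rfl, rfl⟩ := (hEdef x y).1 h
    exact hs k hk
  have hEmove : ∀ x y, E x y → y.2 = x.2 + 1 ∨ y.2 = x.2 - 1 := by
    intro x y h
    obtain ⟨k, hk, rfl, rfl⟩ := (hEdef x y).1 h
    exact hmove k hk
  have hEinj : ∀ x x' y, E x y → E x' y → x = x' := by
    intro x x' y h h'
    obtain ⟨k, hk, rfl, rfl⟩ := (hEdef x y).1 h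
    obtain ⟨l, hl, rfl, h2⟩ := (hEdef x' _).1 h'
    have := hinj _ (by omega) _ (by omega) h2
    rw [show k = l by omega]
  have hEs : ∀ x y, E x y → y ≠ (A.init, 0) := by
    intro x y h he
    obtain ⟨k, hk, rfl, rfl⟩ := (hEdef x y).1 h
    rw [← h0] at he
    have := hinj _ (by omega) _ (by omega) he
    omega
  obtain ⟨P, hPdef⟩ : ∃ P : Set (σ × ℤ), P = c '' Set.Iic N := ⟨_, rfl⟩
  have hPfin : P.Finite := by rw [hPdef]; exact (Set.finite_Iic N).image c
  have hPs : (A.init, (0 : ℤ)) ∈ P := by rw [hPdef]; exact ⟨0, by simp, h0⟩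
  have hEr : ∀ x y, E x y → y ∈ P := by
    intro x y h
    obtain ⟨k, hk, rfl, rfl⟩ := (hEdef x y).1 h
    rw [hPdef]
    exact ⟨k + 1, by simp only [Set.mem_Iic]; omega, rfl⟩
  have hPE : ∀ x ∈ P, x ≠ (q, (w.length : ℤ) + 1) → ∃ y, E x y := by
    intro x hx hne
    rw [hPdef] at hx
    obtain ⟨k, hk, rfl⟩ := hx
    have hkN : k ≠ N := fun h => hne (by rw [h, hN])
    simp only [Set.mem_Iic] at hk
    exact ⟨c (k + 1), (hEdef _ _).2 ⟨k, by omega, rfl, rfl⟩⟩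
  clear_value R L
  clear hEdef hPdef hinj hs hmove hcardRL h0 hN hreach
  refine ⟨w.take i ++ w.drop j, ⟨q, hq, ?_⟩, by simp; omega⟩
  have hl : (((w.take i ++ w.drop j).length : ℕ) : ℤ) = w.length - (j - i) := by
    simp; omega
  rw [hl]
  let sh : σ × ℤ → σ × ℤ := fun x => (x.1, x.2 + (j - i))
  have hsh : Function.Injective sh := by
    intro x y h
    simp only [sh, Prod.mk.injEq] at h
    exact Prod.ext h.1 (by omega)
  apply reach_of_injective (A.Step (w.take i ++ w.drop j))
    (fun x y => (x.2 ≤ i ∧ E x y) ∨ ((i : ℤ) < x.2 ∧ E (sh x) (sh y)))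
    ({x | x.2 ≤ i ∧ x ∈ P} ∪ {x | (i : ℤ) < x.2 ∧ sh x ∈ P})
  · apply Set.Finite.union
    · exact hPfin.subset (fun x hx => hx.2)
    · exact (hPfin.preimage hsh.injOn).subset (fun x hx => hx.2)
  · left; exact ⟨by simp, hPs⟩
  · rintro x (⟨hx, hxP⟩ | ⟨hx, hxP⟩) hxa
    · obtain ⟨y, hy⟩ := hPE x hxP (by rintro rfl; simp at hx; omega)
      have hm := hEmove _ _ hy
      refine ⟨y, ?_, Or.inl ⟨hx, hy⟩, ?_, hEs _ _ hy⟩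
      · by_cases hyi : y.2 ≤ i
        · left; exact ⟨hyi, hEr _ _ hy⟩
        · right
          refine ⟨by omega, ?_⟩
          have hx2 : x.2 = i := by omega
          have hy2 : y.2 = (i : ℤ) + 1 := by omega
          have : y.1 ∈ R i := (hRm _ _).2 ⟨x.1, by rw [← hx2, hx2, ← hy2, ← hx2]; exact hy⟩
          rw [hR] at this
          obtain ⟨p, hp⟩ := (hRm _ _).1 this
          have h3 := hEr _ _ hp
          have h4 : sh y = (y.1, (j : ℤ) + 1) := by
            simp only [sh, Prod.mk.injEq, true_and]; omega
          rw [h4]; exact h3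
      · obtain ⟨s, h1, h2⟩ := hEstep _ _ hy
        exact ⟨s, by rw [tapeSym_cut_left w i j hij hj _ hx]; exact h1, h2⟩
    · obtain ⟨y', hy⟩ := hPE (sh x) hxP (by
        intro h
        apply hxa
        simp only [sh, Prod.mk.injEq] at h
        exact Prod.ext h.1 (by simp only; omega))
      obtain ⟨y, rfl⟩ : ∃ y, sh y = y' := ⟨(y'.1, y'.2 - (j - i)), by simp [sh]⟩
      have hm := hEmove _ _ hy
      simp only [sh] at hm
      have hcross : y.2 ≤ i → ∃ p, E (p, (i : ℤ) + 1) y := by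
        intro hyi
        have hx2 : sh x = (x.1, (j : ℤ) + 1) := by
          simp only [sh, Prod.mk.injEq, true_and]; omega
        have hy2 : sh y = (y.1, (j : ℤ)) := by
          simp only [sh, Prod.mk.injEq, true_and]; omega
        rw [hx2, hy2] at hy
        have : y.1 ∈ L j := (hLm _ _).2 ⟨_, hy⟩
        rw [← hL] at this
        obtain ⟨p, hp⟩ := (hLm _ _).1 this
        have h4 : y = (y.1, (i : ℤ)) := Prod.ext rfl (by simp only; omega)
        exact ⟨p, by rw [h4]; exact hp⟩
      refine ⟨y, ?_, Or.inr ⟨hx, hy⟩, ?_, ?_⟩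
      · by_cases hyi : y.2 ≤ i
        · left
          obtain ⟨p, hp⟩ := hcross hyi
          exact ⟨hyi, hEr _ _ hp⟩
        · right; exact ⟨by omega, hEr _ _ hy⟩
      · obtain ⟨s, h1, r, d, h2, h3⟩ := hEstep _ _ hy
        refine ⟨s, by rw [tapeSym_cut_right w i j hij hj _ hx]; exact h1, r, d, h2, ?_⟩
        simp only [sh, Prod.mk.injEq] at h3
        exact Prod.ext h3.1 (by simp only; omega)
      · intro hys
        obtain ⟨p, hp⟩ := hcross (by rw [hys]; simp)
        exact hEs _ _ hp hys
  · -- injectivity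
    have hmix : ∀ x x' y : σ × ℤ, x.2 ≤ (i : ℤ) → E x y → (i : ℤ) < x'.2 → E (sh x') (sh y) → False := by
      intro x x' y hx h hx' h'
      have hm := hEmove _ _ h
      have hm' := hEmove _ _ h'
      simp only [sh] at hm'
      by_cases hyi : y.2 ≤ i
      · have hx2 : sh x' = (x'.1, (j : ℤ) + 1) := by
          simp only [sh, Prod.mk.injEq, true_and]; omega
        have hy2 : sh y = (y.1, (j : ℤ)) := by
          simp only [sh, Prod.mk.injEq, true_and]; omega
        rw [hx2, hy2] at h'
        have : y.1 ∈ L j := (hLm _ _).2 ⟨_, h'⟩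
        rw [← hL] at this
        obtain ⟨p, hp⟩ := (hLm _ _).1 this
        have h4 : y = (y.1, (i : ℤ)) := Prod.ext rfl (by simp only; omega)
        rw [← h4] at hp
        have := hEinj _ _ _ h hp
        rw [this] at hx
        simp only at hx
        omega
      · have hx2 : x = (x.1, (i : ℤ)) := Prod.ext rfl (by simp only; omega)
        have hy2 : y = (y.1, (i : ℤ) + 1) := Prod.ext rfl (by simp only; omega)
        rw [hx2, hy2] at h
        have : y.1 ∈ R i := (hRm _ _).2 ⟨_, h⟩
        rw [hR] at this
        obtain ⟨p, hp⟩ := (hRm _ _).1 this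
        have h4 : sh y = (y.1, (j : ℤ) + 1) := by
          have : y.2 = (i : ℤ) + 1 := by rw [hy2]
          simp only [sh, Prod.mk.injEq, true_and]; omega
        rw [← h4] at hp
        have := congrArg Prod.snd (hEinj _ _ _ h' hp)
        simp only [sh] at this
        omega
    rintro x x' y (⟨hx, h⟩ | ⟨hx, h⟩) (⟨hx', h'⟩ | ⟨hx', h'⟩)
    · exact hEinj _ _ _ h h'
    · exact (hmix _ _ _ hx h hx' h').elim
    · exact (hmix _ _ _ hx' h' hx h).elim
    · exact hsh (hEinj _ _ _ h h')

/-- Let `n ≥ 1` and let `A` be a 2DFA with `n` states that accepts at least one string.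
Then the length of the shortest string accepted by `A` is at most `C(2n, n) − 1`. -/
theorem shortest_accepted_le_of_2dfa (n : ℕ) (hn : 1 ≤ n)
    (α σ : Type) [Fintype α] [Fintype σ] (hcard : Fintype.card σ = n)
    (A : TwoDFA α σ) (hne : ∃ w, A.Accepts w) :
    ∃ w, A.Accepts w ∧ w.length ≤ Nat.choose (2 * n) n - 1 := by
  classical
  have hpos : 0 < Nat.choose (2 * n) n := Nat.choose_pos (by omega)
  have hex : ∃ m, ∃ w, A.Accepts w ∧ w.length = m := by
    obtain ⟨w, hw⟩ := hne
    exact ⟨_, w, hw, rfl⟩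
  obtain ⟨w, hw, hl⟩ := Nat.find_spec hex
  refine ⟨w, hw, ?_⟩
  by_contra hcon
  obtain ⟨w', hw', hlt⟩ := exists_shorter A w hw (by rw [hcard]; omega)
  exact Nat.find_min hex (hl ▸ hlt) ⟨w', hw', rfl⟩
end

section
/- Let n ≥ 1 and let A be a direction-determinate two-way deterministic finite automaton with n states that accepts at least one string. Then the length of the shortest string accepted by A is at most C(n, ⌊n/2⌋) − 1, where C denotes the binomial coefficient. -/
/-- A 2DFA is direction-determinate if its state set splits as `Q = Q⁺ ∪ Q⁻`
(here given by the indicator `f : σ → Bool`, with `Q⁺ = f⁻¹(true)` and `Q⁻ = f⁻¹(false)`)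
so that every transition moving right enters a state of `Q⁺` and every transition
moving left enters a state of `Q⁻`. -/
def TwoDFA.DirectionDeterminate {α σ : Type} (A : TwoDFA α σ) : Prop :=
  ∃ f : σ → Bool, ∀ q s r d, A.δ q s = some (r, d) → f r = d

open Classical in
def ValidSet {C : Type} (R : C → C → Prop) (s e : C) (V : Finset C) : Prop :=
  s ∈ V ∧ e ∈ V ∧ (∀ c ∈ V, c ≠ e → ∃ c' ∈ V, R c c' ∧ c' ≠ s) ∧
    (∀ c1 ∈ V, ∀ c2 ∈ V, ∀ d, c1 ≠ e → c2 ≠ e → R c1 d → R c2 d → c1 = c2)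

theorem ValidSet.reach {C : Type} (R : C → C → Prop) (e : C) :
    ∀ (N : ℕ) (s : C) (V : Finset C), V.card = N → ValidSet R s e V →
      Relation.ReflTransGen R s e := by
  classical
  intro N
  induction N with
  | zero =>
    intro s V hN hV
    have := Finset.card_pos.2 ⟨s, hV.1⟩
    omega
  | succ N ih =>
    intro s V hN hV
    obtain ⟨h1, h2, h3, h4⟩ := hV
    by_cases hse : s = e
    · subst hse; exact .refl
    obtain ⟨s', hs', hR, hne⟩ := h3 s h1 hse
    refine Relation.ReflTransGen.head hR (ih s' (V.erase s) ?_ ⟨?_, ?_, ?_, ?_⟩)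
    · rw [Finset.card_erase_of_mem h1]; omega
    · exact Finset.mem_erase.2 ⟨hne, hs'⟩
    · exact Finset.mem_erase.2 ⟨fun h => hse h.symm, h2⟩
    · intro c hc hce
      obtain ⟨hcs, hcV⟩ := Finset.mem_erase.1 hc
      obtain ⟨c', hc', hRc, hcn⟩ := h3 c hcV hce
      refine ⟨c', Finset.mem_erase.2 ⟨hcn, hc'⟩, hRc, ?_⟩
      rintro rfl
      exact hcs (h4 c hcV s h1 _ hce hse hRc hR)
    · intro c1 hc1 c2 hc2 d
      exact h4 c1 (Finset.mem_erase.1 hc1).2 c2 (Finset.mem_erase.1 hc2).2 d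

theorem exists_validSet {C : Type} (R : C → C → Prop) (e s : C)
    (hdet : ∀ a b c, R a b → R a c → b = c) (h : Relation.ReflTransGen R s e) :
    ∃ V, ValidSet R s e V := by
  classical
  suffices H : ∃ G : Set C, s ∈ G ∧ ∀ x ∈ G, ∃ V : Finset C, ↑V ⊆ G ∧ ValidSet R x e V by
    obtain ⟨G, hs, hG⟩ := H
    obtain ⟨V, -, hV⟩ := hG s hs
    exact ⟨V, hV⟩
  induction h using Relation.ReflTransGen.head_induction_on with
  | refl =>
    refine ⟨{e}, rfl, ?_⟩
    rintro x rfl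
    refine ⟨{x}, by simp, by simp, by simp, ?_, ?_⟩
    · intro c hc hce; simp at hc; exact absurd hc hce
    · intro c hc _ _ _ hce; simp at hc; exact absurd hc hce
  | @head s s' hR _ ih =>
    obtain ⟨G, hs', hG⟩ := ih
    by_cases hsG : s ∈ G
    · exact ⟨G, hsG, hG⟩
    refine ⟨insert s G, Set.mem_insert _ _, ?_⟩
    intro x hx
    rcases hx with rfl | hx
    · obtain ⟨V, hVG, h1, h2, h3, h4⟩ := hG s' hs'
      have hxV : x ∉ V := fun h => hsG (hVG h)
      refine ⟨insert x V, ?_, by simp, by simp [h2], ?_, ?_⟩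
      · rw [Finset.coe_insert]; exact Set.insert_subset_insert hVG
      · intro c hc hce
        rcases Finset.mem_insert.1 hc with rfl | hc
        · exact ⟨s', by simp [h1], hR, fun h => hxV (h ▸ h1)⟩
        · obtain ⟨c', hc', hRc, hcn⟩ := h3 c hc hce
          exact ⟨c', by simp [hc'], hRc, fun h => hxV (h ▸ hc')⟩
      · have key : ∀ c ∈ V, c ≠ e → ∀ d, R c d → R x d → False := by
          intro c hc hce d hcd hxd
          obtain ⟨c', hc', hRc, hcn⟩ := h3 c hc hce
          exact hcn ((hdet _ _ _ hRc hcd).trans (hdet _ _ _ hxd hR))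
        intro c1 hc1 c2 hc2 d hn1 hn2 hd1 hd2
        rcases Finset.mem_insert.1 hc1 with rfl | hm1 <;>
        rcases Finset.mem_insert.1 hc2 with rfl | hm2
        · rfl
        · exact (key c2 hm2 hn2 d hd2 hd1).elim
        · exact (key c1 hm1 hn1 d hd1 hd2).elim
        · exact h4 c1 hm1 c2 hm2 d hn1 hn2 hd1 hd2
    · obtain ⟨V, hVG, hV⟩ := hG x hx
      exact ⟨V, hVG.trans (Set.subset_insert _ _), hV⟩

theorem TwoDFA.step_det {α σ : Type} (A : TwoDFA α σ) (w : List α) (a b c : σ × ℤ)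
    (h1 : A.Step w a b) (h2 : A.Step w a c) : b = c := by
  obtain ⟨s, hs, r, d, hd, rfl⟩ := h1
  obtain ⟨s', hs', r', d', hd', rfl⟩ := h2
  grind

theorem TwoDFA.step_dir {α σ : Type} {A : TwoDFA α σ} {f : σ → Bool}
    (hf : ∀ q s r d, A.δ q s = some (r, d) → f r = d) {w : List α} {a b : σ × ℤ}
    (h : A.Step w a b) : b.2 = a.2 + if f b.1 then 1 else -1 := by
  obtain ⟨s, hs, r, d, hd, rfl⟩ := h
  simp [hf _ _ _ _ hd]

theorem TwoDFA.step_congr {α σ : Type} {A : TwoDFA α σ} {w w' : List α} {p p' : ℤ}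
    {q r : σ} {t : ℤ} (hp : tapeSym w p = tapeSym w' p')
    (h : A.Step w (q, p) (r, t)) : A.Step w' (q, p') (r, t + (p' - p)) := by
  obtain ⟨s, hs, r', d, hd, he⟩ := h
  refine ⟨s, hp ▸ hs, r', d, hd, ?_⟩
  simp only [Prod.mk.injEq] at he ⊢
  exact ⟨he.1, by rw [he.2]; ring⟩

theorem tapeSym_left {α : Type} (w : List α) (i j : ℕ) (hij : i < j) (hj : j ≤ w.length)
    (p : ℤ) (hp : p ≤ i) : tapeSym w p = tapeSym (w.take i ++ w.drop j) p := by
  have hl : (w.take i ++ w.drop j).length = i + (w.length - j) := by simp; omega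
  unfold tapeSym
  rw [hl]
  split_ifs <;> try omega
  · rfl
  · congr 1
    rw [List.getElem?_append_left (by simp; omega), List.getElem?_take_of_lt (by omega)]
  · rfl

theorem tapeSym_right {α : Type} (w : List α) (i j : ℕ) (hij : i < j) (hj : j ≤ w.length)
    (p : ℤ) (hp : i < p) :
    tapeSym w (p + (j - i)) = tapeSym (w.take i ++ w.drop j) p := by
  have hl : (w.take i ++ w.drop j).length = i + (w.length - j) := by simp; omega
  unfold tapeSym
  rw [hl]
  split_ifs <;> try omega
  · rfl
  · congr 1
    rw [List.getElem?_append_right (by simp; omega), List.getElem?_drop]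
    congr 1
    simp
    omega

open Classical in
noncomputable def crossSet {σ : Type} [Fintype σ] (f : σ → Bool) (V : Finset (σ × ℤ))
    (s : σ × ℤ) (i : ℤ) : Finset σ :=
  Finset.univ.filter fun r =>
    if f r then (r, i + 1) ∈ V else ¬ ((r, i) ∈ V ∧ (r, i) ≠ s)

theorem card_crossSet {α σ : Type} [Fintype σ] (A : TwoDFA α σ) (f : σ → Bool)
    (hf : ∀ q s r d, A.δ q s = some (r, d) → f r = d) (w : List α) (s e : σ × ℤ)
    (V : Finset (σ × ℤ)) (hV : ValidSet (A.Step w) s e V) (i : ℤ) (hs : s.2 ≤ i)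
    (he : i < e.2) :
    (crossSet f V s i).card = (Finset.univ.filter fun r => f r = false).card + 1 := by
  classical
  obtain ⟨h1, h2, h3, h4⟩ := hV
  have h3' : ∀ c, ∃ c', c ∈ V → c ≠ e → c' ∈ V ∧ A.Step w c c' ∧ c' ≠ s := by
    intro c
    by_cases h : c ∈ V ∧ c ≠ e
    · obtain ⟨c', h⟩ := h3 c h.1 h.2
      exact ⟨c', fun _ _ => h⟩
    · exact ⟨c, fun a b => (h ⟨a, b⟩).elim⟩
  choose g hg using h3'
  have hinj : ∀ c1 ∈ V, ∀ c2 ∈ V, c1 ≠ e → c2 ≠ e → g c1 = g c2 → c1 = c2 := by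
    intro c1 m1 c2 m2 n1 n2 h
    exact h4 c1 m1 c2 m2 (g c1) n1 n2 (hg c1 m1 n1).2.1 (h ▸ (hg c2 m2 n2).2.1)
  have himg : (V.erase e).image g = V.erase s := by
    apply Finset.eq_of_subset_of_card_le
    · intro d hd
      obtain ⟨c, hc, rfl⟩ := Finset.mem_image.1 hd
      obtain ⟨hce, hcV⟩ := Finset.mem_erase.1 hc
      exact Finset.mem_erase.2 ⟨(hg c hcV hce).2.2, (hg c hcV hce).1⟩
    · rw [Finset.card_image_of_injOn, Finset.card_erase_of_mem h1, Finset.card_erase_of_mem h2]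
      intro c1 m1 c2 m2 h
      simp only [Finset.coe_erase, Set.mem_sdiff, Finset.mem_coe, Set.mem_singleton_iff] at m1 m2
      exact hinj c1 m1.1 c2 m2.1 m1.2 m2.2 h
  set L := V.filter fun c => c.2 ≤ i with hL
  set Pp := V.filter fun c => c.2 = i + 1 ∧ f c.1 = true with hPp
  set Pm := V.filter fun c => c.2 = i ∧ f c.1 = false ∧ c ≠ s with hPm
  have hLe : ∀ c ∈ L, c ∈ V ∧ c ≠ e ∧ c.2 ≤ i := by
    intro c hc
    obtain ⟨a, b⟩ := Finset.mem_filter.1 hc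
    exact ⟨a, fun h => by rw [h] at b; omega, b⟩
  have hLimg : L.image g = (L.erase s \ Pm) ∪ Pp := by
    ext d
    simp only [Finset.mem_image, Finset.mem_union, Finset.mem_sdiff, Finset.mem_erase]
    constructor
    · rintro ⟨c, hc, rfl⟩
      obtain ⟨a, b, hi⟩ := hLe c hc
      obtain ⟨x, y, z⟩ := hg c a b
      have hdir := TwoDFA.step_dir hf y
      simp only [hL, hPp, hPm, Finset.mem_filter]
      cases hfd : f (g c).1 <;> simp [hfd] at hdir
      · left; refine ⟨⟨z, x, by omega⟩, ?_⟩
        rintro ⟨-, h, -⟩; omega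
      · by_cases hh : (g c).2 ≤ i
        · left; refine ⟨⟨z, x, by omega⟩, ?_⟩
          rintro ⟨-, h, h', -⟩; simp at h'
        · right; exact ⟨x, by omega, rfl⟩
    · intro hd
      have hdV : d ∈ V.erase s := by
        rcases hd with ⟨⟨a, b⟩, -⟩ | hd
        · exact Finset.mem_erase.2 ⟨a, (hLe d b).1⟩
        · obtain ⟨a, b, -⟩ := Finset.mem_filter.1 hd
          exact Finset.mem_erase.2 ⟨fun h => by rw [h] at b; omega, a⟩
      rw [← himg] at hdV
      obtain ⟨c, hc, rfl⟩ := Finset.mem_image.1 hdV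
      obtain ⟨b, a⟩ := Finset.mem_erase.1 hc
      obtain ⟨x, y, z⟩ := hg c a b
      have hdir := TwoDFA.step_dir hf y
      refine ⟨c, Finset.mem_filter.2 ⟨a, ?_⟩, rfl⟩
      simp only [hL, hPp, hPm, Finset.mem_filter] at hd
      cases hfd : f (g c).1 <;> simp [hfd] at hdir hd
      · obtain ⟨⟨-, -, h⟩, h'⟩ := hd
        have := mt (fun h => h' x h) z
        omega
      · rcases hd with hd | hd <;> omega
  have hcard := congrArg Finset.card hLimg
  have hPmL : Pm ⊆ L.erase s := by
    intro c hc
    obtain ⟨a, b, -, d⟩ := Finset.mem_filter.1 hc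
    exact Finset.mem_erase.2 ⟨d, Finset.mem_filter.2 ⟨a, b.le⟩⟩
  have hsL : s ∈ L := Finset.mem_filter.2 ⟨h1, hs⟩
  have hdisj : Disjoint (L.erase s \ Pm) Pp := by
    rw [Finset.disjoint_left]
    intro c hc hc'
    have := (hLe c (Finset.mem_erase.1 (Finset.mem_sdiff.1 hc).1).2).2.2
    have := (Finset.mem_filter.1 hc').2.1
    omega
  rw [Finset.card_union_of_disjoint hdisj, Finset.card_sdiff_of_subset hPmL,
    Finset.card_erase_of_mem hsL, Finset.card_image_of_injOn] at hcard
  swap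
  · intro c1 m1 c2 m2 h
    obtain ⟨a1, b1, -⟩ := hLe c1 m1
    obtain ⟨a2, b2, -⟩ := hLe c2 m2
    exact hinj c1 a1 c2 a2 b1 b2 h
  have hle := Finset.card_le_card hPmL
  rw [Finset.card_erase_of_mem hsL] at hle
  have hLpos := Finset.card_pos.2 ⟨s, hsL⟩
  have hp : Pp.card = ((crossSet f V s i).filter fun r => f r = true).card := by
    rw [← Finset.card_image_of_injective (f := fun r : σ => (r, i + 1)) _
      (fun a b h => (Prod.mk.inj h).1)]
    congr 1
    ext ⟨r, t⟩
    simp only [hPp, crossSet, Finset.mem_filter, Finset.mem_image, Finset.mem_univ, true_and,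
      Prod.mk.injEq]
    constructor
    · rintro ⟨a, rfl, c⟩; exact ⟨r, ⟨by simp [c, a], c⟩, rfl, rfl⟩
    · rintro ⟨r', ⟨a, b⟩, rfl, rfl⟩
      simp [b] at a; exact ⟨a, rfl, b⟩
  have hm : Pm.card = ((Finset.univ.filter fun r => f r = false).filter
      fun r => r ∉ crossSet f V s i).card := by
    rw [← Finset.card_image_of_injective (f := fun r : σ => (r, i)) _
      (fun a b h => (Prod.mk.inj h).1)]
    congr 1
    ext ⟨r, t⟩
    simp only [hPm, crossSet, Finset.mem_filter, Finset.mem_image, Finset.mem_univ, true_and,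
      Prod.mk.injEq]
    constructor
    · rintro ⟨a, rfl, c, d⟩; exact ⟨r, ⟨c, by simp [c, a, d]⟩, rfl, rfl⟩
    · rintro ⟨r', ⟨b, a⟩, rfl, rfl⟩
      simp [b] at a; exact ⟨a.1, rfl, b, a.2⟩
  have e1 := Finset.card_filter_add_card_filter_not (s := crossSet f V s i)
    (fun r => f r = true)
  have e2 := Finset.card_filter_add_card_filter_not
    (s := Finset.univ.filter fun r => f r = false) (fun r => r ∈ crossSet f V s i)
  have e3 : (crossSet f V s i).filter (fun r => ¬ f r = true) =
      (Finset.univ.filter fun r => f r = false).filter (fun r => r ∈ crossSet f V s i) := by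
    ext r
    simp [and_comm]
  rw [e3] at e1
  omega

theorem cut_accepts {α σ : Type} [Fintype σ] (A : TwoDFA α σ) (f : σ → Bool)
    (hf : ∀ q s r d, A.δ q s = some (r, d) → f r = d) (w : List α) (q₁ : σ)
    (V : Finset (σ × ℤ))
    (hV : ValidSet (A.Step w) (A.init, 0) (q₁, (w.length : ℤ) + 1) V) (i j : ℕ)
    (hij : i < j) (hj : j ≤ w.length)
    (hc : crossSet f V (A.init, 0) i = crossSet f V (A.init, 0) j) :
    Relation.ReflTransGen (A.Step (w.take i ++ w.drop j)) (A.init, 0)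
      (q₁, ((w.take i ++ w.drop j).length : ℤ) + 1) := by
  classical
  obtain ⟨h1, h2, h3, h4⟩ := hV
  set w' := w.take i ++ w.drop j with hw'
  have hl : (w'.length : ℤ) = w.length - (j - i) := by simp [hw']; omega
  have hp : ∀ r, f r = true → ((r, (i : ℤ) + 1) ∈ V ↔ (r, (j : ℤ) + 1) ∈ V) := by
    intro r hr
    have := Finset.ext_iff.1 hc r
    simpa [crossSet, hr] using this
  have hm : ∀ r, f r = false → (((r, (i : ℤ)) ∈ V ∧ (r, (i : ℤ)) ≠ (A.init, 0)) ↔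
      ((r, (j : ℤ)) ∈ V ∧ (r, (j : ℤ)) ≠ (A.init, 0))) := by
    intro r hr
    have := Finset.ext_iff.1 hc r
    simp only [crossSet, hr, Finset.mem_filter, Finset.mem_univ, true_and] at this
    simpa using not_congr this
  let V' : Finset (σ × ℤ) := (V.filter fun c => c.2 ≤ i) ∪
    ((V.filter fun c => (j : ℤ) < c.2).image fun c => (c.1, c.2 - (j - i)))
  have hV' : ∀ q p, (q, p) ∈ V' ↔ (p ≤ i ∧ (q, p) ∈ V) ∨ ((i : ℤ) < p ∧ (q, p + (j - i)) ∈ V) := by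
    intro q p
    simp only [V', Finset.mem_union, Finset.mem_filter, Finset.mem_image, Prod.exists,
      Prod.mk.injEq]
    constructor
    · rintro (⟨a, b⟩ | ⟨q, t, ⟨a, b⟩, rfl, rfl⟩)
      · exact .inl ⟨b, a⟩
      · right; refine ⟨by omega, ?_⟩; rwa [sub_add_cancel]
    · rintro (⟨a, b⟩ | ⟨a, b⟩)
      · exact .inl ⟨b, a⟩
      · exact .inr ⟨q, _, ⟨b, by omega⟩, rfl, by omega⟩
  have toL : ∀ q p r t, p ≤ (i : ℤ) → A.Step w' (q, p) (r, t) → A.Step w (q, p) (r, t) := by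
    intro q p r t hpi h
    simpa using TwoDFA.step_congr (tapeSym_left w i j hij hj p hpi).symm h
  have toR : ∀ q p r t, (i : ℤ) < p → A.Step w' (q, p) (r, t) →
      A.Step w (q, p + (j - i)) (r, t + (j - i)) := by
    intro q p r t hpi h
    simpa using TwoDFA.step_congr (tapeSym_right w i j hij hj p hpi).symm h
  apply ValidSet.reach _ _ _ _ V' rfl
  refine ⟨?_, ?_, ?_, ?_⟩
  · rw [hV']; left; exact ⟨by omega, h1⟩
  · rw [hV']; right; refine ⟨by omega, ?_⟩
    convert h2 using 2; omega
  · rintro ⟨q, p⟩ hc hne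
    rcases (hV' q p).1 hc with ⟨hpi, hqV⟩ | ⟨hpi, hqV⟩
    · obtain ⟨⟨r, t⟩, hrV, hst, hrs⟩ := h3 _ hqV (by
        intro h; have := (Prod.mk.inj h).2; omega)
      have hd := TwoDFA.step_dir hf hst
      refine ⟨(r, t), ?_, by simpa using TwoDFA.step_congr (tapeSym_left w i j hij hj p hpi) hst, hrs⟩
      rw [hV']
      cases hfr : f r <;> simp [hfr] at hd
      · left; exact ⟨by omega, hrV⟩
      · by_cases ht : t ≤ i
        · left; exact ⟨ht, hrV⟩
        · right; refine ⟨by omega, ?_⟩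
          have ht' : t = i + 1 := by omega
          rw [ht'] at hrV ⊢
          have := (hp r hfr).1 hrV
          convert this using 2; omega
    · obtain ⟨⟨r, t⟩, hrV, hst, hrs⟩ := h3 _ hqV (by
        intro h; apply hne
        have := Prod.mk.inj h
        exact Prod.ext this.1 (by simp only; omega))
      have hd := TwoDFA.step_dir hf hst
      have hst' : A.Step w' (q, p) (r, t - (j - i)) := by
        have := TwoDFA.step_congr (tapeSym_right w i j hij hj p hpi) hst
        convert this using 2; omega
      refine ⟨(r, t - (j - i)), ?_⟩
      by_cases ht : (j : ℤ) < t
      · refine ⟨?_, hst', ?_⟩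
        · rw [hV']; right; refine ⟨by omega, ?_⟩; rwa [sub_add_cancel]
        · intro h; have := (Prod.mk.inj h).2; omega
      · cases hfr : f r <;> simp [hfr] at hd
        · have ht' : t = j := by omega
          subst ht'
          have := (hm r hfr).2 ⟨hrV, hrs⟩
          have e : (j : ℤ) - (j - i) = i := by omega
          rw [e] at hst' ⊢
          exact ⟨(hV' _ _).2 (.inl ⟨le_refl _, this.1⟩), hst', this.2⟩
        · omega
  · rintro ⟨q, p⟩ hc1 ⟨q', p'⟩ hc2 ⟨r, t⟩ hn1 hn2 hs1 hs2
    have d1 := TwoDFA.step_dir hf hs1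
    have d2 := TwoDFA.step_dir hf hs2
    have hpp : p = p' := by simp only at d1 d2; omega
    subst hpp
    rcases (hV' q p).1 hc1 with ⟨hpi, hqV⟩ | ⟨hpi, hqV⟩ <;>
    rcases (hV' q' p).1 hc2 with ⟨hpi', hqV'⟩ | ⟨hpi', hqV'⟩ <;> try omega
    · exact h4 _ hqV _ hqV' (r, t) (by intro h; have := (Prod.mk.inj h).2; omega)
        (by intro h; have := (Prod.mk.inj h).2; omega) (toL _ _ _ _ hpi hs1) (toL _ _ _ _ hpi hs2)
    · have key : ∀ q, (q, p) ≠ (q₁, (w'.length : ℤ) + 1) →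
          (q, p + (j - i)) ≠ (q₁, (w.length : ℤ) + 1) := by
        intro q hn h; apply hn
        have := Prod.mk.inj h
        exact Prod.ext this.1 (by simp only; omega)
      have := h4 _ hqV _ hqV' (r, t + (j - i)) (key _ hn1) (key _ hn2)
        (toR _ _ _ _ hpi hs1) (toR _ _ _ _ hpi hs2)
      rw [(Prod.mk.inj this).1]

/-- Let `n ≥ 1` and let `A` be a direction-determinate 2DFA with `n` states that accepts
at least one string. Then the length of the shortest string accepted by `A` is at most
`C(n, ⌊n/2⌋) − 1`. -/
theorem shortest_accepted_le_of_direction_determinate_2dfa (n : ℕ) (hn : 1 ≤ n)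
    (α σ : Type) [Fintype α] [Fintype σ] (hcard : Fintype.card σ = n)
    (A : TwoDFA α σ) (hdd : A.DirectionDeterminate) (hne : ∃ w, A.Accepts w) :
    ∃ w, A.Accepts w ∧ w.length ≤ Nat.choose n (n / 2) - 1 := by
  classical
  obtain ⟨f, hf⟩ := hdd
  have hex : ∃ m, ∃ w, A.Accepts w ∧ w.length = m := by
    obtain ⟨w, hw⟩ := hne
    exact ⟨_, w, hw, rfl⟩
  obtain ⟨w, hw, hlen⟩ := Nat.find_spec hex
  refine ⟨w, hw, ?_⟩
  by_contra hlt
  obtain ⟨q₁, hq, hr⟩ := hw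
  obtain ⟨V, hV⟩ := exists_validSet _ _ _ (A.step_det w) hr
  obtain ⟨x, hx, y, hy, hxy, hxye⟩ := Finset.exists_ne_map_eq_of_card_lt_of_maps_to
    (s := Finset.range (w.length + 1))
    (t := Finset.powersetCard ((Finset.univ.filter fun r => f r = false).card + 1)
      (Finset.univ : Finset σ))
    (f := fun i : ℕ => crossSet f V (A.init, 0) i) (by
      rw [Finset.card_powersetCard, Finset.card_univ, hcard, Finset.card_range]
      have := Nat.choose_le_middle ((Finset.univ.filter fun r => f r = false).card + 1) n
      omega) (by
      intro i hi
      have hi' := Finset.mem_range.1 (Finset.mem_coe.1 hi)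
      rw [Finset.mem_coe, Finset.mem_powersetCard]
      exact ⟨Finset.subset_univ _, card_crossSet A f hf w _ _ V hV i (by simp)
        (by simp only; omega)⟩)
  rw [Finset.mem_range] at hx hy
  have main : ∀ i j : ℕ, i < j → j ≤ w.length →
      crossSet f V (A.init, 0) i = crossSet f V (A.init, 0) j → False := by
    intro i j hij hj hc
    have := cut_accepts A f hf w q₁ V hV i j hij hj hc
    refine Nat.find_min hex (m := (w.take i ++ w.drop j).length) ?_ ⟨_, ⟨q₁, hq, this⟩, rfl⟩
    rw [← hlen]
    simp
    omega
  rcases lt_or_gt_of_ne hxy with h | h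
  · exact main x y h (by omega) hxye
  · exact main y x h (by omega) hxye.symm
end

section
/- For every k ≥ 2 and ℓ ≥ 0, there exists a direction-determinate two-way deterministic finite automaton with set of states Q = Q⁺ ∪ Q⁻, where |Q⁺| = k and |Q⁻| = ℓ, which accepts at least one string, and such that the length of the shortest string it accepts is exactly C(k+ℓ, ℓ+1) − 1, where C denotes the binomial coefficient. -/
namespace TDS

/-- From state `x` the bouncing walk between table `i` and target `j` leaves to the right. -/
inductive Fn {k ℓ : ℕ} (up : ℕ → Fin ℓ → Option (Fin k)) (dn : ℕ → Fin k → Option (Option (Fin ℓ)))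
    (i j : ℕ) : Fin k → Prop
  | done (x : Fin k) (h : dn j x = some none) : Fn up dn i j x
  | step (x : Fin k) (r : Fin ℓ) (y : Fin k) (h : dn j x = some (some r)) (h' : up i r = some y)
      (hy : Fn up dn i j y) : Fn up dn i j x

def LL {M : ℕ} : TapeSymbol (Fin M) → ℕ
  | .lend => 0
  | .rend => 0
  | .letter a => a.val + 1

def DD {M : ℕ} : TapeSymbol (Fin M) → ℕ
  | .lend => 0
  | .rend => M
  | .letter a => a.val

def dl {k ℓ : ℕ} (M : ℕ) (x0 : ℕ → Fin k) (up : ℕ → Fin ℓ → Option (Fin k))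
    (dn : ℕ → Fin k → Option (Option (Fin ℓ))) :
    Fin k ⊕ Fin ℓ → TapeSymbol (Fin M) → Option ((Fin k ⊕ Fin ℓ) × Bool)
  | .inl _, .lend => some (.inl (x0 0), true)
  | .inl x, .letter a =>
    match dn a.val x with
    | none => none
    | some none => some (.inl (x0 (a.val + 1)), true)
    | some (some r) => some (.inr r, false)
  | .inl x, .rend =>
    match dn M x with
    | some (some r) => some (.inr r, false)
    | _ => none
  | .inr _, .rend => none
  | .inr r, .lend => (up 0 r).map (fun y => (.inl y, true))
  | .inr r, .letter a => (up (a.val + 1) r).map (fun y => (.inl y, true))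

def aut {k ℓ : ℕ} (M : ℕ) (x0 : ℕ → Fin k) (up : ℕ → Fin ℓ → Option (Fin k))
    (dn : ℕ → Fin k → Option (Option (Fin ℓ))) : TwoDFA (Fin M) (Fin k ⊕ Fin ℓ) where
  init := .inl (x0 0)
  δ := dl M x0 up dn
  F := {q | ∃ x, q = .inl x ∧ dn M x = some none}

theorem tape_zero {α : Type} (w : List α) : tapeSym w ((0 : ℕ) : ℤ) = some .lend := by
  simp [tapeSym]

theorem tape_last {α : Type} (w : List α) : tapeSym w ((w.length : ℤ) + 1) = some .rend := by
  have : (w.length : ℤ) + 1 ≠ 0 := by omega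
  simp [tapeSym, this]

theorem tape_succ {α : Type} (w : List α) (p : ℕ) (h : p < w.length) :
    tapeSym w ((p : ℤ) + 1) = some (.letter w[p]) := by
  have h1 : (p : ℤ) + 1 ≠ 0 := by omega
  have h2 : (p : ℤ) ≠ w.length := by omega
  have h3 : (0 : ℤ) < (p : ℤ) + 1 := by omega
  simp [tapeSym, h1, h2, h3, h]

section core
variable {k ℓ : ℕ} (M : ℕ) (x0 : ℕ → Fin k) (up : ℕ → Fin ℓ → Option (Fin k))
    (dn : ℕ → Fin k → Option (Option (Fin ℓ)))

theorem dl_dir (q s r d) (h : (aut M x0 up dn).δ q s = some (r, d)) :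
    ((d = true → ∃ x, r = Sum.inl x) ∧ (d = false → ∃ x, r = Sum.inr x)) := by
  simp only [aut] at h
  unfold dl at h
  split at h <;> (try split at h) <;> simp at h <;> aesop

def Inv (w : List (Fin M)) (c : (Fin k ⊕ Fin ℓ) × ℤ) : Prop :=
  (∃ x, c = (.inl x, 0)) ∨ ∃ p i : ℕ, i ≤ p ∧ i ≤ M ∧ p ≤ w.length ∧
    (∃ s, s ≠ .rend ∧ tapeSym w (p : ℤ) = some s ∧ LL s = i) ∧
    ((∃ x, c = (.inl x, (p : ℤ) + 1) ∧ ∀ s, tapeSym w ((p : ℤ) + 1) = some s →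
        Fn up dn i (DD s) x → Fn up dn i (DD s) (x0 i)) ∨
     (∃ r, c = (.inr r, (p : ℤ)) ∧ ∀ y, up i r = some y → ∀ s, tapeSym w ((p : ℤ) + 1) = some s →
        Fn up dn i (DD s) y → Fn up dn i (DD s) (x0 i)))

theorem inv_step (hac : ∀ i ≤ M, ∀ j ≤ M, Fn up dn i j (x0 i) → j ≤ i)
    (w : List (Fin M)) (c c') (hc : Inv M x0 up dn w c) (hs : (aut M x0 up dn).Step w c c') :
    Inv M x0 up dn w c' := by
  obtain ⟨s, hs, r, d, hd, rfl⟩ := hs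
  rcases hc with ⟨x, rfl⟩ | ⟨p, i, hip, hiM, hp, ⟨s', hs'1, hs'2, hs'3⟩, ⟨x, rfl, hx⟩ | ⟨r', rfl, hr⟩⟩
  · have : s = .lend := by
      have := tape_zero w
      simp only [Nat.cast_zero] at this
      rw [this] at hs; simpa using hs.symm
    subst this
    simp [aut, dl] at hd
    obtain ⟨rfl, rfl⟩ := hd
    right
    refine ⟨0, 0, le_rfl, Nat.zero_le _, Nat.zero_le _, ⟨.lend, by simp, tape_zero w, rfl⟩, ?_⟩
    left
    exact ⟨x0 0, by simp, fun _ _ h => h⟩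
  · simp only at hs hd
    rcases Nat.lt_or_ge p w.length with hlt | hge
    · have hs0 := hs
      rw [tape_succ w p hlt] at hs
      obtain rfl : _ = s := by simpa using hs
      simp only [aut, dl] at hd
      split at hd
      · simp at hd
      · rename_i hdn
        simp at hd
        obtain ⟨rfl, rfl⟩ := hd
        have hf := hx _ hs0 (Fn.done _ hdn)
        have hle := hac i hiM _ (by simp only [DD]; omega) hf
        simp only [DD] at hle
        right
        refine ⟨p + 1, (w[p]).val + 1, by omega, by omega, by omega,
          ⟨.letter w[p], by simp, by push_cast; exact hs0, rfl⟩, Or.inl ⟨_, by simp, fun _ _ h => h⟩⟩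
      · rename_i r1 hdn
        simp at hd
        obtain ⟨rfl, rfl⟩ := hd
        right
        refine ⟨p, i, hip, hiM, hp, ⟨s', hs'1, hs'2, hs'3⟩, Or.inr ⟨r1, by simp, ?_⟩⟩
        intro y hy s hs1 hf
        rw [hs0] at hs1
        obtain rfl : _ = s := by simpa using hs1
        exact hx _ hs0 (Fn.step _ _ _ hdn hy hf)
    · obtain rfl : p = w.length := by omega
      have hs0 := hs
      rw [tape_last w] at hs
      obtain rfl : _ = s := by simpa using hs
      simp only [aut, dl] at hd
      split at hd
      · rename_i r1 hdn
        simp at hd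
        obtain ⟨rfl, rfl⟩ := hd
        right
        refine ⟨_, i, hip, hiM, hp, ⟨s', hs'1, hs'2, hs'3⟩, Or.inr ⟨r1, by simp, ?_⟩⟩
        intro y hy s hs1 hf
        rw [hs0] at hs1
        obtain rfl : _ = s := by simpa using hs1
        exact hx _ hs0 (Fn.step _ _ _ hdn hy hf)
      · simp at hd
  · simp only at hs hd
    rw [hs'2] at hs
    obtain rfl : _ = s := by simpa using hs
    right
    have key : ∃ y, up i r' = some y ∧ r = .inl y ∧ d = true := by
      cases s' with
      | rend => exact absurd rfl hs'1
      | lend =>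
        simp [aut, dl] at hd
        simp [LL] at hs'3
        subst hs'3
        obtain ⟨y, h1, h2, h3⟩ := hd
        exact ⟨y, h1, h2.symm, h3⟩
      | letter a =>
        simp [aut, dl] at hd
        simp [LL] at hs'3
        subst hs'3
        obtain ⟨y, h1, h2, h3⟩ := hd
        exact ⟨y, h1, h2.symm, h3⟩
    obtain ⟨y, hy, rfl, rfl⟩ := key
    refine ⟨p, i, hip, hiM, hp, ⟨s', hs'1, hs'2, hs'3⟩, Or.inl ⟨y, by simp, hr y hy⟩⟩

theorem lower (hac : ∀ i ≤ M, ∀ j ≤ M, Fn up dn i j (x0 i) → j ≤ i)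
    (w : List (Fin M)) (h : (aut M x0 up dn).Accepts w) : M ≤ w.length := by
  obtain ⟨q, ⟨x, rfl, hx⟩, hr⟩ := h
  have : Inv M x0 up dn w (.inl x, (w.length : ℤ) + 1) := by
    have gen : ∀ c, Relation.ReflTransGen ((aut M x0 up dn).Step w) ((aut M x0 up dn).init, 0) c →
        Inv M x0 up dn w c := by
      intro c hc
      induction hc with
      | refl => left; exact ⟨x0 0, rfl⟩
      | tail _ hs ih => exact inv_step M x0 up dn hac w _ _ ih hs
    exact gen _ hr
  rcases this with ⟨y, hy⟩ | ⟨p, i, hip, hiM, hp, _, ⟨y, hy, hf⟩ | ⟨r, hr, _⟩⟩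
  · simp at hy; omega
  · simp at hy
    obtain ⟨rfl, hy⟩ := hy
    have hy' : p = w.length := by omega
    subst hy'
    have := hac i hiM M le_rfl (hf _ (tape_last w) (Fn.done _ hx))
    omega
  · simp at hr

theorem walk (w : List (Fin M)) (p i : ℕ) (s : TapeSymbol (Fin M)) (hs : s ≠ .rend)
    (hp : tapeSym w (p : ℤ) = some s) (hi : LL s = i)
    (t : TapeSymbol (Fin M)) (ht : t ≠ .lend) (htp : tapeSym w ((p : ℤ) + 1) = some t)
    (x : Fin k) (hf : Fn up dn i (DD t) x) :
    ∃ y, dn (DD t) y = some none ∧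
      Relation.ReflTransGen ((aut M x0 up dn).Step w) (.inl x, (p : ℤ) + 1) (.inl y, (p : ℤ) + 1) := by
  induction hf with
  | done x h => exact ⟨x, h, .refl⟩
  | step x r y h h' hy ih =>
    obtain ⟨z, hz, hw⟩ := ih
    refine ⟨z, hz, ?_⟩
    refine Relation.ReflTransGen.head (b := (.inr r, (p : ℤ))) ?_
      (Relation.ReflTransGen.head (b := (.inl y, (p : ℤ) + 1)) ?_ hw)
    · refine ⟨t, htp, .inr r, false, ?_, by simp⟩
      cases t with
      | lend => exact absurd rfl ht
      | rend => simp only [DD] at h; simp [aut, dl, h]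
      | letter a => simp only [DD] at h; simp [aut, dl, h]
    · refine ⟨s, hp, .inl y, true, ?_, by simp⟩
      cases s with
      | rend => exact absurd rfl hs
      | lend => simp only [LL] at hi; subst hi; simp [aut, dl, h']
      | letter a => simp only [LL] at hi; subst hi; simp [aut, dl, h']

theorem upper (hself : ∀ i ≤ M, Fn up dn i i (x0 i)) :
    ∃ w, (aut M x0 up dn).Accepts w ∧ w.length = M := by
  refine ⟨List.finRange M, ?_, by simp⟩
  set w := List.finRange M with hw
  have hlen : w.length = M := by simp [hw]
  have hsym : ∀ p : ℕ, p ≤ M → ∃ s, s ≠ .rend ∧ tapeSym w (p : ℤ) = some s ∧ LL s = p := by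
    intro p hp
    cases p with
    | zero => exact ⟨.lend, by simp, tape_zero w, rfl⟩
    | succ p =>
      refine ⟨.letter (w[p]'(by omega)), by simp, by push_cast; exact tape_succ w p (by omega), ?_⟩
      simp [LL, hw]
  have hreach : ∀ p : ℕ, p ≤ M → Relation.ReflTransGen ((aut M x0 up dn).Step w)
      ((aut M x0 up dn).init, 0) (.inl (x0 p), (p : ℤ) + 1) := by
    intro p
    induction p with
    | zero =>
      intro _
      refine Relation.ReflTransGen.single ⟨.lend, by simpa using tape_zero w, .inl (x0 0), true, ?_, by simp⟩
      simp [aut, dl]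
    | succ p ih =>
      intro hp
      obtain ⟨s, h1, h2, h3⟩ := hsym p (by omega)
      have ht := tape_succ w p (by omega)
      have hv : (w[p]'(by omega)).val = p := by simp [hw]
      obtain ⟨y, hy, hr⟩ := walk M x0 up dn w p p s h1 h2 h3 _ (by simp) ht (x0 p)
        (by simp only [DD, hv]; exact hself p (by omega))
      refine ((ih (by omega)).trans hr).tail ⟨_, ht, .inl (x0 (p + 1)), true, ?_, by simp⟩
      simp only [DD, hv] at hy
      simp [aut, dl, hv, hy]
  obtain ⟨s, h1, h2, h3⟩ := hsym M le_rfl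
  obtain ⟨y, hy, hr⟩ := walk M x0 up dn w M M s h1 h2 h3 .rend (by simp)
    (by have := tape_last w; rwa [hlen] at this) (x0 M) (hself M le_rfl)
  refine ⟨.inl y, ⟨y, rfl, hy⟩, ?_⟩
  rw [hlen]
  exact (hreach M le_rfl).trans hr

end core

/-! ### Chains -/

section chains
variable {k ℓ : ℕ}

def cup : List (Fin ℓ × Fin k) → Fin ℓ → Option (Fin k)
  | [], _ => none
  | (r, x) :: l, s => if s = r then some x else cup l s

def cdn : Fin k → List (Fin ℓ × Fin k) → Fin k → Option (Option (Fin ℓ))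
  | a, [], x => if x = a then some none else none
  | a, (r, b) :: l, x => if x = a then some (some r) else cdn b l x

def key : Fin k → List (Fin ℓ × Fin k) → List ℤ
  | a, [] => [(a.val : ℤ)]
  | a, (r, b) :: l => (a.val : ℤ) :: (-(r.val : ℤ)) :: key b l

/-- sortedness of a chain -/
def Srt (a : Fin k) (l : List (Fin ℓ × Fin k)) : Prop :=
  (a :: l.map Prod.snd).Pairwise (· < ·) ∧ (l.map Prod.fst).Pairwise (· < ·)

inductive Fc (ls : List (Fin ℓ × Fin k)) (b : Fin k) (lt : List (Fin ℓ × Fin k)) : Fin k → Prop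
  | done (x : Fin k) (h : cdn b lt x = some none) : Fc ls b lt x
  | step (x : Fin k) (r : Fin ℓ) (y : Fin k) (h : cdn b lt x = some (some r)) (h' : cup ls r = some y)
      (hy : Fc ls b lt y) : Fc ls b lt x

theorem cup_mem (l : List (Fin ℓ × Fin k)) (r : Fin ℓ) (x : Fin k) (h : cup l r = some x) :
    (r, x) ∈ l := by
  induction l with
  | nil => simp [cup] at h
  | cons p l ih =>
    obtain ⟨s, y⟩ := p
    simp only [cup] at h
    split at h
    · simp_all
    · exact List.mem_cons_of_mem _ (ih h)

theorem cdn_mem (l : List (Fin ℓ × Fin k)) (a x : Fin k) (o) (h : cdn a l x = some o) :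
    x ∈ a :: l.map Prod.snd ∧ ∀ r, o = some r → r ∈ l.map Prod.fst := by
  induction l generalizing a with
  | nil =>
    simp only [cdn] at h
    split at h <;> simp_all
    rintro r rfl; simp at h
  | cons p l ih =>
    obtain ⟨s, y⟩ := p
    simp only [cdn] at h
    split at h
    · simp_all
      grind
    · have := ih y h
      grind

theorem Srt.tail {a : Fin k} {r : Fin ℓ} {b : Fin k} {l} (h : Srt a ((r, b) :: l)) : Srt b l := by
  unfold Srt at *
  simp at *
  grind

theorem fc_down {a : Fin k} {r : Fin ℓ} {x1 y1 : Fin k} {ls lt : List (Fin ℓ × Fin k)}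
    (hS : Srt a ((r, x1) :: ls)) (hT : Srt a ((r, y1) :: lt)) (x : Fin k) (hx : a < x)
    (h : Fc ((r, x1) :: ls) a ((r, y1) :: lt) x) : Fc ls y1 lt x := by
  induction h with
  | done x h =>
    refine .done x ?_
    simpa [cdn, hx.ne'] using h
  | step x s y h h' _ ih =>
    have h1 : cdn y1 lt x = some (some s) := by simpa [cdn, hx.ne'] using h
    have h2 : s ∈ lt.map Prod.fst := (cdn_mem _ _ _ _ h1).2 s rfl
    have h3 : r < s := by
      have := hT.2
      simp only [List.map_cons, List.pairwise_cons] at this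
      exact this.1 s h2
    have h4 : cup ls s = some y := by simpa [cup, h3.ne'] using h'
    have h5 : a < y := by
      have := hS.1
      simp only [List.map_cons, List.pairwise_cons] at this
      exact this.1 y (List.mem_cons_of_mem _ (List.mem_map_of_mem (cup_mem _ _ _ h4)))
    exact .step x s y h1 h4 (ih h5)

theorem fc_up {a : Fin k} {r : Fin ℓ} {x1 : Fin k} {ls : List (Fin ℓ × Fin k)}
    (hS : Srt a ((r, x1) :: ls)) (x : Fin k) (hx : a < x)
    (h : Fc ls x1 ls x) : Fc ((r, x1) :: ls) a ((r, x1) :: ls) x := by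
  induction h with
  | done x h =>
    refine .done x ?_
    simpa [cdn, hx.ne'] using h
  | step x s y h h' _ ih =>
    have h2 : s ∈ ls.map Prod.fst := (cdn_mem _ _ _ _ h).2 s rfl
    have h3 : r < s := by
      have := hS.2
      simp only [List.map_cons, List.pairwise_cons] at this
      exact this.1 s h2
    have h5 : a < y := by
      have := hS.1
      simp only [List.map_cons, List.pairwise_cons] at this
      exact this.1 y (List.mem_cons_of_mem _ (List.mem_map_of_mem (cup_mem _ _ _ h')))
    exact .step x s y (by simpa [cdn, hx.ne'] using h) (by simpa [cup, h3.ne'] using h') (ih h5)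

theorem fc_self (l : List (Fin ℓ × Fin k)) (a : Fin k) (h : Srt a l) : Fc l a l a := by
  induction l generalizing a with
  | nil => exact .done a (by simp [cdn])
  | cons p l ih =>
    obtain ⟨r, x⟩ := p
    have hax : a < x := by have := h.1; simp at this; exact this.1.1
    exact .step a r x (by simp [cdn]) (by simp [cup]) (fc_up h x hax (ih x h.tail))

theorem lle_same {u : ℤ} {l l' : List ℤ} (h : l ≤ l') : u :: l ≤ u :: l' := by
  rcases h.lt_or_eq with h | rfl
  · exact le_of_lt (List.Lex.cons h)
  · exact le_rfl

theorem lle_nil (l : List ℤ) : [] ≤ l := by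
  cases l with
  | nil => exact le_rfl
  | cons a l => exact le_of_lt List.Lex.nil

theorem fc_key (lt ls : List (Fin ℓ × Fin k)) (a b : Fin k) (hS : Srt a ls) (hT : Srt b lt)
    (h : Fc ls b lt a) : key b lt ≤ key a ls := by
  induction lt generalizing ls a b with
  | nil =>
    have hab : a = b := by
      cases h with
      | done x h => by_contra hne; simp [cdn, hne] at h
      | step x r y h => by_contra; simp [cdn] at h
    subst hab
    cases ls with
    | nil => exact le_rfl
    | cons p l => exact lle_same (lle_nil _)
  | cons p lt ih =>
    obtain ⟨r, y1⟩ := p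
    have hmem : ∃ o, cdn b ((r, y1) :: lt) a = some o := by
      cases h with
      | done x h => exact ⟨_, h⟩
      | step x r y h => exact ⟨_, h⟩
    obtain ⟨o, ho⟩ := hmem
    have hba : b ≤ a := by
      have h1 := (cdn_mem _ _ _ _ ho).1
      have h2 := hT.1
      rw [List.pairwise_cons] at h2
      rcases List.mem_cons.1 h1 with h3 | h3
      · exact h3.ge
      · exact (h2.1 _ h3).le
    have hcl : ∀ {u v : ℤ} {l l' : List ℤ}, u < v → u :: l ≤ v :: l' := by
      intro u v l l' huv
      exact le_of_lt (List.Lex.rel huv)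
    rcases hba.lt_or_eq with hlt | rfl
    · cases ls with
      | nil => exact hcl (by exact_mod_cast hlt)
      | cons p l => exact hcl (by exact_mod_cast hlt)
    · cases h with
      | done x h => simp [cdn] at h
      | step x r' y h h' hy =>
        obtain rfl : r = r' := by simpa [cdn] using h
        cases ls with
        | nil => simp [cup] at h'
        | cons p ls =>
          obtain ⟨r1, x1⟩ := p
          have hm := cup_mem _ _ _ h'
          simp only [key]
          refine lle_same ?_
          have hr : r1 ≤ r := by
            have h2 := hS.2
            simp only [List.map_cons, List.pairwise_cons] at h2
            rcases List.mem_cons.1 hm with h3 | h3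
            · simp at h3; exact h3.1.ge
            · exact (h2.1 _ (List.mem_map_of_mem h3)).le
          rcases hr.lt_or_eq with hlt | rfl
          · exact hcl (by simpa using hlt)
          · refine lle_same ?_
            obtain rfl : x1 = y := by simpa [cup] using h'
            have hax : b < x1 := by have := hS.1; simp at this; exact this.1.1
            exact ih ls x1 y1 hS.tail hT.tail (fc_down hS hT x1 hax hy)

theorem key_inj (l l' : List (Fin ℓ × Fin k)) (a b : Fin k) (h : key a l = key b l') :
    a = b ∧ l = l' := by
  induction l generalizing l' a b with
  | nil =>
    cases l' with
    | nil => simpa [key, Fin.ext_iff] using h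
    | cons p l => obtain ⟨r, x⟩ := p; simp [key] at h
  | cons p l ih =>
    obtain ⟨r, x⟩ := p
    cases l' with
    | nil => simp [key] at h
    | cons p l' =>
      obtain ⟨r', x'⟩ := p
      simp only [key, List.cons.injEq] at h
      obtain ⟨h1, h2, h3⟩ := h
      obtain ⟨rfl, rfl⟩ := ih _ _ _ h3
      have : a = b := by ext; omega
      have : r = r' := by ext; omega
      simp_all

theorem exists_chain (X : Finset (Fin k ⊕ Fin ℓ)) (hX : X.card = ℓ + 1) :
    ∃ c : Fin k × List (Fin ℓ × Fin k), Srt c.1 c.2 ∧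
      (c.1 :: c.2.map Prod.snd) = X.toLeft.sort ∧ c.2.map Prod.fst = (X.toRightᶜ).sort := by
  have h1 : X.toLeft.card + X.toRight.card = ℓ + 1 := by
    rw [Finset.card_toLeft_add_card_toRight, hX]
  have h2 : (X.toRightᶜ).card = ℓ - X.toRight.card := by simp [Finset.card_compl]
  have h3 : X.toRight.card ≤ ℓ := by simpa using Finset.card_le_univ X.toRight
  have hl1 : (X.toLeft.sort).length = X.toLeft.card := Finset.length_sort _
  have hl2 : ((X.toRightᶜ).sort).length = (X.toRightᶜ).card := Finset.length_sort _
  have hs1 : (X.toLeft.sort).Pairwise (· < ·) := (Finset.sortedLT_sort _).pairwise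
  have hs2 : ((X.toRightᶜ).sort).Pairwise (· < ·) := (Finset.sortedLT_sort _).pairwise
  cases hL : X.toLeft.sort with
  | nil => rw [hL] at hl1; simp at hl1; omega
  | cons a xs =>
    rw [hL] at hl1 hs1
    simp at hl1
    have e1 : (((X.toRightᶜ).sort).zip xs).map Prod.snd = xs :=
      List.map_snd_zip (by omega)
    have e2 : (((X.toRightᶜ).sort).zip xs).map Prod.fst = (X.toRightᶜ).sort :=
      List.map_fst_zip (by omega)
    refine ⟨(a, ((X.toRightᶜ).sort).zip xs), ⟨?_, ?_⟩, ?_, e2⟩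
    · simp only [e1]; exact hs1
    · simp only [e2]; exact hs2
    · simp only [e1]

end chains

theorem exists_seq (k ℓ M : ℕ) (hM : (k + ℓ).choose (ℓ + 1) = M + 1) :
    ∃ c : ℕ → Fin k × List (Fin ℓ × Fin k), (∀ i, Srt (c i).1 (c i).2) ∧
      ∀ i ≤ M, ∀ j ≤ M, key (c j).1 (c j).2 ≤ key (c i).1 (c i).2 → j ≤ i := by
  classical
  let C := {X : Finset (Fin k ⊕ Fin ℓ) // X.card = ℓ + 1}
  choose f hf using fun X : C => exists_chain X.1 X.2
  have hinj : Function.Injective f := by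
    intro X Y h
    have h1 := (hf X).2
    rw [h] at h1
    have h2 := (hf Y).2
    have e1 : X.1.toLeft = Y.1.toLeft := by
      have := h1.1.symm.trans h2.1
      rw [← Finset.sort_toFinset (s := X.1.toLeft) (r := (· ≤ ·)), this, Finset.sort_toFinset]
    have e2 : X.1.toRightᶜ = Y.1.toRightᶜ := by
      have := h1.2.symm.trans h2.2
      rw [← Finset.sort_toFinset (s := X.1.toRightᶜ) (r := (· ≤ ·)), this, Finset.sort_toFinset]
    have e3 : X.1.toRight = Y.1.toRight := compl_injective e2
    apply Subtype.ext
    rw [← Finset.toLeft_disjSum_toRight (u := X.1), e1, e3, Finset.toLeft_disjSum_toRight]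
  let g : C → List ℤ := fun X => key (f X).1 (f X).2
  have hg : Function.Injective g := by
    intro X Y h
    obtain ⟨h1, h2⟩ := key_inj _ _ _ _ h
    exact hinj (Prod.ext h1 h2)
  have hcard : Fintype.card C = M + 1 := by
    rw [← hM]
    simp [C, Fintype.card_finset_len]
  have hc2 : (Finset.univ.image g).card = M + 1 := by
    rw [Finset.card_image_of_injective _ hg, Finset.card_univ, hcard]
  have hex : ∀ i : Fin (M + 1), ∃ X, g X = (Finset.univ.image g).orderEmbOfFin hc2 i := by
    intro i
    have := Finset.orderEmbOfFin_mem _ hc2 i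
    obtain ⟨X, -, hX⟩ := Finset.mem_image.1 this
    exact ⟨X, hX⟩
  choose e he using hex
  refine ⟨fun i => f (e (Fin.ofNat (M + 1) i)), fun i => (hf _).1, ?_⟩
  intro i hi j hj h
  have h' : g (e (Fin.ofNat (M + 1) j)) ≤ g (e (Fin.ofNat (M + 1) i)) := h
  rw [he, he, OrderEmbedding.le_iff_le, Fin.le_def] at h'
  simp only [Fin.val_ofNat] at h'
  rwa [Nat.mod_eq_of_lt (by omega), Nat.mod_eq_of_lt (by omega)] at h'

theorem fn_iff {k ℓ : ℕ} (c : ℕ → Fin k × List (Fin ℓ × Fin k)) (i j : ℕ) (x : Fin k) :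
    Fn (fun i => cup (c i).2) (fun i => cdn (c i).1 (c i).2) i j x ↔ Fc (c i).2 (c j).1 (c j).2 x := by
  constructor
  · intro h
    induction h with
    | done x h => exact .done x h
    | step x r y h h' _ ih => exact .step x r y h h' ih
  · intro h
    induction h with
    | done x h => exact .done x h
    | step x r y h h' _ ih => exact .step x r y h h' ih

end TDS

/-- For every `k ≥ 2` and `ℓ ≥ 0` there exists a direction-determinate 2DFA with state set
`Q = Q⁺ ∪ Q⁻` where `|Q⁺| = k` and `|Q⁻| = ℓ` (modelled as `Fin k ⊕ Fin ℓ`, with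
`Q⁺` the `inl`-states and `Q⁻` the `inr`-states: every transition moving right enters an
`inl`-state and every transition moving left enters an `inr`-state), accepting at least one
string, such that the length of the shortest string it accepts is exactly
`C(k+ℓ, ℓ+1) − 1`. -/
theorem exists_direction_determinate_2dfa_shortest_eq (k ℓ : ℕ) (hk : 2 ≤ k) :
    ∃ (α : Type) (_ : Fintype α) (A : TwoDFA α (Fin k ⊕ Fin ℓ)),
      (∀ q s r d, A.δ q s = some (r, d) →
        ((d = true → ∃ x, r = Sum.inl x) ∧ (d = false → ∃ x, r = Sum.inr x))) ∧
      (∃ w, A.Accepts w ∧ w.length = (k + ℓ).choose (ℓ + 1) - 1) ∧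
      (∀ w, A.Accepts w → (k + ℓ).choose (ℓ + 1) - 1 ≤ w.length) := by
  have hpos : 0 < (k + ℓ).choose (ℓ + 1) := Nat.choose_pos (by omega)
  obtain ⟨M, hM⟩ : ∃ M, (k + ℓ).choose (ℓ + 1) = M + 1 := ⟨_, (Nat.succ_pred_eq_of_pos hpos).symm⟩
  obtain ⟨c, hc, hord⟩ := TDS.exists_seq k ℓ M hM
  refine ⟨Fin M, inferInstance, TDS.aut M (fun i => (c i).1) (fun i => TDS.cup (c i).2)
    (fun i => TDS.cdn (c i).1 (c i).2), fun q s r d h => TDS.dl_dir M _ _ _ q s r d h, ?_, ?_⟩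
  · rw [hM, Nat.add_sub_cancel]
    exact TDS.upper _ _ _ _ fun i _ => (TDS.fn_iff c i i _).2 (TDS.fc_self _ _ (hc i))
  · rw [hM, Nat.add_sub_cancel]
    refine TDS.lower _ _ _ _ fun i hi j hj h => hord i hi j hj ?_
    exact TDS.fc_key _ _ _ _ (hc i) (hc j) ((TDS.fn_iff c i j _).1 h)
end

section
/- For every n ≥ 2, there exists a direction-determinate two-way deterministic finite automaton with n states which accepts at least one string, and such that the length of the shortest string it accepts is exactly C(n, ⌊n/2⌋) − 1, where C denotes the binomial coefficient. -/
/-- The key of a pair of sorted lists. -/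
def keyL {p m : ℕ} : List (Fin p) → List (Fin m) → List ℤ
  | [], _ => []
  | x :: _, [] => [((x : ℕ) : ℤ)]
  | x :: xs, y :: ys => ((x : ℕ) : ℤ) :: (-((y : ℕ) : ℤ)) :: keyL xs ys

theorem keyL_inj {p m : ℕ} : ∀ (ys ys' : List (Fin m)) (xs xs' : List (Fin p)),
    xs.length = ys.length + 1 → xs'.length = ys'.length + 1 →
    keyL xs ys = keyL xs' ys' → xs = xs' ∧ ys = ys' := by
  intro ys
  induction ys with
  | nil =>
    intro ys' xs xs' h h' hk
    rcases xs with _ | ⟨x, _ | ⟨x2, xs⟩⟩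
    · simp at h
    · rcases xs' with _ | ⟨x', xs'⟩
      · simp at h'
      · rcases ys' with _ | ⟨y', ys'⟩
        · have : xs' = [] := by simpa using h'
          subst this
          simpa [keyL, Fin.ext_iff] using hk
        · simp [keyL] at hk
    · simp at h
  | cons y ys ih =>
    intro ys' xs xs' h h' hk
    rcases xs with _ | ⟨x, xs⟩
    · simp at h
    rcases xs' with _ | ⟨x', xs'⟩
    · simp at h'
    rcases ys' with _ | ⟨y', ys'⟩
    · simp [keyL] at hk
    simp only [keyL, List.cons.injEq, neg_inj, Nat.cast_inj] at hk
    obtain ⟨h1, h2, h3⟩ := hk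
    obtain ⟨a, b⟩ := ih ys' xs xs' (by simpa using h) (by simpa using h') h3
    exact ⟨by rw [a, Fin.ext h1], by rw [b, Fin.ext h2]⟩

theorem keyL_up {p m : ℕ} (P : Fin p → Bool) (Q : Fin m → Bool) (r : Fin p) (hr : P r = true) :
    ∀ (zs : List (Fin m × Fin p)),
    (zs.map Prod.snd ++ [r]).Pairwise (· < ·) → (∀ z ∈ zs, (Q z.1 = P z.2)) →
    keyL (zs.map Prod.snd ++ [r]) (zs.map Prod.fst) ≤
      keyL ((zs.map Prod.snd ++ [r]).filter P) ((zs.map Prod.fst).filter Q) := by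
  intro zs
  induction zs with
  | nil => intro _ _; simp [hr, keyL]
  | cons z zs ih =>
    intro hs hz
    obtain ⟨y, x⟩ := z
    have hz0 : Q y = P x := hz (y, x) (by simp)
    simp only [List.map_cons, List.cons_append, List.pairwise_cons] at hs
    have ih' := ih hs.2 (fun z hz' => hz z (List.mem_cons_of_mem _ hz'))
    cases hP : P x with
    | true =>
      rw [hP] at hz0
      simp only [List.map_cons, List.cons_append, List.filter_cons, hP, hz0, if_true, keyL]
      rcases lt_or_eq_of_le ih' with h | h
      · apply le_of_lt
        simpa only [List.cons_lt_cons_iff, lt_irrefl, true_and, false_or] using h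
      · rw [h]
    | false =>
      rw [hP] at hz0
      simp only [List.map_cons, List.cons_append, List.filter_cons, hP, hz0, keyL]
      simp only [Bool.false_eq_true, if_false]
      apply le_of_lt
      have hmem : r ∈ (zs.map Prod.snd ++ [r]).filter P := by simp [hr]
      have hall : ∀ a ∈ (zs.map Prod.snd ++ [r]).filter P, x < a := fun a ha =>
        hs.1 a (List.mem_filter.1 ha).1
      generalize (zs.map Prod.snd ++ [r]).filter P = L at hmem hall
      generalize (zs.map Prod.fst).filter Q = M
      match L, M, hmem, hall with
      | (a :: L), [], _, hall =>
        have := hall a (by simp)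
        simp only [keyL, List.cons_lt_cons_iff]
        left; exact_mod_cast this
      | (a :: L), (b :: M), _, hall =>
        have := hall a (by simp)
        simp only [keyL, List.cons_lt_cons_iff]
        left; exact_mod_cast this

theorem keyL_down {p m : ℕ} (P : Fin p → Bool) (Q : Fin m → Bool) :
    ∀ (zs : List (Fin p × Fin m)) (r : Fin p), P r = true →
    (zs.map Prod.snd).Pairwise (· < ·) → (∀ z ∈ zs, (P z.1 = Q z.2)) →
    keyL ((r :: zs.map Prod.fst).filter P) ((zs.map Prod.snd).filter Q) ≤
      keyL (r :: zs.map Prod.fst) (zs.map Prod.snd) := by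
  intro zs
  induction zs with
  | nil => intro r hr _ _; simp [hr, keyL]
  | cons z zs ih =>
    intro r hr hs hz
    obtain ⟨x, y⟩ := z
    have hz0 : P x = Q y := hz (x, y) (by simp)
    simp only [List.map_cons, List.pairwise_cons] at hs
    cases hP : P x with
    | true =>
      have ih' := ih x hP hs.2 (fun z hz' => hz z (List.mem_cons_of_mem _ hz'))
      rw [hP] at hz0
      simp only [List.filter_cons, hP, if_true] at ih'
      simp only [List.map_cons, List.filter_cons, hP, ← hz0, hr, if_true, keyL]
      rcases lt_or_eq_of_le ih' with h | h
      · apply le_of_lt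
        simpa only [List.cons_lt_cons_iff, lt_irrefl, true_and, false_or] using h
      · rw [h]
    | false =>
      rw [hP] at hz0
      simp only [List.map_cons, List.filter_cons, hP, ← hz0, hr, if_true, keyL]
      simp only [Bool.false_eq_true, if_false]
      apply le_of_lt
      have hall : ∀ a ∈ (zs.map Prod.snd).filter Q, y < a := fun a ha =>
        hs.1 a (List.mem_filter.1 ha).1
      generalize (zs.map Prod.snd).filter Q = M at hall
      match M, hall with
      | [], _ => simp [keyL]
      | (b :: M), hall =>
        have := hall b (by simp)
        simp only [keyL, List.cons_lt_cons_iff]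
        right; refine ⟨trivial, ?_⟩
        left; simpa using this

theorem exists_match {α β : Type} (zs : List (α × β)) (h : (zs.map Prod.fst).Nodup) :
    ∃ g : α → Option β, ∀ a b, g a = some b ↔ (a, b) ∈ zs := by
  classical
  refine ⟨fun a => if h : ∃ b, (a, b) ∈ zs then some h.choose else none, fun a b => ?_⟩
  have huniq : ∀ b b', (a, b) ∈ zs → (a, b') ∈ zs → b = b' := by
    intro b b' hb hb'
    have := List.inj_on_of_nodup_map h hb hb' rfl
    simpa using this
  constructor
  · intro hg
    by_cases hex : ∃ b, (a, b) ∈ zs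
    · simp only [hex, dif_pos, Option.some.injEq] at hg
      rw [← hg]; exact hex.choose_spec
    · simp [hex] at hg
  · intro hb
    have hex : ∃ b, (a, b) ∈ zs := ⟨b, hb⟩
    simp only [hex, dif_pos, Option.some.injEq]
    exact huniq _ _ hex.choose_spec hb

theorem sort_filter_sub {p : ℕ} (A A' : Finset (Fin p)) (h : A' ⊆ A) :
    (A.sort (· ≤ ·)).filter (fun x => decide (x ∈ A')) = A'.sort (· ≤ ·) := by
  apply List.Perm.eq_of_pairwise (le := (· ≤ ·))
  · intro a b _ _ h1 h2; exact le_antisymm h1 h2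
  · exact (A.pairwise_sort (· ≤ ·)).filter _
  · exact A'.pairwise_sort (· ≤ ·)
  · rw [List.perm_ext_iff_of_nodup]
    · intro a; simp only [List.mem_filter, Finset.mem_sort, decide_eq_true_eq]
      exact ⟨fun h => h.2, fun ha => ⟨h ha, ha⟩⟩
    · exact (A.sort_nodup _).filter _
    · exact A'.sort_nodup _

/-- The key of a pair of finite sets. -/
def keyS {p m : ℕ} (A : Finset (Fin p)) (B : Finset (Fin m)) : List ℤ :=
  keyL (A.sort (· ≤ ·)) (B.sort (· ≤ ·))

theorem sort_lt {p : ℕ} (A : Finset (Fin p)) : (A.sort (· ≤ ·)).Pairwise (· < ·) :=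
  (A.sortedLT_sort).pairwise

/-- Matchings. -/
def IsMatch {α β : Type} (g : α → Option β) (A : Finset α) (B : Finset β) : Prop :=
  (∀ a b, g a = some b → a ∈ A ∧ b ∈ B) ∧ (∀ a ∈ A, ∃ b, g a = some b) ∧
  (∀ b ∈ B, ∃ a, g a = some b) ∧ (∀ a a' b, g a = some b → g a' = some b → a = a')

theorem isMatch_of_list {α β : Type} [DecidableEq α] [DecidableEq β] (zs : List (α × β))
    (h1 : (zs.map Prod.fst).Nodup)
    (h2 : (zs.map Prod.snd).Nodup) (A : Finset α) (B : Finset β)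
    (hA : ∀ a, a ∈ A ↔ a ∈ zs.map Prod.fst) (hB : ∀ b, b ∈ B ↔ b ∈ zs.map Prod.snd) :
    ∃ g : α → Option β, (∀ a b, g a = some b ↔ (a, b) ∈ zs) ∧ IsMatch g A B := by
  obtain ⟨g, hg⟩ := exists_match zs h1
  refine ⟨g, hg, ?_, ?_, ?_, ?_⟩
  · intro a b hab
    rw [hg] at hab
    rw [hA, hB]
    exact ⟨List.mem_map_of_mem (f := Prod.fst) hab, List.mem_map_of_mem (f := Prod.snd) hab⟩
  · intro a ha
    rw [hA, List.mem_map] at ha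
    obtain ⟨⟨x, y⟩, hz, rfl⟩ := ha
    exact ⟨y, (hg _ _).2 hz⟩
  · intro a ha
    rw [hB, List.mem_map] at ha
    obtain ⟨⟨x, y⟩, hz, rfl⟩ := ha
    exact ⟨x, (hg _ _).2 hz⟩
  · intro a a' b h h'
    rw [hg] at h h'
    have := List.inj_on_of_nodup_map h2 h h' rfl
    simpa using this

theorem exists_up {p m : ℕ} (A : Finset (Fin p)) (B : Finset (Fin m)) (hc : A.card = B.card + 1) :
    ∃ (u : Fin p) (h : Fin m → Option (Fin p)), u ∈ A ∧ IsMatch h B (A.erase u) ∧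
      ∀ A' B', A' ⊆ A → B' ⊆ B → u ∈ A' → (∀ y x, h y = some x → (y ∈ B' ↔ x ∈ A')) →
        keyS A B ≤ keyS A' B' := by
  have hlen : (A.sort (· ≤ ·)).length = (B.sort (· ≤ ·)).length + 1 := by simp [hc]
  have hne : A.sort (· ≤ ·) ≠ [] := by intro h; rw [h] at hlen; simp at hlen
  set u := (A.sort (· ≤ ·)).getLast hne with hu
  set zs := (B.sort (· ≤ ·)).zip (A.sort (· ≤ ·)).dropLast with hzs
  have e1 : zs.map Prod.fst = B.sort (· ≤ ·) := by
    rw [hzs]; apply List.map_fst_zip; simp [hlen]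
  have e2 : zs.map Prod.snd ++ [u] = A.sort (· ≤ ·) := by
    rw [hzs, List.map_snd_zip (by simp [hlen]), hu, List.dropLast_append_getLast hne]
  have nd : (zs.map Prod.snd ++ [u]).Nodup := by rw [e2]; exact A.sort_nodup _
  have hlt : (zs.map Prod.snd ++ [u]).Pairwise (· < ·) := by rw [e2]; exact sort_lt A
  have memA : ∀ a, a ∈ A ↔ a ∈ zs.map Prod.snd ∨ a = u := by
    intro a; rw [← Finset.mem_sort (r := (· ≤ ·)), ← e2]; simp
  have hnu : u ∉ zs.map Prod.snd := by
    have := List.nodup_append.1 nd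
    intro hh; exact this.2.2 u hh u (by simp) rfl
  obtain ⟨h, hh, hm⟩ := isMatch_of_list zs (by rw [e1]; exact B.sort_nodup _)
    (List.nodup_append.1 nd).1 B (A.erase u) (by intro a; rw [e1]; simp)
    (by
      intro b; rw [Finset.mem_erase, memA]
      constructor
      · rintro ⟨h1, h2 | h2⟩
        · exact h2
        · exact absurd h2 h1
      · intro h; exact ⟨fun h' => hnu (h' ▸ h), Or.inl h⟩)
  refine ⟨u, h, (memA u).2 (Or.inr rfl), hm, ?_⟩
  intro A' B' hA hB hu' hiff
  have := keyL_up (fun x => decide (x ∈ A')) (fun y => decide (y ∈ B')) u (by simpa using hu') zs hlt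
    (by rintro ⟨y, x⟩ hz; simpa using hiff y x ((hh _ _).2 hz))
  rw [e1, e2, sort_filter_sub _ _ hA, sort_filter_sub _ _ hB] at this
  exact this

theorem exists_down {p m : ℕ} (A : Finset (Fin p)) (B : Finset (Fin m))
    (hc : A.card = B.card + 1) :
    ∃ (d : Fin p) (g : Fin p → Option (Fin m)), d ∈ A ∧ IsMatch g (A.erase d) B ∧
      ∀ A' B', A' ⊆ A → B' ⊆ B → d ∈ A' → (∀ x y, g x = some y → (x ∈ A' ↔ y ∈ B')) →
        keyS A' B' ≤ keyS A B := by
  have hlen : (A.sort (· ≤ ·)).length = (B.sort (· ≤ ·)).length + 1 := by simp [hc]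
  have hne : A.sort (· ≤ ·) ≠ [] := by intro h; rw [h] at hlen; simp at hlen
  set u := (A.sort (· ≤ ·)).head hne with hu
  set zs := (A.sort (· ≤ ·)).tail.zip (B.sort (· ≤ ·)) with hzs
  have e1 : zs.map Prod.snd = B.sort (· ≤ ·) := by
    rw [hzs]; apply List.map_snd_zip; simp [hlen]
  have e2 : u :: zs.map Prod.fst = A.sort (· ≤ ·) := by
    rw [hzs, List.map_fst_zip (by simp [hlen]), hu, List.cons_head_tail hne]
  have nd : (u :: zs.map Prod.fst).Nodup := by rw [e2]; exact A.sort_nodup _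
  have memA : ∀ a, a ∈ A ↔ a = u ∨ a ∈ zs.map Prod.fst := by
    intro a; rw [← Finset.mem_sort (r := (· ≤ ·)), ← e2]; simp
  have hnu : u ∉ zs.map Prod.fst := (List.nodup_cons.1 nd).1
  obtain ⟨h, hh, hm⟩ := isMatch_of_list zs (List.nodup_cons.1 nd).2
    (by rw [e1]; exact B.sort_nodup _) (A.erase u) B
    (by
      intro b; rw [Finset.mem_erase, memA]
      constructor
      · rintro ⟨h1, h2 | h2⟩
        · exact absurd h2 h1
        · exact h2
      · intro h; exact ⟨fun h' => hnu (h' ▸ h), Or.inr h⟩)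
    (by intro a; rw [e1]; simp)
  refine ⟨u, h, (memA u).2 (Or.inl rfl), hm, ?_⟩
  intro A' B' hA hB hu' hiff
  have := keyL_down (fun x => decide (x ∈ A')) (fun y => decide (y ∈ B')) zs u (by simpa using hu')
    (by rw [e1]; exact sort_lt B)
    (by rintro ⟨y, x⟩ hz; simpa using hiff y x ((hh _ _).2 hz))
  rw [e1, e2, sort_filter_sub _ _ hA, sort_filter_sub _ _ hB] at this
  exact this

theorem keyS_inj {p m : ℕ} (A A' : Finset (Fin p)) (B B' : Finset (Fin m))
    (hc : A.card = B.card + 1) (hc' : A'.card = B'.card + 1) (h : keyS A B = keyS A' B') :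
    A = A' ∧ B = B' := by
  obtain ⟨h1, h2⟩ := keyL_inj _ _ _ _ (by simp [hc]) (by simp [hc']) h
  constructor
  · ext a; rw [← Finset.mem_sort (r := (· ≤ ·)), h1]; simp
  · ext a; rw [← Finset.mem_sort (r := (· ≤ ·)), h2]; simp

theorem card_pairs (p m : ℕ) :
    Fintype.card {S : Finset (Fin p) × Finset (Fin m) // S.1.card = S.2.card + 1} =
      (p + m).choose (m + 1) := by
  have h1 : (Finset.powersetCard (m + 1) (Finset.univ : Finset (Fin p ⊕ Fin m))).card =
      (p + m).choose (m + 1) := by simp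
  rw [← h1, Fintype.card_subtype]
  apply Finset.card_bij (fun S _ => S.1.disjSum S.2ᶜ)
  · rintro ⟨A, B⟩ h
    simp only [Finset.mem_filter, Finset.mem_univ, true_and] at h
    simp only [Finset.mem_powersetCard, Finset.subset_univ, true_and, Finset.card_disjSum,
      Finset.card_compl, Fintype.card_fin]
    have := Finset.card_le_univ B
    simp at this
    omega
  · rintro ⟨A, B⟩ _ ⟨A', B'⟩ _ h
    have hl := congrArg Finset.toLeft h
    have hr := congrArg Finset.toRight h
    simp at hl hr
    simp [hl, hr]
  · intro U hU
    simp only [Finset.mem_powersetCard, Finset.subset_univ, true_and] at hU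
    refine ⟨(U.toLeft, U.toRightᶜ), ?_, ?_⟩
    · have := U.card_toLeft_add_card_toRight
      have h2 := Finset.card_le_univ U.toRight
      simp at h2
      simp [Finset.card_compl]
      omega
    · simp [Finset.toLeft_disjSum_toRight]

theorem exists_order {I L : Type} [Fintype I] [LinearOrder L] (k : I → L)
    (hk : Function.Injective k) (N : ℕ) (hN : Fintype.card I = N) :
    ∃ e : Fin N ≃ I, ∀ a b, k (e a) ≤ k (e b) → b ≤ a := by
  let _ : LinearOrder I := LinearOrder.lift' (fun i => OrderDual.toDual (k i))
    (fun a b h => hk (OrderDual.toDual.injective h))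
  let e := Fintype.orderIsoFinOfCardEq I hN
  refine ⟨e.toEquiv, fun a b h => ?_⟩
  have : e b ≤ e a := h
  exact e.le_iff_le.1 this

/-- The combinatorial data underlying the automaton. -/
structure CDat (p m K : ℕ) where
  A : ℕ → Finset (Fin p)
  B : ℕ → Finset (Fin m)
  u : ℕ → Fin p
  d : ℕ → Fin p
  h : ℕ → Fin m → Option (Fin p)
  g : ℕ → Fin p → Option (Fin m)
  card_eq : ∀ i, (A i).card = (B i).card + 1
  u_mem : ∀ i, u i ∈ A i
  d_mem : ∀ i, d i ∈ A i
  h_match : ∀ i, IsMatch (h i) (B i) ((A i).erase (u i))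
  g_match : ∀ i, IsMatch (g i) ((A i).erase (d i)) (B i)
  surj : ∀ A' B', A'.card = B'.card + 1 → ∃ t ≤ K, A t = A' ∧ B t = B'
  inj : ∀ s ≤ K, ∀ t ≤ K, A s = A t → B s = B t → s = t
  up : ∀ i ≤ K, ∀ t ≤ K, A t ⊆ A i → B t ⊆ B i → u i ∈ A t →
    (∀ y x, h i y = some x → (y ∈ B t ↔ x ∈ A t)) → t ≤ i
  down : ∀ i ≤ K, ∀ t ≤ K, A t ⊆ A i → B t ⊆ B i → d i ∈ A t →
    (∀ x y, g i x = some y → (x ∈ A t ↔ y ∈ B t)) → i ≤ t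

theorem exists_cdat (p m K : ℕ) (hK : (p + m).choose (m + 1) = K + 1) :
    Nonempty (CDat p m K) := by
  let I := {S : Finset (Fin p) × Finset (Fin m) // S.1.card = S.2.card + 1}
  obtain ⟨e, he⟩ := exists_order (I := I) (fun S => keyS S.1.1 S.1.2)
    (by
      rintro ⟨⟨A, B⟩, hc⟩ ⟨⟨A', B'⟩, hc'⟩ h
      obtain ⟨rfl, rfl⟩ := keyS_inj A A' B B' hc hc' h
      rfl) (K + 1) ((card_pairs p m).trans hK)
  let s : ℕ → I := fun i => e (Fin.ofNat (K + 1) i)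
  choose u h hu1 hu2 hu3 using fun i => exists_up (s i).1.1 (s i).1.2 (s i).2
  choose d g hd1 hd2 hd3 using fun i => exists_down (s i).1.1 (s i).1.2 (s i).2
  have hs : ∀ a ≤ K, ∀ b ≤ K, keyS (s a).1.1 (s a).1.2 ≤ keyS (s b).1.1 (s b).1.2 → b ≤ a := by
    intro a ha b hb hab
    have := he _ _ hab
    rw [Fin.le_def] at this
    simpa [Nat.mod_eq_of_lt (Nat.lt_succ_of_le ha), Nat.mod_eq_of_lt (Nat.lt_succ_of_le hb)]
      using this
  refine ⟨⟨fun i => (s i).1.1, fun i => (s i).1.2, u, d, h, g, fun i => (s i).2, hu1, hd1, hu2, hd2,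
    ?_, ?_, ?_, ?_⟩⟩
  · intro A' B' hc
    refine ⟨(e.symm ⟨(A', B'), hc⟩).1, Nat.lt_succ_iff.1 (e.symm ⟨(A', B'), hc⟩).2, ?_⟩
    have : s (e.symm ⟨(A', B'), hc⟩).1 = ⟨(A', B'), hc⟩ := by
      simp [s]
    rw [this]
    exact ⟨rfl, rfl⟩
  · intro a ha b hb h1 h2
    apply le_antisymm
    · exact hs b hb a ha (by rw [h1, h2])
    · exact hs a ha b hb (by rw [h1, h2])
  · intro i hi t ht h1 h2 h3 h4
    exact hs i hi t ht (hu3 i _ _ h1 h2 h3 h4)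
  · intro i hi t ht h1 h2 h3 h4
    exact hs t ht i hi (hd3 i _ _ h1 h2 h3 h4)

theorem CDat.first {p m K : ℕ} (D : CDat p m K) : D.A 0 = {D.u 0} ∧ D.B 0 = ∅ := by
  obtain ⟨t, ht, h1, h2⟩ := D.surj {D.u 0} ∅ (by simp)
  have := D.up 0 (Nat.zero_le _) t ht (by rw [h1]; simpa using D.u_mem 0) (by rw [h2]; simp)
    (by rw [h1]; simp) (by
      intro y x hyx
      have := ((D.h_match 0).1 y x hyx).2
      rw [Finset.mem_erase] at this
      rw [h1, h2]; simp [this.1])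
  obtain rfl : t = 0 := by omega
  exact ⟨h1, h2⟩

theorem CDat.last {p m K : ℕ} (D : CDat p m K) : D.A K = {D.d K} ∧ D.B K = ∅ := by
  obtain ⟨t, ht, h1, h2⟩ := D.surj {D.d K} ∅ (by simp)
  have := D.down K le_rfl t ht (by rw [h1]; simpa using D.d_mem K) (by rw [h2]; simp)
    (by rw [h1]; simp) (by
      intro y x hyx
      have := ((D.g_match K).1 y x hyx).1
      rw [Finset.mem_erase] at this
      rw [h1, h2]; simp [this.1])
  obtain rfl : t = K := by omega
  exact ⟨h1, h2⟩

/-- The automaton. -/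
def CDat.aut {p m K : ℕ} (D : CDat p m K) : TwoDFA (Fin K) (Fin p ⊕ Fin m) where
  init := Sum.inl (D.u 0)
  δ := fun q s => match s, q with
    | TapeSymbol.lend, Sum.inl x => if x = D.u 0 then some (Sum.inl (D.u 0), true) else none
    | TapeSymbol.lend, Sum.inr _ => none
    | TapeSymbol.rend, _ => none
    | TapeSymbol.letter i, Sum.inl x =>
      if x = D.d i then some (Sum.inl (D.u (i + 1)), true)
      else (D.g i x).map (fun y => (Sum.inr y, false))
    | TapeSymbol.letter i, Sum.inr y => (D.h (i + 1) y).map (fun x => (Sum.inl x, true))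
  F := {Sum.inl (D.d K)}

theorem CDat.aut_dd {p m K : ℕ} (D : CDat p m K) : D.aut.DirectionDeterminate := by
  refine ⟨fun q => q.isLeft, ?_⟩
  intro q s r d h
  rcases s with _ | _ | i <;> rcases q with x | y <;> simp only [CDat.aut] at h
  · split_ifs at h
    simp at h; obtain ⟨rfl, rfl⟩ := h; rfl
  · simp at h
  · simp at h
  · simp at h
  · split_ifs at h
    · simp at h; obtain ⟨rfl, rfl⟩ := h; rfl
    · simp at h; obtain ⟨y, _, rfl, rfl⟩ := h; rfl
  · simp at h; obtain ⟨y, _, rfl, rfl⟩ := h; rfl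

/-- Explicit description of the steps. -/
def CDat.St {p m K : ℕ} (D : CDat p m K) (w : List (Fin K)) (c c' : (Fin p ⊕ Fin m) × ℤ) : Prop :=
  (c = (Sum.inl (D.u 0), 0) ∧ c' = (Sum.inl (D.u 0), 1)) ∨
  ∃ (j : ℕ) (i : Fin K), w[j]? = some i ∧
    ((c = (Sum.inl (D.d i), (j : ℤ) + 1) ∧ c' = (Sum.inl (D.u (i + 1)), (j : ℤ) + 1 + 1)) ∨
     (∃ x y, D.g i x = some y ∧ c = (Sum.inl x, (j : ℤ) + 1) ∧ c' = (Sum.inr y, (j : ℤ))) ∨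
     (∃ y x, D.h (i + 1) y = some x ∧ c = (Sum.inr y, (j : ℤ) + 1) ∧
        c' = (Sum.inl x, (j : ℤ) + 1 + 1)))

theorem tapeSym_letter {α : Type} (w : List α) (k : ℤ) (a : α) :
    tapeSym w k = some (TapeSymbol.letter a) ↔ ∃ j : ℕ, k = (j : ℤ) + 1 ∧ w[j]? = some a := by
  unfold tapeSym
  constructor
  · intro h
    split_ifs at h with h1 h2 h3
    · simp at h
    · simp at h
    · refine ⟨(k - 1).toNat, by omega, ?_⟩
      simpa using h
  · rintro ⟨j, rfl, hj⟩
    have hlt : j < w.length := by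
      by_contra hh
      rw [List.getElem?_eq_none (by omega)] at hj
      simp at hj
    rw [if_neg (by omega), if_neg (by omega), if_pos (by omega)]
    simp [hj]

theorem tapeSym_lend {α : Type} (w : List α) (k : ℤ) :
    tapeSym w k = some TapeSymbol.lend ↔ k = 0 := by
  unfold tapeSym
  constructor
  · intro h
    split_ifs at h with h1 h2 h3
    · exact h1
    · simp at h
    · simp at h
  · rintro rfl
    simp

theorem CDat.g_d {p m K : ℕ} (D : CDat p m K) (i : ℕ) (x : Fin p) (y : Fin m)
    (h : D.g i x = some y) : x ≠ D.d i :=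
  (Finset.mem_erase.1 ((D.g_match i).1 x y h).1).1

theorem CDat.h_u {p m K : ℕ} (D : CDat p m K) (i : ℕ) (x : Fin p) (y : Fin m)
    (h : D.h i y = some x) : x ≠ D.u i :=
  (Finset.mem_erase.1 ((D.h_match i).1 y x h).2).1

theorem CDat.step_iff {p m K : ℕ} (D : CDat p m K) (w : List (Fin K))
    (c c' : (Fin p ⊕ Fin m) × ℤ) : D.aut.Step w c c' ↔ D.St w c c' := by
  obtain ⟨q, k⟩ := c
  constructor
  · rintro ⟨s, hs, r, d, hδ, rfl⟩
    rcases s with _ | _ | i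
    · rw [tapeSym_lend] at hs
      left
      simp only at hs; subst hs
      rcases q with x | y <;> simp only [CDat.aut] at hδ
      · split_ifs at hδ with h
        simp at hδ; obtain ⟨rfl, rfl⟩ := hδ
        simp [h]
      · simp at hδ
    · simp [CDat.aut] at hδ
    · rw [tapeSym_letter] at hs
      obtain ⟨j, hj, hw⟩ := hs
      simp only at hj; subst hj
      right
      refine ⟨j, i, hw, ?_⟩
      rcases q with x | y <;> simp only [CDat.aut] at hδ
      · split_ifs at hδ with h
        · simp at hδ; obtain ⟨rfl, rfl⟩ := hδ
          left; simp [h]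
        · simp at hδ; obtain ⟨y, hy, rfl, rfl⟩ := hδ
          right; left; exact ⟨x, y, hy, rfl, by simp⟩
      · simp at hδ; obtain ⟨x, hx, rfl, rfl⟩ := hδ
        right; right; exact ⟨y, x, hx, rfl, by simp⟩
  · rintro (⟨h1, rfl⟩ | ⟨j, i, hw, ⟨h1, rfl⟩ | ⟨x, y, hg, h1, rfl⟩ | ⟨y, x, hg, h1, rfl⟩⟩)
    · obtain ⟨rfl, rfl⟩ := Prod.mk.inj h1
      exact ⟨TapeSymbol.lend, (tapeSym_lend _ _).2 rfl, Sum.inl (D.u 0), true, by simp [CDat.aut],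
        by simp⟩
    · obtain ⟨rfl, rfl⟩ := Prod.mk.inj h1
      exact ⟨TapeSymbol.letter i, (tapeSym_letter _ _ _).2 ⟨j, rfl, hw⟩, _, true,
        by simp [CDat.aut]; rfl, by simp⟩
    · obtain ⟨rfl, rfl⟩ := Prod.mk.inj h1
      exact ⟨TapeSymbol.letter i, (tapeSym_letter _ _ _).2 ⟨j, rfl, hw⟩, Sum.inr y, false,
        by simp [CDat.aut, D.g_d _ _ _ hg, hg], by simp⟩
    · obtain ⟨rfl, rfl⟩ := Prod.mk.inj h1
      exact ⟨TapeSymbol.letter i, (tapeSym_letter _ _ _).2 ⟨j, rfl, hw⟩, Sum.inl x, true,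
        by simp [CDat.aut, hg], by simp⟩

theorem step_unique {α σ : Type} (A : TwoDFA α σ) (w : List α) :
    Relator.RightUnique (A.Step w) := by
  rintro a b c ⟨s, hs, r, d, h, rfl⟩ ⟨s', hs', r', d', h', rfl⟩
  rw [hs] at hs'
  obtain rfl := Option.some.inj hs'
  rw [h] at h'
  have := Option.some.inj h'
  simp at this
  rw [this.1, this.2]

theorem CDat.lower {p m K : ℕ} (D : CDat p m K) (w : List (Fin K)) (hacc : D.aut.Accepts w) :
    K ≤ w.length := by
  classical
  obtain ⟨q, hq, hrun⟩ := hacc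
  have hq' : q = Sum.inl (D.d K) := hq
  subst hq'
  have hrw : D.aut.Step w = D.St w := by
    funext c c'; exact propext (D.step_iff w c c')
  have hRU := step_unique D.aut w
  rw [hrw] at hrun hRU
  set R : (Fin p ⊕ Fin m) × ℤ → Prop :=
    fun c => Relation.ReflTransGen (D.St w) (Sum.inl (D.u 0), 0) c with hR
  have hfin : R (Sum.inl (D.d K), (w.length : ℤ) + 1) := hrun
  have stepR : ∀ c c', R c → D.St w c c' → R c' := fun c c' h h' => h.tail h'
  have nofin : ∀ c', ¬ D.St w (Sum.inl (D.d K), (w.length : ℤ) + 1) c' := by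
    rintro c' (⟨h1, -⟩ | ⟨j, i, hw, ⟨h1, -⟩ | ⟨x, y, hg, h1, -⟩ | ⟨y, x, hg, h1, -⟩⟩)
    · have := (Prod.mk.inj h1).2; omega
    all_goals
      have := (Prod.mk.inj h1).2
      have hj : j = w.length := by omega
      subst hj
      simp at hw
  have succR : ∀ c, R c → c ≠ (Sum.inl (D.d K), (w.length : ℤ) + 1) → ∃ c', D.St w c c' := by
    intro c hc hne
    rcases Relation.ReflTransGen.total_of_right_unique hRU hc hrun with h | h
    · rcases h.cases_head with h | ⟨c', h, _⟩
      · exact absurd h hne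
      · exact ⟨c', h⟩
    · rcases h.cases_head with h | ⟨c', h, _⟩
      · exact absurd h.symm hne
      · exact absurd h (nofin c')
  have predR : ∀ c, R c → c ≠ (Sum.inl (D.u 0), 0) → ∃ c', R c' ∧ D.St w c' c := by
    intro c hc hne
    rcases hc.cases_tail with h | h
    · exact absurd h hne
    · exact h
  -- successor of left-entering
  have succL : ∀ (j : ℕ) (i : Fin K) x, w[j]? = some i → R (Sum.inl x, (j : ℤ) + 1) →
      x = D.d i ∨ ∃ y, D.g i x = some y := by
    intro j i x hw hx
    have hlt : j < w.length := (List.getElem?_eq_some_iff.1 hw).1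
    obtain ⟨c', h⟩ := succR _ hx (by intro h; have := (Prod.mk.inj h).2; omega)
    rcases h with ⟨h1, -⟩ | ⟨j', i', hw', ⟨h1, -⟩ | ⟨x', y, hg, h1, -⟩ | ⟨y, x, hg, h1, -⟩⟩
    · have := (Prod.mk.inj h1).2; omega
    · obtain ⟨a, b⟩ := Prod.mk.inj h1
      obtain rfl : j = j' := by omega
      obtain rfl : i = i' := by rw [hw] at hw'; exact Option.some.inj hw'
      left; exact Sum.inl.inj a
    · obtain ⟨a, b⟩ := Prod.mk.inj h1
      obtain rfl : j = j' := by omega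
      obtain rfl : i = i' := by rw [hw] at hw'; exact Option.some.inj hw'
      obtain rfl := Sum.inl.inj a
      right; exact ⟨y, hg⟩
    · have := (Prod.mk.inj h1).1; simp at this
  have succM : ∀ (j : ℕ) (i : Fin K) y, w[j]? = some i → R (Sum.inr y, (j : ℤ) + 1) →
      ∃ x, D.h (i + 1) y = some x := by
    intro j i y hw hx
    obtain ⟨c', h⟩ := succR _ hx (by simp)
    rcases h with ⟨h1, -⟩ | ⟨j', i', hw', ⟨h1, -⟩ | ⟨x', y, hg, h1, -⟩ | ⟨y, x, hg, h1, -⟩⟩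
    · have := (Prod.mk.inj h1).1; simp at this
    · have := (Prod.mk.inj h1).1; simp at this
    · have := (Prod.mk.inj h1).1; simp at this
    · obtain ⟨a, b⟩ := Prod.mk.inj h1
      obtain rfl : j = j' := by omega
      obtain rfl : i = i' := by rw [hw] at hw'; exact Option.some.inj hw'
      obtain rfl := Sum.inr.inj a
      exact ⟨x, hg⟩
  have predM : ∀ (j : ℕ) y, R (Sum.inr y, (j : ℤ)) →
      ∃ i x, w[j]? = some i ∧ D.g i x = some y ∧ R (Sum.inl x, (j : ℤ) + 1) := by
    intro j y hy
    obtain ⟨c', hc', h⟩ := predR _ hy (by simp)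
    rcases h with ⟨-, h1⟩ | ⟨j', i', hw', ⟨-, h1⟩ | ⟨x, y', hg, rfl, h1⟩ | ⟨y, x, hg, -, h1⟩⟩
    · have := (Prod.mk.inj h1).1; simp at this
    · have := (Prod.mk.inj h1).1; simp at this
    · obtain ⟨a, b⟩ := Prod.mk.inj h1
      obtain rfl : j = j' := by omega
      obtain rfl := Sum.inr.inj a
      exact ⟨i', x, hw', hg, hc'⟩
    · have := (Prod.mk.inj h1).1; simp at this
  have predL : ∀ (j : ℕ) (i : Fin K) x, w[j]? = some i → R (Sum.inl x, (j : ℤ) + 1 + 1) →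
      x = D.u (i + 1) ∨ ∃ y, D.h (i + 1) y = some x ∧ R (Sum.inr y, (j : ℤ) + 1) := by
    intro j i x hw hy
    obtain ⟨c', hc', h⟩ := predR _ hy (by intro h; have := (Prod.mk.inj h).2; omega)
    rcases h with ⟨-, h1⟩ | ⟨j', i', hw', ⟨-, h1⟩ | ⟨x, y', hg, -, h1⟩ | ⟨y, x, hg, rfl, h1⟩⟩
    · have := (Prod.mk.inj h1).2; omega
    · obtain ⟨a, b⟩ := Prod.mk.inj h1
      obtain rfl : j = j' := by omega
      obtain rfl : i = i' := by rw [hw] at hw'; exact Option.some.inj hw'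
      left; exact Sum.inl.inj a
    · have := (Prod.mk.inj h1).1; simp at this
    · obtain ⟨a, b⟩ := Prod.mk.inj h1
      obtain rfl : j = j' := by omega
      obtain rfl : i = i' := by rw [hw] at hw'; exact Option.some.inj hw'
      obtain rfl := Sum.inl.inj a
      right; exact ⟨y, hg, hc'⟩
  set TP : ℕ → Finset (Fin p) := fun j => Finset.univ.filter (fun x => R (Sum.inl x, (j : ℤ) + 1))
    with hTP
  set TM : ℕ → Finset (Fin m) := fun j => Finset.univ.filter (fun y => R (Sum.inr y, (j : ℤ)))
    with hTM
  have memTP : ∀ j x, x ∈ TP j ↔ R (Sum.inl x, (j : ℤ) + 1) := by intro j x; simp [hTP]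
  have memTM : ∀ j y, y ∈ TM j ↔ R (Sum.inr y, (j : ℤ)) := by intro j x; simp [hTM]
  have claim : ∀ j ≤ w.length, ∃ t ≤ K, t ≤ j ∧ D.A t = TP j ∧ D.B t = TM j := by
    intro j
    induction j with
    | zero =>
      intro _
      refine ⟨0, Nat.zero_le _, le_rfl, ?_, ?_⟩
      · rw [D.first.1]
        ext x
        rw [memTP, Finset.mem_singleton]
        constructor
        · rintro rfl
          exact stepR _ _ Relation.ReflTransGen.refl (Or.inl ⟨rfl, by simp⟩)
        · intro hx
          obtain ⟨c', hc', h⟩ := predR _ hx (by intro h; have := (Prod.mk.inj h).2; simp at this)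
          rcases h with ⟨-, h1⟩ | ⟨j', i', hw', ⟨-, h1⟩ | ⟨x, y', hg, -, h1⟩ | ⟨y, x, hg, -, h1⟩⟩
          · exact Sum.inl.inj (Prod.mk.inj h1).1
          · have := (Prod.mk.inj h1).2; push_cast at this; omega
          · have := (Prod.mk.inj h1).1; simp at this
          · have := (Prod.mk.inj h1).2; push_cast at this; omega
      · rw [D.first.2]
        symm
        rw [Finset.eq_empty_iff_forall_notMem]
        intro y hy
        rw [memTM] at hy
        obtain ⟨c', h⟩ := succR _ hy (by simp)
        rcases h with ⟨h1, -⟩ | ⟨j', i', hw', ⟨h1, -⟩ | ⟨x', y, hg, h1, -⟩ | ⟨y, x, hg, h1, -⟩⟩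
        · have := (Prod.mk.inj h1).1; simp at this
        all_goals have := (Prod.mk.inj h1).2; push_cast at this; omega
    | succ j ih =>
      intro hj
      obtain ⟨t, htK, htj, hA, hB⟩ := ih (by omega)
      obtain ⟨i, hw⟩ : ∃ i, w[j]? = some i := ⟨w[j], List.getElem?_eq_getElem (by omega)⟩
      have casteq : ((j + 1 : ℕ) : ℤ) = (j : ℤ) + 1 := by push_cast; rfl
      obtain ⟨g1, g2, g3, g4⟩ := D.g_match i
      obtain ⟨h1, h2, h3, h4⟩ := D.h_match (i + 1)
      have L2' : ∀ y ∈ TM j, ∃ x, D.g i x = some y ∧ x ∈ TP j := by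
        intro y hy
        rw [memTM] at hy
        obtain ⟨i', x, hw', hg, hx⟩ := predM j y hy
        obtain rfl : i = i' := by rw [hw] at hw'; exact Option.some.inj hw'
        exact ⟨x, hg, (memTP _ _).2 hx⟩
      have L2 : ∀ x y, D.g i x = some y → (x ∈ TP j ↔ y ∈ TM j) := by
        intro x y hg
        constructor
        · intro hx
          rw [memTP] at hx
          rw [memTM]
          exact stepR _ _ hx (Or.inr ⟨j, i, hw, Or.inr (Or.inl ⟨x, y, hg, rfl, rfl⟩)⟩)
        · intro hy
          obtain ⟨x', hx', hmem⟩ := L2' y hy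
          rw [g4 x x' y hg hx']; exact hmem
      have subA : TP j ⊆ D.A i := by
        intro x hx
        rcases succL j i x hw ((memTP _ _).1 hx) with rfl | ⟨y, hy⟩
        · exact D.d_mem i
        · exact (Finset.mem_erase.1 (g1 x y hy).1).2
      have subB : TM j ⊆ D.B i := by
        intro y hy
        obtain ⟨x, hx, -⟩ := L2' y hy
        exact (g1 x y hx).2
      have hd : D.d i ∈ TP j := by
        by_contra hd
        have hex : ∀ x ∈ TP j, ∃ y, D.g i x = some y := by
          intro x hx
          rcases succL j i x hw ((memTP _ _).1 hx) with rfl | h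
          · exact absurd hx hd
          · exact h
        have hle : ((TP j).image (D.g i)).card ≤ ((TM j).image some).card := by
          apply Finset.card_le_card
          intro o ho
          obtain ⟨x, hx, rfl⟩ := Finset.mem_image.1 ho
          obtain ⟨y, hy⟩ := hex x hx
          exact Finset.mem_image.2 ⟨y, (L2 x y hy).1 hx, hy.symm⟩
        rw [Finset.card_image_of_injective _ (Option.some_injective _),
          Finset.card_image_of_injOn] at hle
        · have := D.card_eq t
          rw [hA, hB] at this
          omega
        · intro a ha b hb hab
          obtain ⟨y, hy⟩ := hex a ha
          exact g4 a b y hy (by rw [← hy]; exact hab.symm)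
      have hu : D.u (i + 1) ∈ TP (j + 1) := by
        rw [memTP, casteq]
        exact stepR _ _ ((memTP _ _).1 hd) (Or.inr ⟨j, i, hw, Or.inl ⟨rfl, rfl⟩⟩)
      have R2' : ∀ x ∈ TP (j + 1), x = D.u (i + 1) ∨ ∃ y ∈ TM (j + 1), D.h (i + 1) y = some x := by
        intro x hx
        rw [memTP, casteq] at hx
        rcases predL j i x hw hx with h | ⟨y, hy, hr⟩
        · exact Or.inl h
        · exact Or.inr ⟨y, by rw [memTM, casteq]; exact hr, hy⟩
      have R2 : ∀ y x, D.h (i + 1) y = some x → (y ∈ TM (j + 1) ↔ x ∈ TP (j + 1)) := by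
        intro y x hh
        constructor
        · intro hy
          rw [memTM, casteq] at hy
          rw [memTP, casteq]
          exact stepR _ _ hy (Or.inr ⟨j, i, hw, Or.inr (Or.inr ⟨y, x, hh, rfl, rfl⟩)⟩)
        · intro hx
          rcases R2' x hx with rfl | ⟨y', hy', hh'⟩
          · exact absurd rfl (D.h_u _ _ _ hh)
          · rw [h4 y y' x hh hh']; exact hy'
      have R1 : ∀ y ∈ TM (j + 1), ∃ x, D.h (i + 1) y = some x := by
        intro y hy
        rw [memTM, casteq] at hy
        exact succM j i y hw hy
      have subB' : TM (j + 1) ⊆ D.B (i + 1) := by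
        intro y hy
        obtain ⟨x, hx⟩ := R1 y hy
        exact (h1 y x hx).1
      have subA' : TP (j + 1) ⊆ D.A (i + 1) := by
        intro x hx
        rcases R2' x hx with rfl | ⟨y, _, hy⟩
        · exact D.u_mem _
        · exact (Finset.mem_erase.1 (h1 y x hy).2).2
      have himg : ((TP (j + 1)).erase (D.u (i + 1))).image some = (TM (j + 1)).image (D.h (i + 1)) := by
        ext o
        simp only [Finset.mem_image, Finset.mem_erase]
        constructor
        · rintro ⟨x, ⟨hne, hx⟩, rfl⟩
          rcases R2' x hx with h | h
          · exact absurd h hne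
          · exact h
        · rintro ⟨y, hy, rfl⟩
          obtain ⟨x, hx⟩ := R1 y hy
          exact ⟨x, ⟨D.h_u _ _ _ hx, (R2 y x hx).1 hy⟩, hx.symm⟩
      have hcard : (TP (j + 1)).card = (TM (j + 1)).card + 1 := by
        have := congrArg Finset.card himg
        rw [Finset.card_image_of_injective _ (Option.some_injective _),
          Finset.card_image_of_injOn] at this
        · rw [← this, Finset.card_erase_add_one hu]
        · intro a ha b hb hab
          obtain ⟨x, hx⟩ := R1 a ha
          exact h4 a b x hx (by rw [← hx]; exact hab.symm)
      obtain ⟨t', ht'K, hA', hB'⟩ := D.surj _ _ hcard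
      have k1 : t' ≤ i + 1 := by
        apply D.up (i + 1) i.2 t' ht'K
        · rw [hA']; exact subA'
        · rw [hB']; exact subB'
        · rw [hA']; exact hu
        · rw [hA', hB']; exact R2
      have k2 : (i : ℕ) ≤ t := by
        apply D.down i i.2.le t htK
        · rw [hA]; exact subA
        · rw [hB]; exact subB
        · rw [hA]; exact hd
        · rw [hA, hB]; exact L2
      exact ⟨t', ht'K, by omega, hA', hB'⟩
  obtain ⟨t, htK, htL, hA, hB⟩ := claim w.length le_rfl
  have hBe : TM w.length = ∅ := by
    rw [Finset.eq_empty_iff_forall_notMem]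
    intro y hy
    rw [memTM] at hy
    obtain ⟨i', x, hw', -⟩ := predM _ y hy
    simp at hw'
  have hAe : D.A t = {D.d K} := by
    have hc := D.card_eq t
    rw [hB, hBe] at hc
    obtain ⟨a, ha⟩ := Finset.card_eq_one.1 (by simpa using hc)
    have : D.d K ∈ D.A t := by rw [hA, memTP]; exact hfin
    rw [ha, Finset.mem_singleton] at this
    rw [ha, this]
  have : t = K := D.inj t htK K le_rfl (by rw [hAe, D.last.1]) (by rw [hB, hBe, D.last.2])
  omega

theorem CDat.St_inj {p m K : ℕ} (D : CDat p m K) (w : List (Fin K))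
    (a b c : (Fin p ⊕ Fin m) × ℤ) (ha : D.St w a c) (hb : D.St w b c) : a = b := by
  rcases ha with ⟨rfl, rfl⟩ | ⟨j, i, hw, ⟨rfl, rfl⟩ | ⟨x, y, hg, rfl, rfl⟩ | ⟨y, x, hg, rfl, rfl⟩⟩ <;>
  rcases hb with ⟨rfl, h1⟩ | ⟨j', i', hw', ⟨rfl, h1⟩ | ⟨x', y', hg', rfl, h1⟩ | ⟨y', x', hg', rfl, h1⟩⟩ <;>
  obtain ⟨e1, e2⟩ := Prod.mk.inj h1
  · rfl
  · omega
  · simp at e1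
  · omega
  · omega
  · obtain rfl : j = j' := by omega
    obtain rfl : i = i' := by rw [hw] at hw'; exact Option.some.inj hw'
    rfl
  · simp at e1
  · obtain rfl : j = j' := by omega
    obtain rfl : i = i' := by rw [hw] at hw'; exact Option.some.inj hw'
    exact absurd (Sum.inl.inj e1).symm (D.h_u _ _ _ hg')
  · simp at e1
  · simp at e1
  · obtain rfl : j = j' := by omega
    obtain rfl : i = i' := by rw [hw] at hw'; exact Option.some.inj hw'
    obtain rfl := Sum.inr.inj e1
    rw [(D.g_match i).2.2.2 x x' y hg hg']
  · simp at e1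
  · omega
  · obtain rfl : j = j' := by omega
    obtain rfl : i = i' := by rw [hw] at hw'; exact Option.some.inj hw'
    exact absurd (Sum.inl.inj e1) (D.h_u _ _ _ hg)
  · simp at e1
  · obtain rfl : j = j' := by omega
    obtain rfl : i = i' := by rw [hw] at hw'; exact Option.some.inj hw'
    obtain rfl := Sum.inl.inj e1
    rw [(D.h_match _).2.2.2 y y' x hg hg']

theorem CDat.upper {p m K : ℕ} (D : CDat p m K) : D.aut.Accepts (List.finRange K) := by
  classical
  set w := List.finRange K with hwdef
  have hlen : w.length = K := by simp [hwdef]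
  have hget : ∀ (j : ℕ) (hj : j < K), w[j]? = some ⟨j, hj⟩ := by
    intro j hj
    rw [List.getElem?_eq_some_iff]
    exact ⟨by omega, by simp [hwdef]⟩
  refine ⟨Sum.inl (D.d K), rfl, ?_⟩
  have hrw : D.aut.Step w = D.St w := by
    funext c c'; exact propext (D.step_iff w c c')
  rw [hrw, hlen]
  change Relation.ReflTransGen (D.St w) (Sum.inl (D.u 0), 0) _
  by_contra hno
  set R : (Fin p ⊕ Fin m) × ℤ → Prop :=
    fun c => Relation.ReflTransGen (D.St w) (Sum.inl (D.u 0), 0) c with hR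
  -- good configurations
  let G : (Fin p ⊕ Fin m) × ℤ → Prop := fun c =>
    c = (Sum.inl (D.u 0), 0) ∨
    (∃ j ≤ K, ∃ x ∈ D.A j, c = (Sum.inl x, (j : ℤ) + 1)) ∨
    (∃ j ≤ K, ∃ y ∈ D.B j, c = (Sum.inr y, (j : ℤ)))
  have hnext : ∀ c, G c → c ≠ (Sum.inl (D.d K), (K : ℤ) + 1) → ∃ c', D.St w c c' ∧ G c' := by
    rintro c (rfl | ⟨j, hj, x, hx, rfl⟩ | ⟨j, hj, y, hy, rfl⟩) hne
    · exact ⟨_, Or.inl ⟨rfl, rfl⟩, Or.inr (Or.inl ⟨0, Nat.zero_le _, _, D.u_mem 0, by simp⟩)⟩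
    · rcases Nat.lt_or_eq_of_le hj with hlt | rfl
      · by_cases hxd : x = D.d j
        · subst hxd
          exact ⟨_, Or.inr ⟨j, ⟨j, hlt⟩, hget j hlt, Or.inl ⟨rfl, rfl⟩⟩,
            Or.inr (Or.inl ⟨j + 1, hlt, _, D.u_mem _, by push_cast; rfl⟩)⟩
        · obtain ⟨y, hy⟩ := (D.g_match j).2.1 x (Finset.mem_erase.2 ⟨hxd, hx⟩)
          exact ⟨_, Or.inr ⟨j, ⟨j, hlt⟩, hget j hlt, Or.inr (Or.inl ⟨x, y, hy, rfl, rfl⟩)⟩,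
            Or.inr (Or.inr ⟨j, hj, y, ((D.g_match j).1 x y hy).2, rfl⟩)⟩
      · rw [D.last.1, Finset.mem_singleton] at hx
        subst hx
        exact absurd rfl hne
    · rcases j with _ | j
      · rw [D.first.2] at hy; simp at hy
      · obtain ⟨x, hx⟩ := (D.h_match (j + 1)).2.1 y hy
        exact ⟨_, Or.inr ⟨j, ⟨j, hj⟩, hget j hj, Or.inr (Or.inr ⟨y, x, hx, by push_cast; rfl, rfl⟩)⟩,
          Or.inr (Or.inl ⟨j + 1, hj, x, (Finset.mem_erase.1 ((D.h_match _).1 y x hx).2).2,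
            by push_cast; rfl⟩)⟩
  have hRU : Relator.RightUnique (D.St w) := by rw [← hrw]; exact step_unique _ _
  have hRG : ∀ c, R c → G c := by
    intro c hc
    induction hc with
    | refl => exact Or.inl rfl
    | tail hb hs ih =>
      obtain ⟨c', hc', hG⟩ := hnext _ ih (by rintro rfl; exact hno hb)
      rw [hRU hs hc']; exact hG
  have hfinite : {c | R c}.Finite := by
    apply Set.Finite.subset
      ((Finset.univ ×ˢ Finset.Icc (0 : ℤ) (K + 1) : Finset ((Fin p ⊕ Fin m) × ℤ)).finite_toSet)
    intro c hc
    rcases hRG c hc with rfl | ⟨j, hj, x, hx, rfl⟩ | ⟨j, hj, y, hy, rfl⟩ <;> simp <;> omega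
  have hs : ∀ c, R c → ∃ c', D.St w c c' := by
    intro c hc
    obtain ⟨c', h, _⟩ := hnext c (hRG c hc) (by rintro rfl; exact hno hc)
    exact ⟨c', h⟩
  let V := hfinite.toFinset
  have hV : ∀ c, c ∈ V ↔ R c := by intro c; simp [V]
  let nx : (Fin p ⊕ Fin m) × ℤ → (Fin p ⊕ Fin m) × ℤ :=
    fun c => if h : ∃ c', D.St w c c' then h.choose else c
  have hnx : ∀ c ∈ V, D.St w c (nx c) := by
    intro c hc
    have h := hs c ((hV c).1 hc)
    simp only [nx, dif_pos h]
    exact h.choose_spec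
  have h0 : (Sum.inl (D.u 0), (0 : ℤ)) ∈ V := (hV _).2 Relation.ReflTransGen.refl
  have hle : V.card ≤ (V.erase (Sum.inl (D.u 0), (0 : ℤ))).card := by
    apply Finset.card_le_card_of_injOn nx
    · intro c hc
      have hst := hnx c hc
      rw [Finset.mem_coe, Finset.mem_erase]
      refine ⟨?_, (hV _).2 (Relation.ReflTransGen.tail ((hV c).1 hc) hst)⟩
      intro heq
      rw [heq] at hst
      rcases hst with ⟨-, h1⟩ | ⟨j', i', hw', ⟨-, h1⟩ | ⟨x, y', hg, -, h1⟩ | ⟨y, x, hg, -, h1⟩⟩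
      · have := (Prod.mk.inj h1).2; omega
      · have := (Prod.mk.inj h1).2; omega
      · have := (Prod.mk.inj h1).1; simp at this
      · have := (Prod.mk.inj h1).2; omega
    · intro a ha b hb hab
      have h1 := hnx a ha
      have h2 := hnx b hb
      rw [← hab] at h2
      exact D.St_inj w a b _ h1 h2
  rw [Finset.card_erase_of_mem h0] at hle
  have := Finset.card_pos.2 ⟨_, h0⟩
  omega

/-- For every `n ≥ 2` there exists a direction-determinate 2DFA with `n` states,
accepting at least one string, such that the length of the shortest string it accepts
is exactly `C(n, ⌊n/2⌋) − 1`. -/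
theorem exists_direction_determinate_2dfa_shortest_eq_central (n : ℕ) (hn : 2 ≤ n) :
    ∃ (α σ : Type) (_ : Fintype α) (_ : Fintype σ) (A : TwoDFA α σ),
      Fintype.card σ = n ∧ A.DirectionDeterminate ∧
      (∃ w, A.Accepts w ∧ w.length = n.choose (n / 2) - 1) ∧
      (∀ w, A.Accepts w → n.choose (n / 2) - 1 ≤ w.length) := by
  have hpos : 0 < n.choose (n / 2) := Nat.choose_pos (Nat.div_le_self n 2)
  have hK : ((n - (n / 2 - 1)) + (n / 2 - 1)).choose ((n / 2 - 1) + 1) =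
      (n.choose (n / 2) - 1) + 1 := by
    have e1 : (n - (n / 2 - 1)) + (n / 2 - 1) = n := by omega
    have e2 : (n / 2 - 1) + 1 = n / 2 := by omega
    rw [e1, e2]; omega
  obtain ⟨D⟩ := exists_cdat _ _ _ hK
  refine ⟨_, _, inferInstance, inferInstance, D.aut, ?_, D.aut_dd, ⟨_, D.upper, by simp⟩,
    fun w hw => D.lower w hw⟩
  simp only [Fintype.card_sum, Fintype.card_fin]
  omega
end

section
/- For each n ≥ 2, there exists a two-way deterministic finite automaton with n states which accepts at least one string, and such that the length of the shortest string it accepts is exactly 3·2^{n−2} − 1. -/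
namespace Sh

/-- `Ex d f q r`: starting on a symbol with moves `d` in state `q`, where `f` describes the
excursions to the left, the head first leaves to the right in state `r`. -/
inductive Ex {σ : Type} (d : σ → Option (σ × Bool)) (f : σ → σ → Prop) : σ → σ → Prop
  | right {q r : σ} : d q = some (r, true) → Ex d f q r
  | left {q p p' r : σ} : d q = some (p, false) → f p p' → Ex d f p' r → Ex d f q r

section generic
variable {α σ : Type} (A : TwoDFA α σ) (w : List α)

/-- moves at position `p` -/
def sy : ℕ → σ → Option (σ × Bool)
  | 0, q => A.δ q TapeSymbol.lend
  | p + 1, q => (w[p]?).bind fun a => A.δ q (TapeSymbol.letter a)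

/-- excursions -/
def Fr : ℕ → σ → σ → Prop
  | 0 => Ex (sy A w 0) (fun _ _ => False)
  | p + 1 => Ex (sy A w (p + 1)) (Fr p)

/-- first exits -/
def Arr : ℕ → σ → Prop
  | 0, x => Fr A w 0 A.init x
  | p + 1, y => ∃ x, Arr p x ∧ Fr A w (p + 1) x y

theorem step_iff (p : ℕ) (hp : p ≤ w.length) (q : σ) (c : σ × ℤ) :
    A.Step w (q, (p : ℤ)) c ↔
      ∃ r d, sy A w p q = some (r, d) ∧ c = (r, (p : ℤ) + if d then 1 else -1) := by
  cases p with
  | zero => simp [TwoDFA.Step, tapeSym, sy]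
  | succ p =>
    have h1 : ((p : ℤ) + 1) ≠ 0 := by omega
    have h2 : (p : ℤ) ≠ (w.length : ℤ) := by omega
    have h3 : (0 : ℤ) < (p : ℤ) + 1 := by omega
    have h4 : w[p]? = some (w[p]'(by omega)) := List.getElem?_eq_getElem (by omega)
    simp [TwoDFA.Step, tapeSym, sy, h1, h2, h3, h4]

theorem fr_run : ∀ (p : ℕ), p ≤ w.length → ∀ q r, Fr A w p q r →
    Relation.ReflTransGen (A.Step w) (q, (p : ℤ)) (r, (p : ℤ) + 1) := by
  intro p
  induction p with
  | zero =>
    intro hp q r h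
    cases h with
    | right h =>
      exact Relation.ReflTransGen.single ((step_iff A w 0 hp _ _).2 ⟨_, _, h, by simp⟩)
    | left h h2 _ => exact h2.elim
  | succ p ih =>
    intro hp q r h
    change Ex _ _ q r at h
    induction h with
    | right h =>
      exact Relation.ReflTransGen.single ((step_iff A w (p + 1) hp _ _).2 ⟨_, _, h, by simp⟩)
    | @left q x x' r h h2 _ ih2 =>
      refine Relation.ReflTransGen.head
        ((step_iff A w (p + 1) hp _ _).2 ⟨_, _, h, rfl⟩) ?_
      have := ih (by omega) _ _ h2
      have e : ((p + 1 : ℕ) : ℤ) + (if false = true then 1 else -1) = (p : ℤ) := by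
        push_cast; simp
      rw [e]
      refine this.trans ?_
      have e2 : ((p + 1 : ℕ) : ℤ) = (p : ℤ) + 1 := by push_cast; rfl
      rw [e2] at ih2
      rw [e2]
      exact ih2

theorem arr_run : ∀ (p : ℕ), p ≤ w.length → ∀ x, Arr A w p x →
    Relation.ReflTransGen (A.Step w) (A.init, 0) (x, (p : ℤ) + 1) := by
  intro p
  induction p with
  | zero => intro hp x h; exact fr_run A w 0 hp _ _ h
  | succ p ih =>
    rintro hp y ⟨x, hx, h⟩
    have := fr_run A w (p + 1) hp _ _ h
    have e2 : ((p + 1 : ℕ) : ℤ) = (p : ℤ) + 1 := by push_cast; rfl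
    rw [e2] at this
    rw [e2]
    exact (ih (by omega) x hx).trans this

/-- `k` steps to the target -/
def Rk (t : σ × ℤ) : ℕ → σ × ℤ → Prop
  | 0, c => c = t
  | k + 1, c => ∃ c', A.Step w c c' ∧ Rk t k c'

theorem rk_of_run (t c : σ × ℤ) (h : Relation.ReflTransGen (A.Step w) c t) :
    ∃ k, Rk A w t k c := by
  induction h using Relation.ReflTransGen.head_induction_on with
  | refl => exact ⟨0, rfl⟩
  | head h _ ih => obtain ⟨k, hk⟩ := ih; exact ⟨k + 1, _, h, hk⟩

theorem rk_exit (t : σ) : ∀ (k p : ℕ) (q : σ), p ≤ w.length →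
    Rk A w (t, (w.length : ℤ) + 1) k (q, (p : ℤ)) →
    ∃ r k', k' < k ∧ Fr A w p q r ∧ Rk A w (t, (w.length : ℤ) + 1) k' (r, (p : ℤ) + 1) := by
  intro k
  induction k using Nat.strong_induction_on with
  | _ k ih =>
  intro p q hp h
  cases k with
  | zero =>
    exfalso
    have := congrArg Prod.snd h
    simp at this
    omega
  | succ k =>
    obtain ⟨c, hs, hk⟩ := h
    obtain ⟨r, d, hd, rfl⟩ := (step_iff A w p hp q c).1 hs
    cases d with
    | true =>
      refine ⟨r, k, by omega, ?_, by simpa using hk⟩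
      cases p <;> exact Ex.right hd
    | false =>
      cases p with
      | zero =>
        exfalso
        cases k with
        | zero =>
          have := congrArg Prod.snd hk
          simp at this
          omega
        | succ k =>
          obtain ⟨c, ⟨s, hs, _⟩, _⟩ := hk
          have h2 : ¬ ((-1 : ℤ) = (w.length : ℤ) + 1) := by omega
          simp [tapeSym, h2] at hs
      | succ p =>
        have e : ((p + 1 : ℕ) : ℤ) + (if false = true then 1 else -1) = (p : ℤ) := by
          push_cast; simp
        rw [e] at hk
        obtain ⟨r', k', hk', hf, hr⟩ := ih k (by omega) p r (by omega) hk
        have e2 : (p : ℤ) + 1 = ((p + 1 : ℕ) : ℤ) := by push_cast; rfl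
        rw [e2] at hr
        obtain ⟨r'', k'', hk'', hf', hr'⟩ := ih k' (by omega) (p + 1) r' hp hr
        exact ⟨r'', k'', by omega, Ex.left hd hf hf', hr'⟩

theorem rk_arr (t : σ) (k : ℕ) (h : Rk A w (t, (w.length : ℤ) + 1) k (A.init, 0)) :
    ∀ p, p ≤ w.length → ∃ x k', Arr A w p x ∧
      Rk A w (t, (w.length : ℤ) + 1) k' (x, (p : ℤ) + 1) := by
  intro p
  induction p with
  | zero =>
    intro hp
    obtain ⟨r, k', _, h1, h2⟩ := rk_exit A w t k 0 A.init hp h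
    exact ⟨r, k', h1, h2⟩
  | succ p ih =>
    intro hp
    obtain ⟨x, k', hx, hr⟩ := ih (by omega)
    have e2 : (p : ℤ) + 1 = ((p + 1 : ℕ) : ℤ) := by push_cast; rfl
    rw [e2] at hr
    obtain ⟨r, k'', _, h1, h2⟩ := rk_exit A w t k' (p + 1) x hp hr
    exact ⟨r, k'', ⟨x, hx, h1⟩, h2⟩

theorem accepts_iff (hr : ∀ q, A.δ q TapeSymbol.rend = none) :
    A.Accepts w ↔ ∃ q ∈ A.F, Arr A w w.length q := by
  constructor
  · rintro ⟨q, hq, h⟩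
    obtain ⟨k, hk⟩ := rk_of_run A w _ _ h
    obtain ⟨x, k', hx, hr'⟩ := rk_arr A w q k hk w.length le_rfl
    cases k' with
    | zero =>
      have := congrArg Prod.fst hr'
      simp at this
      subst this
      exact ⟨x, hq, hx⟩
    | succ k' =>
      exfalso
      obtain ⟨c, ⟨s, hs, r, d, hd, _⟩, _⟩ := hr'
      have h1 : ((w.length : ℤ) + 1) ≠ 0 := by omega
      simp [tapeSym, h1] at hs
      subst hs
      simp [hr] at hd
  · rintro ⟨q, hq, h⟩
    exact ⟨q, hq, arr_run A w _ le_rfl _ h⟩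

end generic

/-- Restricting the state set to `Fin n`. -/
theorem transfer {α : Type} (B : TwoDFA α ℕ) (n : ℕ) (hi : B.init < n)
    (hc : ∀ q s r d, q < n → B.δ q s = some (r, d) → r < n) :
    ∃ A : TwoDFA α (Fin n), ∀ w, A.Accepts w ↔ B.Accepts w := by
  let A : TwoDFA α (Fin n) :=
    { init := ⟨B.init, hi⟩
      δ := fun q s => (B.δ q s).bind fun x => if h : x.1 < n then some (⟨x.1, h⟩, x.2) else none
      F := {q | (q : ℕ) ∈ B.F} }
  have hA : ∀ q s r d, A.δ q s = some (r, d) ↔ B.δ (q : ℕ) s = some ((r : ℕ), d) := by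
    intro q s r d
    simp only [A]
    rcases hq : B.δ (q : ℕ) s with _ | ⟨r', d'⟩
    · simp
    · have := hc q s r' d' q.2 hq
      simp [this, Fin.ext_iff]
  have hs1 : ∀ w (c c' : Fin n × ℤ), A.Step w c c' → B.Step w ((c.1 : ℕ), c.2) ((c'.1 : ℕ), c'.2) := by
    rintro w c c' ⟨s, hs, r, d, hd, rfl⟩
    exact ⟨s, hs, r, d, (hA _ _ _ _).1 hd, rfl⟩
  refine ⟨A, fun w => ⟨?_, ?_⟩⟩
  · rintro ⟨q, hq, h⟩
    exact ⟨q, hq, h.lift (fun c : Fin n × ℤ => ((c.1 : ℕ), c.2)) (hs1 w)⟩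
  · rintro ⟨q, hq, h⟩
    have key : ∀ c, Relation.ReflTransGen (B.Step w) (B.init, 0) c →
        ∃ h : c.1 < n, Relation.ReflTransGen (A.Step w) (A.init, 0) (⟨c.1, h⟩, c.2) := by
      intro c h
      induction h with
      | refl => exact ⟨hi, .refl⟩
      | tail _ h2 ih =>
        obtain ⟨h, hr⟩ := ih
        obtain ⟨s, hs, r, d, hd, rfl⟩ := h2
        refine ⟨hc _ _ _ _ h hd, hr.tail ⟨s, hs, ⟨r, hc _ _ _ _ h hd⟩, d, (hA _ _ _ _).2 hd, rfl⟩⟩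
    obtain ⟨h1, h2⟩ := key _ h
    exact ⟨⟨q, h1⟩, hq, h2⟩

/-- sizes -/
def bB : ℕ → ℕ
  | 0 => 2
  | s + 1 => 3 * 2 ^ s

def tT : ℕ → ℕ
  | 0 => 1
  | s + 1 => 3 * 2 ^ s

theorem bB_succ (s : ℕ) : bB (s + 1) = bB s + tT s := by
  cases s with
  | zero => rfl
  | succ s => simp only [bB, tT, pow_succ]; omega

theorem tT_succ (s : ℕ) : tT (s + 1) = bB s + tT s := bB_succ s

theorem bB_pos (s : ℕ) : 1 < bB s := by
  cases s with
  | zero => simp [bB]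
  | succ s => have := Nat.one_le_two_pow (n := s); simp only [bB]; omega

theorem tT_pos (s : ℕ) : 0 < tT s := by
  cases s with
  | zero => simp [tT]
  | succ s => have := Nat.one_le_two_pow (n := s); simp only [tT]; omega

/-- The chain of behaviours. -/
def P : ℕ → ℕ → Option ℕ → (ℕ → ℕ → Prop) → Prop
  | 0, i, none, f => i = 0 ∨ (i = 1 ∧ f 0 0)
  | 0, i, some e, _ => i = 0 ∧ e = 0
  | s + 1, i, none, f => (i < bB s ∧ P s i none f) ∨
      ∃ j e, i = bB s + j ∧ f (s + 1) e ∧ P s j (some e) f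
  | s + 1, i, some e, f => (i < bB s ∧ e = s + 1 ∧ P s i none f) ∨
      ∃ j, i = bB s + j ∧ P s j (some e) f

theorem P_zero_N (s : ℕ) (f) : P s 0 none f := by
  induction s with
  | zero => simp [P]
  | succ s ih => exact Or.inl ⟨by have := bB_pos s; omega, ih⟩

theorem P_zero_T (s : ℕ) (f) : P s 0 (some s) f := by
  cases s with
  | zero => simp [P]
  | succ s => exact Or.inl ⟨by have := bB_pos s; omega, rfl, P_zero_N s f⟩

theorem P_bd (s : ℕ) (f) : (∀ i, P s i none f → i < bB s) ∧
    (∀ i e, P s i (some e) f → i < tT s ∧ e ≤ s) := by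
  induction s with
  | zero => 
    constructor
    · rintro i (h | h) <;> simp [bB] <;> omega
    · rintro i e ⟨h1, h2⟩; simp [tT, h1, h2]
  | succ s ih =>
    rw [bB_succ, tT_succ]
    constructor
    · rintro i (⟨h, _⟩ | ⟨j, e, rfl, _, h⟩)
      · omega
      · have := ih.2 _ _ h; omega
    · rintro i e (⟨h, rfl, _⟩ | ⟨j, rfl, h⟩)
      · have := tT_pos s; omega
      · have := ih.2 _ _ h; omega

theorem P_ex (s : ℕ) (f) : ∀ e, e ≤ s → ∃ j, P s j (some e) f := by
  induction s with
  | zero => intro e he; exact ⟨0, rfl, by omega⟩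
  | succ s ih =>
    intro e he
    rcases Nat.lt_or_ge s e with h | h
    · obtain rfl : e = s + 1 := by omega
      exact ⟨0, P_zero_T _ f⟩
    · obtain ⟨j, hj⟩ := ih e h
      exact ⟨bB s + j, Or.inr ⟨j, rfl, hj⟩⟩

theorem P_last_T (s : ℕ) (f) : ∀ e, P s (tT s - 1) (some e) f ↔ e = 0 := by
  induction s with
  | zero => intro e; simp [P, tT]
  | succ s ih =>
    intro e
    have h0 := tT_pos s
    have e1 : tT (s + 1) - 1 = bB s + (tT s - 1) := by rw [tT_succ]; omega
    rw [e1]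
    constructor
    · rintro (⟨h, _⟩ | ⟨j, h, h2⟩)
      · omega
      · obtain rfl : j = tT s - 1 := by omega
        exact (ih e).1 h2
    · intro h; exact Or.inr ⟨_, rfl, (ih e).2 h⟩

theorem P_last_N (s : ℕ) (f) : P s (bB s - 1) none f ↔ f s 0 := by
  cases s with
  | zero => simp [P, bB]
  | succ s =>
    have h0 := tT_pos s
    have e1 : bB (s + 1) - 1 = bB s + (tT s - 1) := by rw [bB_succ]; omega
    rw [e1]
    constructor
    · rintro (⟨h, _⟩ | ⟨j, e, h, h2, h3⟩)
      · omega
      · obtain rfl : j = tT s - 1 := by omega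
        obtain rfl := (P_last_T s f e).1 h3
        exact h2
    · intro h; exact Or.inr ⟨_, 0, rfl, h, (P_last_T s f 0).2 rfl⟩

theorem P_nokey (s : ℕ) (f : ℕ → ℕ → Prop) (h0 : ¬ f 0 0)
    (h : ∀ q r, 0 < q → q ≤ s → ¬ f q r) : ∀ i, P s i none f → i = 0 := by
  induction s with
  | zero =>
    rintro i (h | ⟨_, h⟩)
    · exact h
    · exact absurd h h0
  | succ s ih =>
    rintro i (⟨_, h1⟩ | ⟨j, e, _, h1, _⟩)
    · exact ih (fun q r h1 h2 => h q r h1 (by omega)) i h1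
    · exact absurd h1 (h _ _ (by omega) le_rfl)

theorem P_nokey_T (s : ℕ) (f : ℕ → ℕ → Prop) (h0 : 0 < s → ¬ f 0 0)
    (h : ∀ q r, 0 < q → q < s → ¬ f q r) : ∀ i, P s i (some s) f → i = 0 := by
  cases s with
  | zero => rintro i ⟨h, _⟩; exact h
  | succ s =>
    rintro i (⟨_, _, h1⟩ | ⟨j, _, h1⟩)
    · exact P_nokey s f (h0 (by omega)) (fun q r h1 h2 => h q r h1 (by omega)) i h1
    · have := ((P_bd s f).2 _ _ h1).2; omega

/-- the letters -/
def dd (k : ℕ) (g : ℕ → Option Bool) (q : ℕ) : Option (ℕ × Bool) :=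
  if k < q then (g q).map fun b => (q, b)
  else if k = 0 then some (0, true)
  else if q = k then some (k - 1, false)
  else if q = 0 then some (k - 1, true)
  else none

theorem dd_gt {k q : ℕ} (g) (h : k < q) : dd k g q = (g q).map fun b => (q, b) := by
  simp [dd, h]

theorem dd_top (k : ℕ) (g) : dd (k + 1) g (k + 1) = some (k, false) := by
  simp [dd]

theorem dd_zero (k : ℕ) (g) : dd (k + 1) g 0 = some (k, true) := by
  simp [dd]

theorem dd_mid {k q : ℕ} (g) (h : 0 < q) (h2 : q ≤ k) : dd (k + 1) g q = none := by
  have h3 : ¬ (k + 1 < q) := by omega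
  have h4 : q ≠ k + 1 := by omega
  have h5 : q ≠ 0 := by omega
  simp [dd, h3, h4, h5]

theorem dd_out {k q z : ℕ} {g} (h : dd k g q = some (z, true)) :
    dd k g z = some (z, true) ∨ dd k g z = none := by
  by_cases h1 : k < q
  · rw [dd_gt g h1] at h
    left
    rcases hg : g q with _ | b
    · simp [hg] at h
    · simp [hg] at h
      obtain ⟨rfl, rfl⟩ := h
      simp [dd_gt g h1, hg]
  · rcases k with _ | k
    · simp [dd, h1] at h
      subst h
      simp [dd]
    · have h5 : z = k := by
        simp only [dd, h1] at h
        split_ifs at h <;> simp_all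
      subst h5
      rcases z with _ | z
      · left; simp [dd]
      · right; exact dd_mid g (by omega) le_rfl

theorem ex_out {d : ℕ → Option (ℕ × Bool)} {f} {q r : ℕ} (h : Ex d f q r) :
    ∃ q', d q' = some (r, true) := by
  induction h with
  | right h => exact ⟨_, h⟩
  | left _ _ _ ih => exact ih

theorem ex_idem {k : ℕ} {g f} {q r y : ℕ} (h : ∃ q', dd k g q' = some (r, true))
    (h2 : Ex (dd k g) f r y) : y = r := by
  obtain ⟨q', h⟩ := h
  rcases dd_out h with h | h
  · cases h2 with
    | right h3 => rw [h] at h3; simp at h3; exact h3.symm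
    | left h3 _ _ => rw [h] at h3; simp at h3
  · cases h2 with
    | right h3 => rw [h] at h3; simp at h3
    | left h3 _ _ => rw [h] at h3; simp at h3

theorem ex_low {k : ℕ} {g f} {q r : ℕ} (hq : k < q) (hf : ∀ y, f q y → y = q)
    (h : Ex (dd k g) f q r) : r = q := by
  induction h with
  | right h =>
    rw [dd_gt g hq] at h
    simp at h
    exact h.2.symm
  | @left q p p' r h h2 _ ih =>
    rw [dd_gt g hq] at h
    simp at h
    obtain ⟨_, rfl⟩ := h
    obtain rfl := hf _ h2
    exact ih hq hf

theorem ex_mid {k : ℕ} {g f} {q r : ℕ} (h0 : 0 < q) (hq : q ≤ k) :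
    ¬ Ex (dd (k + 1) g) f q r := by
  intro h
  cases h with
  | right h => rw [dd_mid g h0 hq] at h; simp at h
  | left h _ _ => rw [dd_mid g h0 hq] at h; simp at h

theorem ex_zero {k : ℕ} {g f} {r : ℕ} (h : Ex (dd (k + 1) g) f 0 r) : r = k := by
  cases h with
  | right h => rw [dd_zero] at h; simp at h; exact h.symm
  | left h _ _ => rw [dd_zero] at h; simp at h

theorem ex_top {k : ℕ} {g f} {q r : ℕ} (hI : ∀ x z y, f x z → f z y → y = z)
    (hq : q = k + 1) (h : Ex (dd (k + 1) g) f q r) (hr : r ≤ k + 1) : f k 0 ∧ r = k := by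
  induction h with
  | right h => subst hq; rw [dd_top] at h; simp at h
  | @left q p z r h h2 h3 ih =>
    subst hq
    rw [dd_top] at h
    simp at h
    subst h
    rcases Nat.lt_trichotomy z (k + 1) with hz | hz | hz
    · rcases Nat.eq_zero_or_pos z with hz0 | hz0
      · subst hz0
        exact ⟨h2, ex_zero h3⟩
      · exact absurd h3 (ex_mid hz0 (by omega))
    · exact ih hz hr
    · have := ex_low hz (fun y hy => hI _ _ _ h2 hy) h3
      omega

theorem step_lem {k : ℕ} {g f} (hI : ∀ x z y, f x z → f z y → y = z) : ∀ s, k ≤ s →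
    (∀ i, P s i none (Ex (dd k g) f) → ∃ j, i ≤ j + 1 ∧ P s j none f) ∧
    (∀ i e e', e ≤ s → (∀ y, f e y → y = e) → Ex (dd k g) f e e' →
      P s i (some e') (Ex (dd k g) f) → ∃ j, i ≤ j + 1 ∧ P s j (some e) f) := by
  intro s
  induction s with
  | zero =>
    intro hk
    constructor
    · rintro i (h | ⟨h, _⟩)
      · exact ⟨0, by omega, P_zero_N 0 f⟩
      · exact ⟨0, by omega, P_zero_N 0 f⟩
    · rintro i e e' he _ _ ⟨h, _⟩
      exact ⟨0, by omega, rfl, by omega⟩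
  | succ s ih =>
    intro hk
    have hb := bB_pos s
    rcases Nat.lt_or_ge s k with hks | hks
    · obtain rfl : k = s + 1 := by omega
      have hZ : ∀ j, P s j (some s) (Ex (dd (s + 1) g) f) → j = 0 := by
        apply P_nokey_T
        · intro hs h; have := ex_zero h; omega
        · intro q r h1 h2; exact ex_mid h1 (by omega)
      constructor
      · rintro i (⟨_, h⟩ | ⟨j, e', rfl, h1, h2⟩)
        · refine ⟨0, ?_, P_zero_N _ f⟩
          rcases s with _ | s
          · have := (P_bd 0 _).1 _ h; simp [bB] at this; omega
          · have := P_nokey (s + 1) _ (fun h => by have := ex_zero h; omega)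
              (fun q r h1 h2 => ex_mid h1 h2) i h
            omega
        · have he := ((P_bd s _).2 _ _ h2).2
          obtain ⟨h3, rfl⟩ := ex_top hI rfl h1 (by omega)
          have := hZ j h2
          exact ⟨bB e' - 1, by omega, Or.inl ⟨by omega, (P_last_N e' f).2 h3⟩⟩
      · intro i e e' he hf hx hP
        rcases Nat.lt_or_ge s e with hse | hse
        · obtain rfl : e = s + 1 := by omega
          have he' := ((P_bd (s + 1) _).2 _ _ hP).2
          obtain ⟨h3, rfl⟩ := ex_top hI rfl hx he'
          rcases hP with ⟨_, h, _⟩ | ⟨j, rfl, h⟩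
          · omega
          · have := hZ j h
            exact ⟨bB e' - 1, by omega, Or.inl ⟨by omega, rfl, (P_last_N e' f).2 h3⟩⟩
        · obtain ⟨j0, hj0⟩ := P_ex s f e hse
          refine ⟨bB s + j0, ?_, Or.inr ⟨j0, rfl, hj0⟩⟩
          rcases hP with ⟨_, h, _⟩ | ⟨j, rfl, h⟩
          · omega
          · rcases Nat.eq_zero_or_pos e with h0 | h0
            · subst h0
              obtain rfl := ex_zero hx
              have := hZ j h
              omega
            · exact absurd hx (ex_mid h0 hse)
    · obtain ⟨ihN, ihT⟩ := ih hks
      constructor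
      · rintro i (⟨_, h⟩ | ⟨j, e', rfl, h1, h2⟩)
        · obtain ⟨j, hj, hP⟩ := ihN i h
          exact ⟨j, hj, Or.inl ⟨(P_bd s f).1 _ hP, hP⟩⟩
        · have he := ((P_bd s _).2 _ _ h2).2
          have hsk : k < s + 1 := by omega
          cases h1 with
          | right h => 
            rw [dd_gt g hsk] at h
            simp at h
            omega
          | @left _ p z _ h h3 h4 =>
            rw [dd_gt g hsk] at h
            simp at h
            obtain ⟨_, rfl⟩ := h
            have hz : ∀ y, f z y → y = z := fun y hy => hI _ _ _ h3 hy
            rcases Nat.lt_or_ge s z with hsz | hsz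
            · have := ex_low (by omega) hz h4
              omega
            · obtain ⟨j', hj', hP⟩ := ihT j z e' hsz hz h4 h2
              exact ⟨bB s + j', by omega, Or.inr ⟨j', z, rfl, h3, hP⟩⟩
      · intro i e e' he hf hx hP
        rcases Nat.lt_or_ge s e with hse | hse
        · obtain rfl : e = s + 1 := by omega
          obtain rfl := ex_low (by omega) hf hx
          rcases hP with ⟨_, _, h⟩ | ⟨j, rfl, h⟩
          · obtain ⟨j, hj, hP⟩ := ihN i h
            exact ⟨j, hj, Or.inl ⟨(P_bd s f).1 _ hP, rfl, hP⟩⟩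
          · have := ((P_bd s _).2 _ _ h).2; omega
        · rcases hP with ⟨_, h, _⟩ | ⟨j, rfl, h⟩
          · obtain ⟨j0, hj0⟩ := P_ex s f e hse
            exact ⟨bB s + j0, by omega, Or.inr ⟨j0, rfl, hj0⟩⟩
          · obtain ⟨j', hj', hP⟩ := ihT j e e' hse hf hx h
            exact ⟨bB s + j', by omega, Or.inr ⟨j', rfl, hP⟩⟩

theorem dd_upd {k s : ℕ} (hk : k ≤ s) (g b) {q : ℕ} (hq : q ≤ s) :
    dd k (Function.update g (s + 1) b) q = dd k g q := by
  have : q ≠ s + 1 := by omega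
  simp [dd, Function.update_of_ne this]

theorem dd_upd_self {k s : ℕ} (hk : k ≤ s) (g b) :
    dd k (Function.update g (s + 1) (some b)) (s + 1) = some (s + 1, b) := by
  rw [dd_gt _ (by omega)]; simp

theorem fwd (s : ℕ) :
    (∀ i, i + 1 < bB s → ∃ k g, k ≤ s ∧ ∀ d : ℕ → Option (ℕ × Bool),
      (∀ q, q ≤ s → d q = dd k g q) → ∀ f, P s i none f → P s (i + 1) none (Ex d f)) ∧
    (∀ i, i + 1 < tT s → ∃ k g, k ≤ s ∧ ∀ d : ℕ → Option (ℕ × Bool),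
      (∀ q, q ≤ s → d q = dd k g q) → ∀ f e, P s i (some e) f →
        ∃ e', Ex d f e e' ∧ P s (i + 1) (some e') (Ex d f)) := by
  induction s with
  | zero =>
    constructor
    · intro i hi
      refine ⟨0, fun _ => none, le_rfl, fun d hd f _ => ?_⟩
      simp only [bB] at hi
      obtain rfl : i = 0 := by omega
      refine Or.inr ⟨rfl, Ex.right ?_⟩
      rw [hd 0 le_rfl]; simp [dd]
    · intro i hi; simp only [tT] at hi; omega
  | succ s ih =>
    obtain ⟨ihN, ihT⟩ := ih
    have hb := bB_pos s
    have htop : ∀ d : ℕ → Option (ℕ × Bool),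
        (∀ q, q ≤ s + 1 → d q = dd (s + 1) (fun _ => none) q) → ∀ f,
        P s (bB s - 1) none f → Ex d f (s + 1) s := by
      intro d hd f h
      refine Ex.left ?_ ((P_last_N s f).1 h) (Ex.right ?_)
      · rw [hd _ le_rfl, dd_top]
      · rw [hd _ (by omega), dd_zero]
    rw [bB_succ, tT_succ]
    constructor
    · intro i hi
      rcases Nat.lt_trichotomy (i + 1) (bB s) with h | h | h
      · obtain ⟨k, g, hk, H⟩ := ihN i h
        refine ⟨k, Function.update g (s + 1) none, by omega, fun d hd f hP => ?_⟩
        rcases hP with ⟨_, hP⟩ | ⟨j, e, h2, _⟩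
        · exact Or.inl ⟨h, H d (fun q hq => by rw [hd q (by omega), dd_upd hk _ _ hq]) f hP⟩
        · omega
      · refine ⟨s + 1, fun _ => none, le_rfl, fun d hd f hP => ?_⟩
        rcases hP with ⟨_, hP⟩ | ⟨j, e, h2, _⟩
        · obtain rfl : i = bB s - 1 := by omega
          exact Or.inr ⟨0, s, by omega, htop d hd f hP, P_zero_T s _⟩
        · omega
      · obtain ⟨k, g, hk, H⟩ := ihT (i - bB s) (by omega)
        refine ⟨k, Function.update g (s + 1) (some false), by omega, fun d hd f hP => ?_⟩
        rcases hP with ⟨_, hP⟩ | ⟨j, e, rfl, h2, h3⟩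
        · omega
        · rw [Nat.add_sub_cancel_left] at H
          obtain ⟨e', h4, h5⟩ := H d (fun q hq => by rw [hd q (by omega), dd_upd hk _ _ hq]) f e h3
          refine Or.inr ⟨j + 1, e', by omega, Ex.left ?_ h2 h4, h5⟩
          rw [hd _ le_rfl, dd_upd_self hk]
    · intro i hi
      rcases Nat.lt_trichotomy (i + 1) (bB s) with h | h | h
      · obtain ⟨k, g, hk, H⟩ := ihN i h
        refine ⟨k, Function.update g (s + 1) (some true), by omega, fun d hd f e hP => ?_⟩
        rcases hP with ⟨_, rfl, hP⟩ | ⟨j, h2, _⟩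
        · refine ⟨s + 1, Ex.right ?_, Or.inl ⟨h, rfl,
            H d (fun q hq => by rw [hd q (by omega), dd_upd hk _ _ hq]) f hP⟩⟩
          rw [hd _ le_rfl, dd_upd_self hk]
        · omega
      · refine ⟨s + 1, fun _ => none, le_rfl, fun d hd f e hP => ?_⟩
        rcases hP with ⟨_, rfl, hP⟩ | ⟨j, h2, _⟩
        · obtain rfl : i = bB s - 1 := by omega
          exact ⟨s, htop d hd f hP, Or.inr ⟨0, by omega, P_zero_T s _⟩⟩
        · omega
      · obtain ⟨k, g, hk, H⟩ := ihT (i - bB s) (by omega)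
        refine ⟨k, Function.update g (s + 1) none, by omega, fun d hd f e hP => ?_⟩
        rcases hP with ⟨_, _, hP⟩ | ⟨j, rfl, h3⟩
        · omega
        · rw [Nat.add_sub_cancel_left] at H
          obtain ⟨e', h4, h5⟩ := H d (fun q hq => by rw [hd q (by omega), dd_upd hk _ _ hq]) f e h3
          exact ⟨e', h4, Or.inr ⟨j + 1, by omega, h5⟩⟩

/-- alphabet -/
abbrev Al (s : ℕ) : Type := Fin (s + 1) × (Fin (s + 1) → Option Bool)

def gg {s : ℕ} (g : Fin (s + 1) → Option Bool) (q : ℕ) : Option Bool :=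
  if h : q < s + 1 then g ⟨q, h⟩ else none

/-- the automaton, on states `0, …, s` -/
def M (s : ℕ) : TwoDFA (Al s) ℕ where
  init := s
  δ := fun q x => match x with
    | .lend => if q = s then some (s, true) else none
    | .rend => none
    | .letter a => dd a.1 (gg a.2) q
  F := {0}

theorem M_closed (s : ℕ) (q : ℕ) (x r d) (hq : q < s + 1) (h : (M s).δ q x = some (r, d)) :
    r < s + 1 := by
  cases x with
  | lend =>
    simp only [M] at h
    split_ifs at h
    simp at h; omega
  | rend => simp [M] at h
  | letter a =>
    simp only [M] at h
    have ha := a.1.2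
    simp only [dd] at h
    split_ifs at h
    · simp at h; omega
    · simp at h; omega
    · simp at h; omega
    · simp at h; omega

theorem sy_M (s : ℕ) (w : List (Al s)) (p : ℕ) (a) (h : w[p]? = some a) :
    sy (M s) w (p + 1) = dd a.1 (gg a.2) := by
  funext q
  simp [sy, h, M]

theorem fr0 (s : ℕ) (w) (q r : ℕ) : Fr (M s) w 0 q r ↔ q = s ∧ r = s := by
  constructor
  · intro h
    cases h with
    | right h =>
      simp only [sy, M] at h
      split_ifs at h with h1
      simp at h
      exact ⟨h1, h.symm⟩
    | left _ h _ => exact h.elim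
  · rintro ⟨rfl, rfl⟩
    exact Ex.right (by simp [sy, M])

theorem lower (s : ℕ) (hs : 0 < s) (w : List (Al s)) : ∀ p, p ≤ w.length → 
    (∀ x z y, Fr (M s) w p x z → Fr (M s) w p z y → y = z) ∧
    ∀ e, Arr (M s) w p e → e ≤ s ∧ (∀ y, Fr (M s) w p e y → y = e) ∧
      ∀ i, P s i (some e) (Fr (M s) w p) → i ≤ p := by
  intro p
  induction p with
  | zero =>
    intro _
    constructor
    · intro x z y h1 h2
      rw [fr0] at h1 h2
      omega
    · intro e he
      obtain ⟨_, rfl⟩ := (fr0 _ _ _ _).1 he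
      refine ⟨le_rfl, fun y hy => ((fr0 _ _ _ _).1 hy).2, fun i hi => ?_⟩
      have := P_nokey_T _ _ (fun _ h => by have := (fr0 _ _ _ _).1 h; omega)
        (fun q r h1 h2 h => by have := (fr0 _ _ _ _).1 h; omega) i hi
      omega
  | succ p ih =>
    intro hp
    obtain ⟨hI, hA⟩ := ih (by omega)
    have hw : w[p]? = some (w[p]'(by omega)) := List.getElem?_eq_getElem (by omega)
    have hfr : Fr (M s) w (p + 1) =
        Ex (dd (w[p]'(by omega)).1 (gg (w[p]'(by omega)).2)) (Fr (M s) w p) := by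
      rw [← sy_M s w p _ hw]; rfl
    have hk : ((w[p]'(by omega)).1 : ℕ) ≤ s := by omega
    constructor
    · intro x z y h1 h2
      rw [hfr] at h1 h2
      exact ex_idem (q := 0) (ex_out h1) h2
    · rintro e' ⟨e, he, hx⟩
      obtain ⟨h1, h2, h3⟩ := hA e he
      rw [hfr] at hx
      rw [hfr]
      refine ⟨?_, fun y hy => ex_idem (q := 0) (ex_out hx) hy, fun i hi => ?_⟩
      · obtain ⟨q', hq'⟩ := ex_out hx
        have hle : ∀ q r, Ex (dd (w[p]'(by omega)).1 (gg (w[p]'(by omega)).2)) (Fr (M s) w p) q r →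
            r ≤ s := by
          intro q r h
          obtain ⟨q', hq'⟩ := ex_out h
          simp only [dd] at hq'
          split_ifs at hq'
          · rcases Nat.lt_or_ge q' (s + 1) with h5 | h5
            · simp at hq'; omega
            · have : ¬ q' < s + 1 := by omega
              simp [gg, this] at hq'
          all_goals first | (simp at hq'; done) | (simp at hq'; omega)
        exact hle _ _ hx
      · obtain ⟨j, hj, hP⟩ := (step_lem hI s hk).2 i e e' h1 h2 hx hi
        have := h3 j hP
        omega

theorem upper (s : ℕ) : ∃ w : List (Al s), w.length = tT s - 1 ∧
    ∀ p, p ≤ w.length → ∃ e, Arr (M s) w p e ∧ P s p (some e) (Fr (M s) w p) := by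
  have h : ∀ i : Fin (tT s - 1), ∃ a : Al s, ∀ f e, P s i (some e) f →
      ∃ e', Ex (dd a.1 (gg a.2)) f e e' ∧ P s (i + 1) (some e') (Ex (dd a.1 (gg a.2)) f) := by
    intro i
    obtain ⟨k, g, hk, H⟩ := (fwd s).2 i (by omega)
    refine ⟨(⟨k, by omega⟩, fun q => g q), fun f e hP => H _ (fun q hq => ?_) f e hP⟩
    have : q < s + 1 := by omega
    simp [dd, gg, this]
  choose a ha using h
  refine ⟨List.ofFn a, by simp, ?_⟩
  intro p
  induction p with
  | zero => intro _; exact ⟨s, (fr0 _ _ _ _).2 ⟨rfl, rfl⟩, P_zero_T s _⟩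
  | succ p ih =>
    intro hp
    obtain ⟨e, he, hP⟩ := ih (by omega)
    simp only [List.length_ofFn] at hp
    obtain ⟨e', h1, h2⟩ := ha ⟨p, by omega⟩ _ _ hP
    have hw : (List.ofFn a)[p]? = some (a ⟨p, by omega⟩) := by
      rw [List.getElem?_eq_getElem (by simp; omega)]
      simp
    have hfr : Fr (M s) (List.ofFn a) (p + 1) =
        Ex (dd (a ⟨p, by omega⟩).1 (gg (a ⟨p, by omega⟩).2)) (Fr (M s) (List.ofFn a) p) := by
      rw [← sy_M s _ p _ hw]; rfl
    refine ⟨e', ⟨e, he, ?_⟩, ?_⟩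
    · rw [hfr]; exact h1
    · rw [hfr]; exact h2

end Sh

/-- For every `n ≥ 2` there exists a 2DFA with `n` states, accepting at least one string,
such that the length of the shortest string it accepts is exactly `3 · 2^(n−2) − 1`. -/
theorem exists_2dfa_shortest_eq_three_pow (n : ℕ) (hn : 2 ≤ n) :
    ∃ (α σ : Type) (_ : Fintype α) (_ : Fintype σ) (A : TwoDFA α σ),
      Fintype.card σ = n ∧
      (∃ w, A.Accepts w ∧ w.length = 3 * 2 ^ (n - 2) - 1) ∧
      (∀ w, A.Accepts w → 3 * 2 ^ (n - 2) - 1 ≤ w.length) := by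
  obtain ⟨m, rfl⟩ : ∃ m, n = m + 2 := ⟨n - 2, by omega⟩
  obtain ⟨A, hA⟩ := Sh.transfer (Sh.M (m + 1)) (m + 2) (by simp [Sh.M])
    (fun q x r d hq h => Sh.M_closed (m + 1) q x r d hq h)
  have hacc := fun w => Sh.accepts_iff (Sh.M (m + 1)) w (fun q => rfl)
  refine ⟨Sh.Al (m + 1), Fin (m + 2), inferInstance, inferInstance, A, by simp, ?_, ?_⟩
  · obtain ⟨w, hw, H⟩ := Sh.upper (m + 1)
    refine ⟨w, (hA w).2 ((hacc w).2 ?_), by rw [hw]; rfl⟩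
    obtain ⟨e, h1, h2⟩ := H w.length le_rfl
    have h3 := h2
    rw [hw, Sh.P_last_T] at h3
    subst h3
    exact ⟨0, rfl, h1⟩
  · intro w h
    obtain ⟨q, hq, h⟩ := (hacc w).1 ((hA w).1 h)
    obtain rfl : q = 0 := hq
    exact ((Sh.lower (m + 1) (by omega) w w.length le_rfl).2 0 h).2.2 _
      ((Sh.P_last_T (m + 1) _ 0).2 rfl)
end

section
/- For each n ≥ 2, there exist a finite alphabet Σₙ, a partial transition function δₙ : {1,…,n} × Σₙ ⇀ {1,…,n} × {−1,+1}, and a string wₙ ∈ Σₙ* of length 3·2^{n−2} − 1, such that: (1) for every position i of wₙ, the computation determined by δₙ that starts at position i of wₙ in state n eventually leaves the string wₙ by a transition from its rightmost symbol moving to the right in state 1; and (2) for every non-empty string u ∈ Σₙ*, if there exists a position of u such that the computation determined by δₙ starting at that position in state n eventually leaves u by a transition from its rightmost symbol moving to the right in state 1, then |u| ≥ |wₙ|. -/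
/-- One step of the computation determined by a partial transition function
`δ : σ × α ⇀ σ × {−1,+1}` (the Boolean direction `true` meaning `+1` and `false`
meaning `−1`) on a string `u = b₁ … b_m` (with its positions `1, …, m` modelled
0-based as `0, …, m − 1`): from a configuration `c = (state, position)` with the
position inside `u`, the automaton reads the symbol at the current position,
changes state and moves one position in the indicated direction; at an undefined
transition, or off the string, the computation halts. -/
def StepOn {α σ : Type} (δ : σ → α → Option (σ × Bool)) (u : List α)
    (c c' : σ × ℤ) : Prop :=
  0 ≤ c.2 ∧ ∃ a, u[c.2.toNat]? = some a ∧
    ∃ r d, δ c.1 a = some (r, d) ∧ c' = (r, c.2 + if d then 1 else -1)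

/-- The computation determined by `δ`, started on the string `u` at (0-based) position
`i` in state `q`, eventually leaves `u` by a transition from its rightmost symbol moving
to the right in state `s`, i.e. it eventually reaches position `|u|` (just beyond the
rightmost symbol, which is the only way to get there) in state `s`. -/
def LeavesRightIn {α σ : Type} (δ : σ → α → Option (σ × Bool)) (u : List α)
    (q : σ) (i : ℕ) (s : σ) : Prop :=
  Relation.ReflTransGen (StepOn δ u) (q, (i : ℤ)) (s, (u.length : ℤ))

open Relation

theorem lift_reach {α σ α' σ' : Type} (δ : σ → α → Option (σ × Bool))
    (δ' : σ' → α' → Option (σ' × Bool)) (g : σ → σ') (f : α → α')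
    (h : ∀ q a r d, δ q a = some (r, d) → δ' (g q) (f a) = some (g r, d))
    (x v : List _) (y : List _) (c c' : σ × ℤ)
    (hr : ReflTransGen (StepOn δ v) c c') :
    ReflTransGen (StepOn δ' (x ++ v.map f ++ y)) (g c.1, c.2 + x.length)
      (g c'.1, c'.2 + x.length) := by
  refine ReflTransGen.lift (p := StepOn δ' (x ++ v.map f ++ y))
    (fun c : σ × ℤ => (g c.1, c.2 + (x.length : ℤ))) ?_ _ _ hr
  rintro ⟨q, i⟩ c' ⟨h0, a, ha, r, d, hd, rfl⟩
  simp only at h0 ha hd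
  lift i to ℕ using h0
  refine ⟨by positivity, f a, ?_, g r, d, h _ _ _ _ hd, ?_⟩
  · have : ((i : ℤ) + (x.length : ℤ)).toNat = x.length + i := by omega
    simp only [this, List.append_assoc]
    rw [List.getElem?_append_right (by omega)]
    simp only [Int.toNat_natCast] at ha
    have hi : i < v.length := (List.getElem?_eq_some_iff.1 ha).1
    rw [List.getElem?_append_left (by simp; omega)]
    simp [ha]
  · simp only [Prod.mk.injEq, true_and]; ring

theorem last_none {β : Type} (u : List (Option β)) :
    ∃ v : List β, u = v.map some ∨ ∃ x, u = x ++ none :: v.map some := by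
  induction u with
  | nil => exact ⟨[], Or.inl rfl⟩
  | cons a u ih =>
    obtain ⟨v, h | ⟨x, h⟩⟩ := ih
    · cases a with
      | none => exact ⟨v, Or.inr ⟨[], by simp [h]⟩⟩
      | some b => exact ⟨b :: v, Or.inl (by simp [h])⟩
    · exact ⟨v, Or.inr ⟨a :: x, by simp [h]⟩⟩

theorem stuck {α σ : Type} {δ : σ → α → Option (σ × Bool)} {u : List α} {c c' : σ × ℤ}
    (h : ReflTransGen (StepOn δ u) c c') (hc : c.2 < 0 ∨ (u.length : ℤ) ≤ c.2) : c = c' := by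
  rcases h.cases_head with h | ⟨d, ⟨h0, a, ha, _⟩, _⟩
  · exact h
  · have := (List.getElem?_eq_some_iff.1 ha).1
    omega

/-- the extended transition function -/
def ext {α : Type} (m : ℕ) (δ : ℕ → α → Option (ℕ × Bool)) :
    ℕ → Option (α × Bool) → Option (ℕ × Bool)
  | q, none => if q = m + 2 then some (m + 1, false) else if q = 0 then some (m + 1, true) else none
  | q, some (a, b) => if q = m + 2 then some (m + 2, b) else δ q a

/-- closedness -/
def Closed {α : Type} (m : ℕ) (δ : ℕ → α → Option (ℕ × Bool)) : Prop :=
  ∀ q a r d, δ q a = some (r, d) → q ≤ m + 1 ∧ r ≤ m + 1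

theorem seg {α : Type} (m : ℕ) (δ : ℕ → α → Option (ℕ × Bool)) (hcl : Closed m δ)
    (x y u : List (Option (α × Bool))) (v : List (α × Bool)) (hv : v ≠ [])
    (hu : u = x ++ v.map some ++ y)
    (hx : x = [] ∨ ∃ x', x = x' ++ [none]) (hy : y = [] ∨ ∃ y', y = none :: y')
    (c : ℕ × ℤ) (hr : ReflTransGen (StepOn (ext m δ) u) c (0, (u.length : ℤ))) :
    (∀ q (i : ℕ), c = (q, (x.length : ℤ) + i) → q ≤ m + 1 → i < v.length →
      LeavesRightIn δ (v.map Prod.fst) q i 0 ∨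
      ∃ i < v.length, LeavesRightIn δ (v.map Prod.fst) (m + 1) i 0) ∧
    (∀ q, c = (q, (x.length : ℤ) - 1) → q ≤ m + 1 → 
      ∃ i < v.length, LeavesRightIn δ (v.map Prod.fst) (m + 1) i 0) := by
  have hlen : u.length = x.length + v.length + y.length := by simp [hu]; omega
  have hv' : 0 < v.length := List.length_pos_iff.2 hv
  induction hr using ReflTransGen.head_induction_on with
  | refl =>
    constructor
    · intro q i h1 _ h2
      simp only [Prod.mk.injEq] at h1
      omega
    · intro q h1 _
      simp only [Prod.mk.injEq] at h1
      omega
  | head hs hr ih =>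
    obtain ⟨ih1, ih2⟩ := ih
    obtain ⟨h0, s, hsym, r, d, hd, rfl⟩ := hs
    constructor
    · rintro q i rfl hq hi
      simp only at h0 hsym hd ih1 ih2 hr
      have e : ((x.length : ℤ) + (i : ℤ)).toNat = x.length + i := by omega
      have hsv : s = some v[i] := by
        rw [e, hu, List.append_assoc, List.getElem?_append_right (by omega),
          List.getElem?_append_left (by simp; omega)] at hsym
        simp [hi] at hsym
        exact hsym.symm
      subst hsv
      have hd' : δ q v[i].1 = some (r, d) := by
        simp only [ext] at hd
        rwa [if_neg (by omega)] at hd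
      have hr1 := (hcl _ _ _ _ hd').2
      have hstep : StepOn δ (v.map Prod.fst) (q, (i : ℤ)) (r, (i : ℤ) + if d then 1 else -1) :=
        ⟨by simp, v[i].1, by simp [hi], r, d, hd', rfl⟩
      cases d with
      | true =>
        simp only [if_true] at *
        by_cases hi1 : i + 1 < v.length
        · rcases ih1 r (i + 1) (by simp; ring) hr1 hi1 with h | h
          · left
            exact ReflTransGen.head hstep (by simpa [LeavesRightIn] using h)
          · exact Or.inr h
        · left
          have hi2 : i + 1 = v.length := by omega
          have r0 : r = 0 := by
            rcases hy with rfl | ⟨y', rfl⟩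
            · have := stuck hr (by right; simp at *; omega)
              simp at this
              exact this.1
            · rcases hr.cases_head with h | ⟨c2, ⟨_, a, ha, r2, d2, hd2, _⟩, _⟩
              · simp at h; exact h.1
              · have e : ((x.length : ℤ) + (i : ℤ) + 1).toNat = (x ++ v.map some).length := by
                  simp; omega
                simp only [e] at ha
                rw [hu] at ha
                simp at ha
                subst ha
                simp only [ext] at hd2
                by_contra hne
                rw [if_neg (by omega), if_neg hne] at hd2
                cases hd2
          subst r0
          refine ReflTransGen.single ?_
          have : (((v.map Prod.fst).length : ℕ) : ℤ) = (i : ℤ) + 1 := by simp; omega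
          rw [this]; exact hstep
      | false =>
        simp only [Bool.false_eq_true, if_false] at *
        rcases i with _ | i
        · right
          exact ih2 r (by simp; rfl) hr1
        · rcases ih1 r i (by simp; ring) hr1 (by omega) with h | h
          · left
            exact ReflTransGen.head hstep (by simpa [LeavesRightIn] using h)
          · exact Or.inr h
    · rintro q rfl hq
      simp only at h0 hsym hd ih1 ih2 hr
      rcases hx with rfl | ⟨x', rfl⟩
      · simp at h0
      · have e : ((((x' ++ [none] : List (Option (α × Bool))).length : ℕ) : ℤ) - 1).toNat
            = x'.length := by simp
        rw [e, hu] at hsym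
        simp at hsym
        subst hsym
        simp only [ext] at hd
        rw [if_neg (by omega)] at hd
        split_ifs at hd
        simp only [Option.some.injEq, Prod.mk.injEq] at hd
        obtain ⟨rfl, rfl⟩ := hd
        rcases ih1 (m + 1) 0 (by simp) le_rfl hv' with h | h
        · exact ⟨0, hv', h⟩
        · exact h

theorem ext_le {α : Type} {m : ℕ} {δ : ℕ → α → Option (ℕ × Bool)} (hcl : Closed m δ)
    {q a r d} (h : ext m δ q a = some (r, d)) (hq : q ≤ m + 1) : r ≤ m + 1 := by
  rcases a with _ | ⟨a, b⟩ <;> simp only [ext] at h <;> rw [if_neg (by omega)] at h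
  · split_ifs at h
    simp at h; omega
  · exact (hcl _ _ _ _ h).2

theorem first_hit {α : Type} (m : ℕ) (δ : ℕ → α → Option (ℕ × Bool))
    (u : List (Option (α × Bool)))
    (c : ℕ × ℤ) (hr : ReflTransGen (StepOn (ext m δ) u) c (0, (u.length : ℤ)))
    (hc : c.1 = m + 2) : ∃ k : ℕ, u[k]? = some none ∧
      ReflTransGen (StepOn (ext m δ) u) (m + 1, (k : ℤ) - 1) (0, (u.length : ℤ)) := by
  induction hr using ReflTransGen.head_induction_on with
  | refl => simp at hc
  | head hs hr ih =>
    obtain ⟨h0, s, hsym, r, d, hd, rfl⟩ := hs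
    rw [hc] at hd
    rcases s with _ | ⟨a, b⟩
    · simp [ext] at hd
      obtain ⟨rfl, rfl⟩ := hd
      refine ⟨_, hsym, ?_⟩
      rw [Int.toNat_of_nonneg h0]
      exact hr
    · simp [ext] at hd
      exact ih hd.1.symm

theorem last_hit {α : Type} (m : ℕ) (δ : ℕ → α → Option (ℕ × Bool)) (hcl : Closed m δ)
    (x u : List (Option (α × Bool))) (hx : x.length < u.length) (hn : u[x.length]? = some none)
    (c : ℕ × ℤ) (hr : ReflTransGen (StepOn (ext m δ) u) c (0, (u.length : ℤ)))
    (hc : c.1 ≤ m + 1) (hc2 : c.2 ≤ x.length) :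
      ReflTransGen (StepOn (ext m δ) u) (m + 1, (x.length : ℤ) + 1) (0, (u.length : ℤ)) := by
  induction hr using ReflTransGen.head_induction_on with
  | refl => simp at hc2; omega
  | @head c c' hs hr ih =>
    obtain ⟨h0, s, hsym, r, d, hd, rfl⟩ := hs
    by_cases h : c.2 + (if d then 1 else -1) ≤ x.length
    · exact ih (ext_le hcl hd hc) h
    · have hd1 : d = true := by
        by_contra hd1
        simp [hd1] at h
        omega
      subst hd1
      simp at h
      have e : c.2 = x.length := by omega
      rw [e] at hsym hr
      simp [hn] at hsym
      subst hsym
      simp only [ext] at hd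
      rw [if_neg (by omega)] at hd
      split_ifs at hd
      simp at hd
      subst hd
      simpa using hr

theorem lower {α : Type} (m L : ℕ) (δ : ℕ → α → Option (ℕ × Bool)) (hcl : Closed m δ)
    (hL : ∀ (v : List α) (i : ℕ), i < v.length → LeavesRightIn δ v (m + 1) i 0 → L ≤ v.length)
    (u : List (Option (α × Bool))) (i : ℕ) (h : LeavesRightIn (ext m δ) u (m + 2) i 0) :
    2 * L + 1 ≤ u.length := by
  obtain ⟨k, hk, hkr⟩ := first_hit m δ u _ h rfl
  have hkl := (List.getElem?_eq_some_iff.1 hk).1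
  have hsplit : u = u.take k ++ none :: u.drop (k + 1) := by
    have : u[k] = none := (List.getElem?_eq_some_iff.1 hk).2
    rw [← this, List.getElem_cons_drop, List.take_append_drop]
  -- left part
  have hleft : L ≤ k := by
    have hk0 : k ≠ 0 := by
      rintro rfl
      have := stuck hkr (by left; simp)
      simp at this
    have key : ∀ (x : List (Option (α × Bool))) (v : List (α × Bool)),
        (x = [] ∨ ∃ x', x = x' ++ [none]) → u.take k = x ++ v.map some → v ≠ [] → L ≤ k := by
      intro x v hx hxv hv
      have hlen : k = x.length + v.length := by
        have := congrArg List.length hxv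
        simp at this
        omega
      have hv' : 0 < v.length := List.length_pos_iff.2 hv
      have := (seg m δ hcl x (none :: u.drop (k + 1)) u v hv (by rw [← hxv]; exact hsplit) hx
        (Or.inr ⟨_, rfl⟩) _ hkr).1 (m + 1) (v.length - 1) (by simp; omega) le_rfl (by omega)
      have : ∃ i < v.length, LeavesRightIn δ (v.map Prod.fst) (m + 1) i 0 := by
        rcases this with h | h
        · exact ⟨_, by omega, h⟩
        · exact h
      obtain ⟨j, hj, hjr⟩ := this
      have := hL _ j (by simpa using hj) hjr
      simp at this
      omega
    obtain ⟨v, hv | ⟨x, hv⟩⟩ := last_none (u.take k)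
    · refine key [] v (Or.inl rfl) (by simpa using hv) ?_
      rintro rfl
      have := congrArg List.length hv
      simp only [List.length_take, List.map_nil, List.length_nil] at this
      omega
    · refine key (x ++ [none]) v (Or.inr ⟨_, rfl⟩) (by simpa using hv) ?_
      rintro rfl
      have hlen := congrArg List.length hv
      simp at hlen
      rcases hkr.cases_head with h | ⟨c2, ⟨_, a, ha, r2, d2, hd2, _⟩, _⟩
      · simp at h
      · have e : ((k : ℤ) - 1).toNat = x.length := by omega
        simp only [e] at ha
        rw [hsplit, hv] at ha
        simp at ha
        subst ha
        simp [ext] at hd2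
  obtain ⟨v, hv | ⟨x, hv⟩⟩ := last_none u
  · rw [hv] at hk
    simp at hk
  · have hlen : u.length = x.length + 1 + v.length := by simp [hv]; omega
    have hkx : k ≤ x.length := by
      by_contra hne
      rw [hv, List.getElem?_append_right (by omega)] at hk
      obtain ⟨j, hj⟩ : ∃ j, k - x.length = j + 1 := ⟨k - x.length - 1, by omega⟩
      rw [hj] at hk
      simp at hk
    have hrr := last_hit m δ hcl x u (by omega) (by simp [hv]) _ hkr le_rfl (by simp; omega)
    have hv0 : v ≠ [] := by
      rintro rfl
      have := stuck hrr (by right; simp at hlen; simp; omega)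
      simp at this
    have hv' : 0 < v.length := List.length_pos_iff.2 hv0
    have := (seg m δ hcl (x ++ [none]) [] u v hv0 (by simp [hv]) (Or.inr ⟨_, rfl⟩)
        (Or.inl rfl) _ hrr).1 (m + 1) 0 (by simp) le_rfl hv'
    have : ∃ i < v.length, LeavesRightIn δ (v.map Prod.fst) (m + 1) i 0 := by
      rcases this with h | h
      · exact ⟨_, hv', h⟩
      · exact h
    obtain ⟨j, hj, hjr⟩ := this
    have := hL _ j (by simpa using hj) hjr
    simp at this
    omega

theorem upper {α : Type} (m : ℕ) (δ : ℕ → α → Option (ℕ × Bool)) (hcl : Closed m δ)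
    (w : List α) (hw : 0 < w.length)
    (h : ∀ i : ℕ, i < w.length → LeavesRightIn δ w (m + 1) i 0)
    (u : List (Option (α × Bool)))
    (hu : u = w.map (fun a => some (a, true)) ++ none :: w.map (fun a => some (a, false)))
    (i : ℕ) (hi : i < u.length) : LeavesRightIn (ext m δ) u (m + 2) i 0 := by
  have hlen : u.length = 2 * w.length + 1 := by simp [hu]; omega
  have hext : ∀ b : Bool, ∀ q a r d, δ q a = some (r, d) →
      ext m δ (id q) ((fun a => some (a, b)) a) = some (id r, d) := by
    intro b q a r d hd
    have := (hcl _ _ _ _ hd).1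
    simp only [ext, id]
    rw [if_neg (by omega)]; exact hd
  have hmid : u[w.length]? = some none := by simp [hu]
  have A : ReflTransGen (StepOn (ext m δ) u) (m + 2, (w.length : ℤ)) (0, (u.length : ℤ)) := by
    refine ReflTransGen.head (b := (m + 1, (w.length : ℤ) - 1))
      ⟨by simp, none, by simpa using hmid, m + 1, false, by simp [ext], by simp; rfl⟩ ?_
    have h1 := lift_reach δ (ext m δ) id _ (hext true) [] w
      (none :: w.map (fun a => some (a, false))) _ _ (h (w.length - 1) (by omega))
    simp only [List.nil_append, ← hu, id, List.length_nil, Nat.cast_zero, add_zero] at h1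
    have e : ((w.length - 1 : ℕ) : ℤ) = (w.length : ℤ) - 1 := by omega
    rw [e] at h1
    refine h1.trans ?_
    refine ReflTransGen.head (b := (m + 1, (w.length : ℤ) + 1))
      ⟨by simp, none, by simpa using hmid, m + 1, true, by simp [ext], by simp⟩ ?_
    have h2 := lift_reach δ (ext m δ) id _ (hext false)
      (w.map (fun a => some (a, true)) ++ [none]) w [] _ _ (h 0 hw)
    have e2 : (w.map (fun a => some (a, true)) ++ [none]) ++ w.map (fun a => some (a, false)) ++ []
      = u := by simp [hu]
    rw [e2] at h2
    have e3 : (u.length : ℤ) = (w.length : ℤ) + ((w.length : ℤ) + 1) := by omega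
    rw [e3]
    simpa using h2
  have B : ∀ j : ℕ, j ≤ w.length →
      ReflTransGen (StepOn (ext m δ) u) (m + 2, (w.length : ℤ) - j) (m + 2, (w.length : ℤ)) := by
    intro j
    induction j with
    | zero => intro _; simpa using ReflTransGen.refl
    | succ j ih =>
      intro hj
      refine ReflTransGen.head ?_ (ih (by omega))
      have e : ((w.length : ℤ) - ((j + 1 : ℕ) : ℤ)).toNat = w.length - (j + 1) := by omega
      refine ⟨by simp only; omega, some (w[w.length - (j + 1)], true), ?_, m + 2, true, by simp [ext], ?_⟩
      · simp only [e]
        rw [hu, List.getElem?_append_left (by simp; omega)]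
        simp
      · simp; ring
  have C : ∀ j : ℕ, j ≤ w.length →
      ReflTransGen (StepOn (ext m δ) u) (m + 2, (w.length : ℤ) + j) (m + 2, (w.length : ℤ)) := by
    intro j
    induction j with
    | zero => intro _; simpa using ReflTransGen.refl
    | succ j ih =>
      intro hj
      refine ReflTransGen.head ?_ (ih (by omega))
      have e : ((w.length : ℤ) + ((j + 1 : ℕ) : ℤ)).toNat = w.length + (j + 1) := by omega
      refine ⟨by simp only; omega, some (w[j], false), ?_, m + 2, false, by simp [ext], ?_⟩
      · simp only [e]
        rw [hu, List.getElem?_append_right (by simp)]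
        simp
      · simp; ring
  by_cases hiw : i ≤ w.length
  · have := B (w.length - i) (by omega)
    have e : (w.length : ℤ) - ((w.length - i : ℕ) : ℤ) = i := by omega
    rw [e] at this
    exact this.trans A
  · have := C (i - w.length) (by omega)
    have e : (w.length : ℤ) + ((i - w.length : ℕ) : ℤ) = i := by omega
    rw [e] at this
    exact this.trans A

/-- the base automaton -/
def base : ℕ → Bool → Option (ℕ × Bool)
  | 0, _ => some (0, true)
  | 1, false => some (1, true)
  | 1, true => some (0, false)
  | _, _ => none

theorem main_nat (m : ℕ) : ∃ (α : Type) (_ : Fintype α) (δ : ℕ → α → Option (ℕ × Bool))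
    (w : List α), Closed m δ ∧ w.length + 1 = 3 * 2 ^ m ∧
      (∀ i : ℕ, i < w.length → LeavesRightIn δ w (m + 1) i 0) ∧
      (∀ (u : List α) (i : ℕ), i < u.length → LeavesRightIn δ u (m + 1) i 0 →
        w.length ≤ u.length) := by
  induction m with
  | zero =>
    refine ⟨Bool, inferInstance, base, [false, true], ?_, rfl, ?_, ?_⟩
    · intro q a r d h
      unfold base at h
      split at h <;> simp at h <;> omega
    · have A : ReflTransGen (StepOn base [false, true]) (1, 1) (0, 2) := by
        refine ReflTransGen.head (b := (0, 0)) ⟨by simp, true, by simp, 0, false, rfl, by simp⟩ ?_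
        refine ReflTransGen.head (b := (0, 1)) ⟨by simp, false, by simp, 0, true, rfl, by simp⟩ ?_
        exact ReflTransGen.single ⟨by simp, true, by simp, 0, true, rfl, by simp⟩
      intro i hi
      have : i = 0 ∨ i = 1 := by simp at hi; omega
      rcases this with rfl | rfl
      · exact ReflTransGen.head (b := (1, 1)) ⟨by simp, false, by simp, 1, true, rfl, by simp⟩ A
      · exact A
    · intro u i hi h
      by_contra hlt
      simp at hlt
      have hl : u.length = 1 := by omega
      obtain ⟨a, rfl⟩ := List.length_eq_one_iff.1 hl
      obtain rfl : i = 0 := by simp at hi; omega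
      rcases h.cases_head with h | ⟨c2, ⟨_, b, hb, r, d, hd, rfl⟩, h⟩
      · simp at h
      · simp at hb
        subst hb
        cases a <;> simp [base] at hd <;> obtain ⟨rfl, rfl⟩ := hd
        · have := stuck h (by right; simp)
          simp at this
        · have := stuck h (by left; simp)
          simp at this
  | succ m ih =>
    obtain ⟨α, _, δ, w, hcl, hlen, h1, h2⟩ := ih
    have hpos : 0 < 2 ^ m := by positivity
    refine ⟨Option (α × Bool), inferInstance, ext m δ,
      w.map (fun a => some (a, true)) ++ none :: w.map (fun a => some (a, false)), ?_, ?_, ?_, ?_⟩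
    · intro q a r d h
      rcases a with _ | ⟨a, b⟩ <;> simp only [ext] at h <;> split_ifs at h
      · simp at h; omega
      · simp at h; omega
      · simp at h; omega
      · have := hcl _ _ _ _ h; omega
    · simp [pow_succ]; omega
    · exact fun i hi => upper m δ hcl w (by omega) h1 _ rfl i hi
    · intro u i hi h
      have := lower m w.length δ hcl h2 u i h
      simp; omega

/-- For each `n ≥ 2` there exist a finite alphabet `Σₙ`, a partial transition function
`δₙ : {1, …, n} × Σₙ ⇀ {1, …, n} × {−1,+1}` (the states `1, …, n` being modelled by
`Fin n`, with state `j` modelled as `j − 1`) and a string `wₙ ∈ Σₙ*` of length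
`3 · 2^(n−2) − 1` such that: (1) started at any position of `wₙ` in state `n`, the
computation determined by `δₙ` eventually leaves `wₙ` by a transition from its rightmost
symbol moving to the right in state `1`; and (2) every non-empty string `u ∈ Σₙ*` for
which there is a position such that the computation determined by `δₙ`, started at that
position in state `n`, eventually leaves `u` by a transition from its rightmost symbol
moving to the right in state `1`, satisfies `|u| ≥ |wₙ|`. -/
theorem exists_hard_open_automaton (n : ℕ) (hn : 2 ≤ n) :
    ∃ (α : Type) (_ : Fintype α) (δ : Fin n → α → Option (Fin n × Bool)) (w : List α),
      w.length = 3 * 2 ^ (n - 2) - 1 ∧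
      (∀ i : ℕ, i < w.length →
        LeavesRightIn δ w (⟨n - 1, by omega⟩ : Fin n) i (⟨0, by omega⟩ : Fin n)) ∧
      (∀ u : List α, u ≠ [] →
        (∃ i : ℕ, i < u.length ∧
          LeavesRightIn δ u (⟨n - 1, by omega⟩ : Fin n) i (⟨0, by omega⟩ : Fin n)) →
        w.length ≤ u.length) := by
  obtain ⟨m, rfl⟩ : ∃ m, n = m + 2 := ⟨n - 2, by omega⟩
  obtain ⟨α, hf, δ, w, hcl, hlen, h1, h2⟩ := main_nat m
  have key1 : ∀ q a r d, δ q a = some (r, d) →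
      (δ (Fin.ofNat (m + 2) q).val (id a)).map (fun p => (Fin.ofNat (m + 2) p.1, p.2)) =
        some (Fin.ofNat (m + 2) r, d) := by
    intro q a r d h
    have := hcl _ _ _ _ h
    have e : (Fin.ofNat (m + 2) q).val = q := by
      simp only [Fin.val_ofNat]; exact Nat.mod_eq_of_lt (by omega)
    rw [e, id, h]; rfl
  have key2 : ∀ (q : Fin (m + 2)) a (r : Fin (m + 2)) d,
      (δ q.val a).map (fun p => (Fin.ofNat (m + 2) p.1, p.2)) = some (r, d) →
      δ q.val (id a) = some (r.val, d) := by
    intro q a r d h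
    rw [Option.map_eq_some_iff] at h
    obtain ⟨⟨r', d'⟩, h, h'⟩ := h
    have := hcl _ _ _ _ h
    simp only [Prod.mk.injEq] at h'
    obtain ⟨rfl, rfl⟩ := h'
    have e : (Fin.ofNat (m + 2) r').val = r' := by
      simp only [Fin.val_ofNat]; exact Nat.mod_eq_of_lt (by omega)
    rw [e, id, h]
  refine ⟨α, hf, fun q a => (δ q.val a).map (fun p => (Fin.ofNat (m + 2) p.1, p.2)), w, ?_, ?_, ?_⟩
  · simp; omega
  · intro i hi
    have := lift_reach δ (fun (q : Fin (m + 2)) a =>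
      (δ q.val a).map (fun p => (Fin.ofNat (m + 2) p.1, p.2))) (Fin.ofNat (m + 2)) id key1 [] w []
      _ _ (h1 i hi)
    have e : Fin.ofNat (m + 2) (m + 1) = ⟨m + 2 - 1, by omega⟩ := by
      apply Fin.ext; simp only [Fin.val_ofNat]; exact Nat.mod_eq_of_lt (by omega)
    have e0 : Fin.ofNat (m + 2) 0 = ⟨0, by omega⟩ := by
      apply Fin.ext; simp
    simp only [e, e0, List.map_id, List.nil_append, List.append_nil, List.length_nil,
      Nat.cast_zero, add_zero] at this
    exact this
  · rintro u - ⟨i, hi, h⟩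
    refine h2 u i hi ?_
    have := lift_reach _ δ Fin.val id key2 [] u [] _ _ h
    simp only [List.map_id, List.nil_append, List.append_nil, List.length_nil,
      Nat.cast_zero, add_zero] at this
    exact this
end
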